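/- Let p : Fin n → EuclideanSpace ℝ (Fin d) be an injective family such that every p i is an extreme point of P := convexHull ℝ (Set.range p), and assume 0 ∈ interior P. Then there exists ε > 0 such that for every q : Fin n → EuclideanSpace ℝ (Fin d) satisfying: (1) ‖q i − p i‖ < ε for all i; (2) ‖q i − q j‖ ≤ ‖p i − p j‖ for every edge (i,j) of P; (3) ‖p i‖ ≤ ‖q i‖ for all i; there exists a linear isometry equivalence T : EuclideanSpace ℝ (Fin d) ≃ₗᵢ EuclideanSpace ℝ (Fin d) with T (p i) = q i for all i. -/

import Mathlib

/-- For `i ≠ j`, the pair `(i,j)` is an edge of the polytope `convexHull ℝ (Set.range p)`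
if the closed segment between `p i` and `p j` is an extreme subset of it. -/
def IsEdge {n d : ℕ} (p : Fin n → EuclideanSpace ℝ (Fin d)) (i j : Fin n) : Prop :=
  i ≠ j ∧ IsExtreme ℝ (convexHull ℝ (Set.range p)) (segment ℝ (p i) (p j))


namespace LV
noncomputable section

open scoped RealInnerProductSpace
set_option linter.all false
set_option linter.unusedSectionVars false

variable {E : Type*} [NormedAddCommGroup E] [InnerProductSpace ℝ E]
variable {ι : Type*} [Fintype ι] [DecidableEq ι] (p : ι → E)

def InQ (z : E) : Prop := ∀ i, ⟪p i, z⟫ ≤ 1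

def Wit (S : Finset ι) (z : E) : Prop := ∀ i, ⟪p i, z⟫ ≤ 1 ∧ (⟪p i, z⟫ = 1 ↔ i ∈ S)

def IsFace (S : Finset ι) : Prop := ∃ z, Wit p S z

open Classical in
def bb (S : Finset ι) : E := if h : IsFace p S then h.choose else 0

def Perp (S : Finset ι) (w : E) : Prop := ∀ i ∈ S, ⟪p i, w⟫ = 0

def KK (S : Finset ι) : Submodule ℝ E := Submodule.span ℝ (p '' (S : Set ι))

def rk (S : Finset ι) : ℕ := Module.finrank ℝ (KK p S)

def Bdd : Prop := ∀ w : E, w ≠ 0 → ∃ i, 0 < ⟪p i, w⟫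

def Cov (S U : Finset ι) : Prop := IsFace p S ∧ IsFace p U ∧ S ⊆ U ∧ rk p U = rk p S + 1

variable {p}

lemma bb_wit {S : Finset ι} (h : IsFace p S) : Wit p S (bb p S) := by
  unfold bb; rw [dif_pos h]; exact h.choose_spec

lemma bb_le {S : Finset ι} (h : IsFace p S) (i : ι) : ⟪p i, bb p S⟫ ≤ 1 := ((bb_wit h) i).1
lemma bb_eq {S : Finset ι} (h : IsFace p S) {i : ι} (hi : i ∈ S) : ⟪p i, bb p S⟫ = 1 :=
  ((bb_wit h) i).2.2 hi
lemma bb_lt {S : Finset ι} (h : IsFace p S) {i : ι} (hi : i ∉ S) : ⟪p i, bb p S⟫ < 1 :=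
  lt_of_le_of_ne (bb_le h i) (fun h' => hi (((bb_wit h) i).2.1 h'))

lemma Perp.sub {S : Finset ι} {v w : E} (hv : Perp p S v) (hw : Perp p S w) : Perp p S (v - w) := by
  intro i hi; rw [inner_sub_right, hv i hi, hw i hi, sub_zero]
lemma Perp.add {S : Finset ι} {v w : E} (hv : Perp p S v) (hw : Perp p S w) : Perp p S (v + w) := by
  intro i hi; rw [inner_add_right, hv i hi, hw i hi, add_zero]
lemma Perp.smul {S : Finset ι} {w : E} (c : ℝ) (hw : Perp p S w) : Perp p S (c • w) := by
  intro i hi; rw [inner_smul_right, hw i hi, mul_zero]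
lemma Perp.mono {S T : Finset ι} {w : E} (h : S ⊆ T) (hw : Perp p T w) : Perp p S w :=
  fun i hi => hw i (h hi)
lemma Perp.neg {S : Finset ι} {w : E} (hw : Perp p S w) : Perp p S (-w) := by
  intro i hi; rw [inner_neg_right, hw i hi, neg_zero]

lemma perp_bb {S T : Finset ι} (hS : IsFace p S) (hT : IsFace p T) (h : S ⊆ T) :
    Perp p S (bb p T - bb p S) := by
  intro i hi; rw [inner_sub_right, bb_eq hT (h hi), bb_eq hS hi, sub_self]

lemma Perp.inner_KK {S : Finset ι} {w : E} (hw : Perp p S w) {x : E} (hx : x ∈ KK p S) :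
    ⟪x, w⟫ = 0 := by
  unfold KK at hx
  induction hx using Submodule.span_induction with
  | mem x h => obtain ⟨i, hi, rfl⟩ := h; exact hw i hi
  | zero => simp
  | add x y _ _ hx hy => rw [inner_add_left, hx, hy, add_zero]
  | smul c x _ hx => rw [inner_smul_left, hx]; simp

lemma mem_KK {S : Finset ι} {i : ι} (hi : i ∈ S) : p i ∈ KK p S :=
  Submodule.subset_span ⟨i, hi, rfl⟩

lemma KK_mono {S T : Finset ι} (h : S ⊆ T) : KK p S ≤ KK p T :=
  Submodule.span_mono (Set.image_mono (by exact_mod_cast h))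

lemma perp_of_orth {S : Finset ι} {w : E} (hw : w ∈ (KK p S)ᗮ) : Perp p S w := by
  intro i hi; exact (Submodule.mem_orthogonal _ _).1 hw _ (mem_KK hi)

lemma flat {S T : Finset ι} (hS : IsFace p S) (hT : IsFace p T) (h : S ⊆ T) {j : ι} (hj : j ∈ T)
    (hk : p j ∈ KK p S) : j ∈ S := by
  have := (perp_bb hS hT h).inner_KK hk
  rw [inner_sub_right, bb_eq hT hj] at this
  by_contra hc
  have := bb_lt hS hc
  linarith

lemma face_empty : IsFace p ∅ := ⟨0, fun i => by simp⟩

def tight (p : ι → E) (z : E) : Finset ι := by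
  classical exact Finset.univ.filter (fun i => ⟪p i, z⟫ = 1)

lemma mem_tight {z : E} {i : ι} : i ∈ tight p z ↔ ⟪p i, z⟫ = 1 := by
  classical simp [tight]

lemma face_tight {z : E} (hz : InQ p z) : IsFace p (tight p z) :=
  ⟨z, fun i => ⟨hz i, mem_tight.symm⟩⟩

lemma eps_exists {α : Type*} (s : Finset α) (f g : α → ℝ) (h : ∀ i ∈ s, 0 < f i) :
    ∃ ε : ℝ, 0 < ε ∧ ∀ i ∈ s, ε * g i < f i := by
  classical
  induction s using Finset.induction_on with
  | empty => exact ⟨1, one_pos, by simp⟩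
  | insert a s ha ih =>
    obtain ⟨ε, h0, h1⟩ := ih (fun i hi => h i (Finset.mem_insert_of_mem hi))
    have hfa := h a (Finset.mem_insert_self _ _)
    have hpos : 0 < f a / (|g a| + 1) := by positivity
    refine ⟨min ε (f a / (|g a| + 1)), lt_min h0 hpos, ?_⟩
    intro i hi
    rcases Finset.mem_insert.1 hi with rfl | hi
    · have h1 : min ε (f i / (|g i| + 1)) * g i ≤ (f i / (|g i| + 1)) * |g i| :=
        (mul_le_mul_of_nonneg_left (le_abs_self _) (lt_min h0 hpos).le).trans
          (mul_le_mul_of_nonneg_right (min_le_right _ _) (abs_nonneg _))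
      refine h1.trans_lt ?_
      rw [div_mul_eq_mul_div, div_lt_iff₀ (by positivity)]
      nlinarith
    · rcases le_or_gt (g i) 0 with hg | hg
      · have := h i (Finset.mem_insert_of_mem hi)
        have : 0 < min ε (f a / (|g a| + 1)) := lt_min h0 hpos
        nlinarith
      · exact (mul_le_mul_of_nonneg_right (min_le_left _ _) hg.le).trans_lt (h1 i hi)


lemma L1 {W : Finset ι} (hW : IsFace p W) {w : E} (h : ∀ j ∈ W, ⟪p j, w⟫ ≤ 0) :
    ∃ T : Finset ι, IsFace p T ∧ T ⊆ W ∧ ∀ j ∈ W, (j ∈ T ↔ ⟪p j, w⟫ = 0) := by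
  classical
  obtain ⟨ε, h0, h1⟩ := eps_exists (Finset.univ \ W) (fun i => 1 - ⟪p i, bb p W⟫) (fun i => ⟪p i, w⟫)
    (by intro i hi; have := bb_lt hW (Finset.mem_sdiff.1 hi).2; linarith)
  refine ⟨W.filter (fun j => ⟪p j, w⟫ = 0), ⟨bb p W + ε • w, ?_⟩, Finset.filter_subset _ _, ?_⟩
  · intro i
    rw [inner_add_right, inner_smul_right, Finset.mem_filter]
    by_cases hi : i ∈ W
    · rw [bb_eq hW hi]
      have := h i hi
      refine ⟨by nlinarith, ?_⟩
      constructor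
      · intro h2; refine ⟨hi, ?_⟩
        have : ε * ⟪p i, w⟫ = 0 := by linarith
        rcases mul_eq_zero.1 this with h | h
        · exact absurd h h0.ne'
        · exact h
      · rintro ⟨_, h2⟩; rw [h2]; simp
    · have := h1 i (by simp [hi])
      refine ⟨by linarith, ?_⟩
      constructor
      · intro h2; linarith
      · rintro ⟨h2, _⟩; exact absurd h2 hi
  · intro j hj; simp [hj]

/-- exit point -/
lemma L2 (hb : Bdd p) {S : Finset ι} (hS : IsFace p S) {w : E} (hw : Perp p S w) (h0 : w ≠ 0) :
    ∃ t : ℝ, 0 < t ∧ InQ p (bb p S + t • w) ∧ S ⊂ tight p (bb p S + t • w) ∧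
      ∃ j ∈ tight p (bb p S + t • w), 0 < ⟪p j, w⟫ := by
  classical
  have hne : (Finset.univ.filter (fun i => 0 < ⟪p i, w⟫)).Nonempty := by
    obtain ⟨i, hi⟩ := hb w h0; exact ⟨i, by simpa using hi⟩
  obtain ⟨j, hj, hmin⟩ := Finset.exists_min_image _ (fun i => (1 - ⟪p i, bb p S⟫) / ⟪p i, w⟫) hne
  simp only [Finset.mem_filter, Finset.mem_univ, true_and] at hj hmin
  have hjS : j ∉ S := fun h => by rw [hw j h] at hj; exact lt_irrefl _ hj
  have hjl := bb_lt hS hjS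
  have htj : ((1 - ⟪p j, bb p S⟫) / ⟪p j, w⟫) * ⟪p j, w⟫ = 1 - ⟪p j, bb p S⟫ := by field_simp
  have hjt : j ∈ tight p (bb p S + ((1 - ⟪p j, bb p S⟫) / ⟪p j, w⟫) • w) := by
    rw [mem_tight, inner_add_right, inner_smul_right, htj]; ring
  have htpos : 0 < (1 - ⟪p j, bb p S⟫) / ⟪p j, w⟫ := div_pos (by linarith) hj
  refine ⟨(1 - ⟪p j, bb p S⟫) / ⟪p j, w⟫, htpos, ?_, ?_, j, hjt, hj⟩
  · intro i
    rw [inner_add_right, inner_smul_right]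
    rcases le_or_gt ⟪p i, w⟫ 0 with hi | hi
    · have := bb_le hS i; nlinarith
    · have := (le_div_iff₀ hi).1 (hmin i hi); linarith
  · refine ⟨fun i hi => ?_, fun h => hjS (h hjt)⟩
    rw [mem_tight, inner_add_right, inner_smul_right, hw i hi, bb_eq hS hi]; simp

lemma shave {S T : Finset ι} (hS : IsFace p S) (hT : IsFace p T) (h : S ⊂ T) {k : E}
    (hk : Perp p S k) : ∃ (s : ℝ) (T' : Finset ι), IsFace p T' ∧ S ⊂ T' ∧ T' ⊆ T ∧
      (∀ j ∈ T, ⟪p j, k⟫ ≤ s * ⟪p j, bb p T - bb p S⟫) ∧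
      (∀ j ∈ T, (j ∈ T' ↔ ⟪p j, k⟫ = s * ⟪p j, bb p T - bb p S⟫)) := by
  classical
  have hne : (T \ S).Nonempty := Finset.sdiff_nonempty.2 h.2
  obtain ⟨j, hj, hmax⟩ := Finset.exists_max_image _
    (fun j => ⟪p j, k⟫ / ⟪p j, bb p T - bb p S⟫) hne
  have hpos : ∀ i ∈ T \ S, 0 < ⟪p i, bb p T - bb p S⟫ := by
    intro i hi
    rw [Finset.mem_sdiff] at hi
    rw [inner_sub_right, bb_eq hT hi.1]
    linarith [bb_lt hS hi.2]
  set s := ⟪p j, k⟫ / ⟪p j, bb p T - bb p S⟫ with hs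
  have hle : ∀ i ∈ T, ⟪p i, k⟫ ≤ s * ⟪p i, bb p T - bb p S⟫ := by
    intro i hi
    by_cases hiS : i ∈ S
    · rw [hk i hiS, perp_bb hS hT h.1 i hiS]; simp
    · have hi' : i ∈ T \ S := Finset.mem_sdiff.2 ⟨hi, hiS⟩
      exact (div_le_iff₀ (hpos i hi')).1 (hmax i hi')
  obtain ⟨T', hT', hTT, hiff⟩ := L1 hT (w := k - s • (bb p T - bb p S)) (by
    intro i hi; rw [inner_sub_right, inner_smul_right]; linarith [hle i hi])
  have hiff' : ∀ i ∈ T, (i ∈ T' ↔ ⟪p i, k⟫ = s * ⟪p i, bb p T - bb p S⟫) := by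
    intro i hi; rw [hiff i hi, inner_sub_right, inner_smul_right, sub_eq_zero]
  have hjT := (Finset.mem_sdiff.1 hj)
  have hj' : j ∈ T' := by
    rw [hiff' j hjT.1, hs]; have := (hpos j hj).ne'; field_simp
  refine ⟨s, T', hT', ⟨fun i hi => ?_, fun h => hjT.2 (h hj')⟩, hTT, hle, hiff'⟩
  rw [hiff' i (h.1 hi), hk i hi, perp_bb hS hT h.1 i hi]; simp

variable [FiniteDimensional ℝ E]

lemma rk_mono {S T : Finset ι} (h : S ⊆ T) : rk p S ≤ rk p T :=
  Submodule.finrank_mono (KK_mono h)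

lemma rk_lt {S T : Finset ι} (hS : IsFace p S) (hT : IsFace p T) (h : S ⊂ T) :
    rk p S < rk p T := by
  apply Submodule.finrank_lt_finrank_of_lt
  refine lt_of_le_of_ne (KK_mono h.1) (fun he => ?_)
  apply h.2
  intro j hj
  apply flat hS hT h.1 hj
  rw [he]; exact mem_KK hj

lemma eq_of_rk {S T : Finset ι} (hS : IsFace p S) (hT : IsFace p T) (h : S ⊆ T)
    (hr : rk p T ≤ rk p S) : S = T := by
  by_contra hne
  have := rk_lt hS hT (h.ssubset_of_ne hne); omega

lemma exists_orth {A B : Submodule ℝ E} (h : Module.finrank ℝ A < Module.finrank ℝ B) :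
    ∃ k ∈ B, k ≠ 0 ∧ k ∈ Aᗮ := by
  have h1 := Submodule.finrank_add_finrank_orthogonal A
  have h2 := Submodule.finrank_sup_add_finrank_inf_eq B Aᗮ
  have h3 := Submodule.finrank_le (B ⊔ Aᗮ)
  have : B ⊓ Aᗮ ≠ ⊥ := by
    intro h4; rw [h4, finrank_bot] at h2; omega
  obtain ⟨k, hk, h0⟩ := Submodule.exists_mem_ne_zero_of_ne_bot this
  exact ⟨k, hk.1, h0, hk.2⟩

lemma exists_cov {S T : Finset ι} (hS : IsFace p S) (hT : IsFace p T) (h : S ⊂ T) :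
    ∃ U, Cov p S U ∧ U ⊆ T := by
  induction hn : T.card using Nat.strong_induction_on generalizing T with
  | _ n ih =>
  subst hn
  have hlt := rk_lt hS hT h
  by_cases hr : rk p T = rk p S + 1
  · exact ⟨T, ⟨hS, hT, h.1, hr⟩, subset_rfl⟩
  have hfr : Module.finrank ℝ ↥(KK p S ⊔ Submodule.span ℝ {bb p T - bb p S}) <
      Module.finrank ℝ (KK p T) := by
    have h1 := Submodule.finrank_add_le_finrank_add_finrank (KK p S)
      (Submodule.span ℝ {bb p T - bb p S})
    have h2 := finrank_span_le_card (R := ℝ) ({bb p T - bb p S} : Set E)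
    simp at h2
    unfold rk at *
    omega
  obtain ⟨k, hkT, hk0, hko⟩ := exists_orth hfr
  have hkS : Perp p S k := perp_of_orth (Submodule.orthogonal_le le_sup_left hko)
  have hke : ⟪k, bb p T - bb p S⟫ = 0 := by
    rw [real_inner_comm]
    exact (Submodule.mem_orthogonal _ _).1 hko _
      (Submodule.mem_sup_right (Submodule.mem_span_singleton_self _))
  obtain ⟨s, T', hT', hST, hTT, hle, hiff⟩ := shave hS hT h hkS
  have hne : T' ≠ T := by
    intro he
    have hP : Perp p T (k - s • (bb p T - bb p S)) := by
      intro i hi; rw [inner_sub_right, inner_smul_right, sub_eq_zero]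
      exact (hiff i hi).1 (he ▸ hi)
    have := hP.inner_KK hkT
    rw [inner_sub_right, inner_smul_right, hke] at this
    apply hk0; rw [← inner_self_eq_zero (𝕜 := ℝ)]; linarith
  obtain ⟨U, hU, hUT⟩ := ih _ (Finset.card_lt_card (hTT.ssubset_of_ne hne)) hT' hST rfl
  exact ⟨U, hU, hUT.trans hTT⟩

lemma Cov.ssub {S U : Finset ι} (h : Cov p S U) : S ⊂ U :=
  h.2.2.1.ssubset_of_ne (fun he => by have := h.2.2.2; rw [he] at this; omega)

lemma exists_nn {S U : Finset ι} (h : Cov p S U) : ∃ n : E, ‖n‖ = 1 ∧ Perp p S n ∧ n ∈ KK p U ∧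
    (∀ w, Perp p S w → ∀ i ∈ U, ⟪p i, w⟫ = ⟪p i, n⟫ * ⟪n, w⟫) ∧ 0 < ⟪n, bb p U - bb p S⟫ := by
  obtain ⟨hS, hU, hSU, hr⟩ := id h
  obtain ⟨k, hkU, hk0, hko⟩ := exists_orth (A := KK p S) (B := KK p U) (by unfold rk at hr; omega)
  have key : ∀ c : ℝ, ‖c • k‖ = 1 → 0 ≤ ⟪c • k, bb p U - bb p S⟫ → ∃ n : E, ‖n‖ = 1 ∧ Perp p S n ∧ n ∈ KK p U ∧
    (∀ w, Perp p S w → ∀ i ∈ U, ⟪p i, w⟫ = ⟪p i, n⟫ * ⟪n, w⟫) ∧ 0 < ⟪n, bb p U - bb p S⟫ := by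
    intro c hc hnn
    have hPn : Perp p S (c • k) := (perp_of_orth hko).smul c
    have hnU : c • k ∈ KK p U := Submodule.smul_mem _ _ hkU
    have hspan : KK p S ⊔ Submodule.span ℝ {c • k} = KK p U := by
      apply Submodule.eq_of_le_of_finrank_le
      · exact sup_le (KK_mono hSU) ((Submodule.span_singleton_le_iff_mem _ _).2 hnU)
      · have : KK p S < KK p S ⊔ Submodule.span ℝ {c • k} := by
          refine lt_of_le_of_ne le_sup_left (fun he => ?_)
          have hm : c • k ∈ KK p S := by
            rw [he]; exact Submodule.mem_sup_right (Submodule.mem_span_singleton_self _)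
          have := hPn.inner_KK hm
          rw [inner_self_eq_zero] at this; rw [this] at hc; simp at hc
        have := Submodule.finrank_lt_finrank_of_lt this
        unfold rk at hr; omega
    have hN3 : ∀ w, Perp p S w → ∀ i ∈ U, ⟪p i, w⟫ = ⟪p i, c • k⟫ * ⟪c • k, w⟫ := by
      intro w hw i hi
      have hm : p i ∈ KK p S ⊔ Submodule.span ℝ {c • k} := hspan ▸ mem_KK hi
      obtain ⟨a, ha, b, hb, hab⟩ := Submodule.mem_sup.1 hm
      obtain ⟨t, rfl⟩ := Submodule.mem_span_singleton.1 hb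
      rw [← hab, inner_add_left, inner_add_left, hw.inner_KK ha, hPn.inner_KK ha, inner_smul_left (c • k) w,
        inner_smul_left (c • k) (c • k), real_inner_self_eq_norm_sq, hc]; simp
    refine ⟨c • k, hc, hPn, hnU, hN3, lt_of_le_of_ne hnn (fun h0 => ?_)⟩
    obtain ⟨j, hj, hjS⟩ := Finset.exists_of_ssubset h.ssub
    have := hN3 _ (perp_bb hS hU hSU) j hj
    rw [← h0, inner_sub_right, bb_eq hU hj] at this
    linarith [bb_lt hS hjS]
  have hkn : ‖k‖ ≠ 0 := norm_ne_zero_iff.2 hk0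
  rcases le_or_gt 0 ⟪k, bb p U - bb p S⟫ with h1 | h1
  · apply key (‖k‖⁻¹)
    · rw [norm_smul]; simp [hkn]
    · rw [inner_smul_left]; simp; positivity
  · apply key (-‖k‖⁻¹)
    · rw [norm_smul]; simp [hkn]
    · rw [inner_smul_left]; simp
      have : 0 ≤ ‖k‖⁻¹ := by positivity
      nlinarith

open Classical in
/-- The unit normal -/
def nn (p : ι → E) (S U : Finset ι) : E := if h : Cov p S U then (exists_nn h).choose else 0

section
variable {S U : Finset ι} (h : Cov p S U)
include h

lemma nn_spec : ‖nn p S U‖ = 1 ∧ Perp p S (nn p S U) ∧ nn p S U ∈ KK p U ∧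
    (∀ w, Perp p S w → ∀ i ∈ U, ⟪p i, w⟫ = ⟪p i, nn p S U⟫ * ⟪nn p S U, w⟫) ∧
    0 < ⟪nn p S U, bb p U - bb p S⟫ := by
  unfold nn; rw [dif_pos h]; exact (exists_nn h).choose_spec

lemma nn_norm : ‖nn p S U‖ = 1 := (nn_spec h).1
lemma nn_self : ⟪nn p S U, nn p S U⟫ = 1 := by
  rw [real_inner_self_eq_norm_sq, nn_norm h]; norm_num
lemma nn_perp : Perp p S (nn p S U) := (nn_spec h).2.1
lemma nn_zero {w : E} (hw : Perp p U w) : ⟪nn p S U, w⟫ = 0 := hw.inner_KK (nn_spec h).2.2.1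
lemma nn_eq {w : E} (hw : Perp p S w) {i : ι} (hi : i ∈ U) :
    ⟪p i, w⟫ = ⟪p i, nn p S U⟫ * ⟪nn p S U, w⟫ := (nn_spec h).2.2.2.1 w hw i hi
lemma nn_H_pos : 0 < ⟪nn p S U, bb p U - bb p S⟫ := (nn_spec h).2.2.2.2
lemma nn_pos {i : ι} (hi : i ∈ U) (hiS : i ∉ S) : 0 < ⟪p i, nn p S U⟫ := by
  have := nn_eq h (perp_bb h.1 h.2.1 h.2.2.1) hi
  rw [inner_sub_right, bb_eq h.2.1 hi] at this
  have h2 := bb_lt h.1 hiS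
  have h3 := nn_H_pos h
  by_contra hc
  push Not at hc
  nlinarith
lemma perp_up {w : E} (hw : Perp p S w) (h0 : ⟪nn p S U, w⟫ = 0) : Perp p U w := by
  intro i hi; rw [nn_eq h hw hi, h0, mul_zero]
lemma perp_proj {w : E} (hw : Perp p S w) : Perp p U (w - ⟪nn p S U, w⟫ • nn p S U) := by
  apply perp_up h (hw.sub ((nn_perp h).smul _))
  rw [inner_sub_right, inner_smul_right, nn_self h]; ring
end

end
end LV


namespace LV
noncomputable section
open scoped RealInnerProductSpace
set_option linter.all false
set_option linter.unusedSectionVars false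

variable {E : Type*} [NormedAddCommGroup E] [InnerProductSpace ℝ E] [FiniteDimensional ℝ E]
variable {ι : Type*} [Fintype ι] [DecidableEq ι] {p : ι → E}

/-- support difference -/
def HH (p : ι → E) (S U : Finset ι) : ℝ := ⟪nn p S U, bb p U - bb p S⟫

lemma HH_pos {S U : Finset ι} (h : Cov p S U) : 0 < HH p S U := nn_H_pos h

lemma nn_tight {S U : Finset ι} (h : Cov p S U) {z : E} (hz : ∀ i ∈ U, ⟪p i, z⟫ = 1) :
    ⟪nn p S U, z⟫ = ⟪nn p S U, bb p U⟫ := by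
  have : Perp p U (z - bb p U) := by
    intro i hi; rw [inner_sub_right, hz i hi, bb_eq h.2.1 hi, sub_self]
  have := nn_zero h this
  rw [inner_sub_right] at this; linarith

lemma HH_eq {S U T : Finset ι} (h : Cov p S U) (hT : IsFace p T) (hUT : U ⊆ T) :
    ⟪nn p S U, bb p T - bb p S⟫ = HH p S U := by
  unfold HH
  rw [inner_sub_right, inner_sub_right, nn_tight h (fun i hi => bb_eq hT (hUT hi))]

lemma nn_le {S U : Finset ι} (h : Cov p S U) {z : E} (hz : InQ p z) (hzS : ∀ i ∈ S, ⟪p i, z⟫ = 1) :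
    ⟪nn p S U, z⟫ ≤ ⟪nn p S U, bb p U⟫ := by
  obtain ⟨j, hj, hjS⟩ := Finset.exists_of_ssubset h.ssub
  have hP : Perp p S (bb p U - z) := by
    intro i hi; rw [inner_sub_right, hzS i hi, bb_eq h.2.1 (h.2.2.1 hi), sub_self]
  have := nn_eq h hP hj
  rw [inner_sub_right, inner_sub_right, bb_eq h.2.1 hj] at this
  have h1 := nn_pos h hj hjS
  have h2 := hz j
  by_contra hc
  push Not at hc
  nlinarith

lemma nn_lt {S U : Finset ι} (h : Cov p S U) {T : Finset ι} (hT : IsFace p T) (hST : S ⊆ T)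
    (hUT : ¬ U ⊆ T) :
    ⟪nn p S U, bb p T⟫ < ⟪nn p S U, bb p U⟫ := by
  refine lt_of_le_of_ne (nn_le h (fun i => bb_le hT i) (fun i hi => bb_eq hT (hST hi))) ?_
  intro he
  apply hUT
  intro j hj
  have hP : Perp p S (bb p U - bb p T) := by
    intro i hi; rw [inner_sub_right, bb_eq hT (hST hi), bb_eq h.2.1 (h.2.2.1 hi), sub_self]
  have := nn_eq h hP hj
  rw [inner_sub_right, inner_sub_right, bb_eq h.2.1 hj, he, sub_self, mul_zero] at this
  by_contra hjT
  linarith [bb_lt hT hjT]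

lemma cov_not_sub {S U V : Finset ι} (h : Cov p S U) (h' : Cov p S V) (hne : U ≠ V) : ¬ U ⊆ V := by
  intro hs
  apply hne
  apply eq_of_rk h.2.1 h'.2.1 hs
  rw [h.2.2.2, h'.2.2.2]

/-- along a nonzero direction there is a cover with scaled hit -/
lemma exit_cov (hb : Bdd p) {S : Finset ι} (hS : IsFace p S) {w : E} (hw : Perp p S w) (h0 : w ≠ 0) :
    ∃ t : ℝ, 0 < t ∧ InQ p (bb p S + t • w) ∧ ∃ U, Cov p S U ∧ t * ⟪nn p S U, w⟫ = HH p S U := by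
  obtain ⟨t, ht, hQ, hST, -⟩ := L2 hb hS hw h0
  obtain ⟨U, hU, hUT⟩ := exists_cov hS (face_tight hQ) hST
  refine ⟨t, ht, hQ, U, hU, ?_⟩
  have := nn_tight hU (z := bb p S + t • w) (fun i hi => mem_tight.1 (hUT hi))
  rw [inner_add_right, inner_smul_right] at this
  unfold HH; rw [inner_sub_right]; linarith

lemma exists_cov_pos (hb : Bdd p) {S : Finset ι} (hS : IsFace p S) {w : E} (hw : Perp p S w)
    (h0 : w ≠ 0) : ∃ U, Cov p S U ∧ 0 < ⟪nn p S U, w⟫ := by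
  obtain ⟨t, ht, -, U, hU, he⟩ := exit_cov hb hS hw h0
  refine ⟨U, hU, ?_⟩
  have := HH_pos hU
  rw [← he] at this
  exact (mul_pos_iff_of_pos_left ht).1 this

lemma eq_zero_of_nn (hb : Bdd p) {S : Finset ι} (hS : IsFace p S) {w : E} (hw : Perp p S w)
    (h : ∀ U, Cov p S U → ⟪nn p S U, w⟫ ≤ 0) : w = 0 := by
  by_contra h0
  obtain ⟨U, hU, hp⟩ := exists_cov_pos hb hS hw h0
  linarith [h U hU]

lemma exists_perp {S : Finset ι} (hr : rk p S < Module.finrank ℝ E) : ∃ w : E, w ≠ 0 ∧ Perp p S w := by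
  obtain ⟨k, -, h0, hk⟩ := exists_orth (A := KK p S) (B := (⊤ : Submodule ℝ E)) (by
    rw [finrank_top]; exact hr)
  exact ⟨k, h0, perp_of_orth hk⟩

lemma exists_cov' (hb : Bdd p) {S : Finset ι} (hS : IsFace p S) (hr : rk p S < Module.finrank ℝ E) :
    ∃ U, Cov p S U := by
  obtain ⟨w, h0, hw⟩ := exists_perp hr
  obtain ⟨U, hU, -⟩ := exists_cov_pos hb hS hw h0
  exact ⟨U, hU⟩

lemma inQ_of_nn (hb : Bdd p) {S : Finset ι} (hS : IsFace p S) {w : E} (hw : Perp p S w)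
    (h : ∀ U, Cov p S U → ⟪nn p S U, w⟫ ≤ HH p S U) : InQ p (bb p S + w) := by
  by_cases h0 : w = 0
  · rw [h0, add_zero]; exact fun i => bb_le hS i
  obtain ⟨t, ht, hQ, U, hU, he⟩ := exit_cov hb hS hw h0
  have h1 := h U hU
  have h2 := HH_pos hU
  have ht1 : 1 ≤ t := by
    by_contra hc
    push Not at hc
    have : 0 < ⟪nn p S U, w⟫ := by rw [← he] at h2; exact (mul_pos_iff_of_pos_left ht).1 h2
    nlinarith
  intro i
  have h3 := hQ i
  have h4 := bb_le hS i
  rw [inner_add_right] at *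
  rw [inner_smul_right] at h3
  rcases le_or_gt ⟪p i, w⟫ 0 with h5 | h5
  · linarith
  · nlinarith

lemma le_zero_of_nn {S T : Finset ι} (hS : IsFace p S) (hT : IsFace p T) (hST : S ⊆ T) {w : E}
    (hw : Perp p S w) (h : ∀ U, Cov p S U → U ⊆ T → ⟪nn p S U, w⟫ ≤ 0) :
    ∀ j ∈ T, ⟪p j, w⟫ ≤ 0 := by
  by_cases he : S = T
  · intro j hj; rw [hw j (he ▸ hj)]
  have hss := hST.ssubset_of_ne he
  obtain ⟨s, T', hT', hST', hTT, hle, hiff⟩ := shave hS hT hss hw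
  obtain ⟨U, hU, hUT⟩ := exists_cov hS hT' hST'
  obtain ⟨i, hi, hiS⟩ := Finset.exists_of_ssubset hU.ssub
  have hepos : ∀ j ∈ T, 0 ≤ ⟪p j, bb p T - bb p S⟫ := by
    intro j hj; rw [inner_sub_right, bb_eq hT hj]; linarith [bb_le hS j]
  have h1 := (hiff i (hTT (hUT hi))).1 (hUT hi)
  rw [nn_eq hU hw hi] at h1
  have h2 := h U hU (hUT.trans hTT)
  have h3 := nn_pos hU hi hiS
  have h4 : 0 < ⟪p i, bb p T - bb p S⟫ := by
    rw [inner_sub_right, bb_eq hT (hTT (hUT hi))]; linarith [bb_lt hS hiS]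
  have hs : s ≤ 0 := by
    by_contra hc
    push Not at hc
    nlinarith [mul_pos hc h4]
  intro j hj
  exact (hle j hj).trans (mul_nonpos_of_nonpos_of_nonneg hs (hepos j hj))

/-! ### the diamond property -/

def Mid (p : ι → E) (S W U : Finset ι) : Prop := Cov p S U ∧ Cov p U W

lemma Mid.of_sub {S U W : Finset ι} (h : Cov p S U) (hW : IsFace p W) (hr : rk p W = rk p S + 2)
    (hUW : U ⊆ W) : Mid p S W U :=
  ⟨h, h.2.1, hW, hUW, by rw [hr, h.2.2.2]⟩

lemma Mid.rk {S U W : Finset ι} (h : Mid p S W U) : rk p W = rk p S + 2 := by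
  rw [h.2.2.2.2, h.1.2.2.2]
lemma Mid.perp {S U W : Finset ι} (h : Mid p S W U) : Perp p S (nn p U W) :=
  (nn_perp h.2).mono h.1.2.2.1
lemma Mid.orth {S U W : Finset ι} (h : Mid p S W U) : ⟪nn p S U, nn p U W⟫ = 0 :=
  nn_zero h.1 (nn_perp h.2)
lemma Mid.orth' {S U W : Finset ι} (h : Mid p S W U) : ⟪nn p U W, nn p S U⟫ = 0 := by
  rw [real_inner_comm, h.orth]

lemma exists_other {S U W : Finset ι} (h : Mid p S W U) : ∃ V, Mid p S W V ∧ V ≠ U := by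
  have hS := h.1.1
  have hW := h.2.2.1
  have hSW : S ⊂ W := h.1.ssub.trans h.2.ssub
  obtain ⟨s, T', hT', hST', hTT, hle, hiff⟩ := shave hS hW hSW h.perp
  obtain ⟨V, hV, hVT⟩ := exists_cov hS hT' hST'
  refine ⟨V, Mid.of_sub hV hW h.rk (hVT.trans hTT), ?_⟩
  rintro rfl
  obtain ⟨i, hi, hiS⟩ := Finset.exists_of_ssubset hV.ssub
  have h1 := (hiff i (hTT (hVT hi))).1 (hVT hi)
  rw [nn_perp h.2 i hi] at h1
  have h4 : 0 < ⟪p i, bb p W - bb p S⟫ := by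
    rw [inner_sub_right, bb_eq hW (hTT (hVT hi))]; linarith [bb_lt hS hiS]
  have hs : s = 0 := by
    rcases mul_eq_zero.1 h1.symm with h | h
    · exact h
    · exact absurd h h4.ne'
  obtain ⟨j, hj, hjV⟩ := Finset.exists_of_ssubset h.2.ssub
  have := hle j hj
  rw [hs, zero_mul] at this
  linarith [nn_pos h.2 hj hjV]

lemma frame_eq {S U W : Finset ι} (h : Mid p S W U) {x : E} (hx : Perp p S x) (hxW : x ∈ KK p W) :
    x = ⟪nn p S U, x⟫ • nn p S U + ⟪nn p U W, x⟫ • nn p U W := by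
  have h1 := perp_proj h.1 hx
  have h2 := perp_proj h.2 h1
  have h3 : ⟪nn p U W, x - ⟪nn p S U, x⟫ • nn p S U⟫ = ⟪nn p U W, x⟫ := by
    rw [inner_sub_right, inner_smul_right, h.orth']; ring
  rw [h3] at h2
  have hm : x - ⟪nn p S U, x⟫ • nn p S U - ⟪nn p U W, x⟫ • nn p U W ∈ KK p W := by
    refine Submodule.sub_mem _ (Submodule.sub_mem _ hxW (Submodule.smul_mem _ _ ?_))
      (Submodule.smul_mem _ _ (nn_spec h.2).2.2.1)
    exact KK_mono h.2.2.2.1 (nn_spec h.1).2.2.1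
  have := h2.inner_KK hm
  rw [inner_self_eq_zero, sub_sub, sub_eq_zero] at this
  exact this

lemma nn_mem {S U : Finset ι} (h : Cov p S U) : nn p S U ∈ KK p U := (nn_spec h).2.2.1

def cc (p : ι → E) (S U V : Finset ι) : ℝ := ⟪nn p S U, nn p S V⟫

lemma cc_comm (S U V : Finset ι) : cc p S U V = cc p S V U := real_inner_comm _ _

def ss (p : ι → E) (S W U V : Finset ι) : ℝ := ⟪nn p U W, nn p S V⟫

section pair
variable {S U V W : Finset ι} (hU : Mid p S W U) (hV : Mid p S W V) (hne : U ≠ V)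
include hU hV hne

lemma ss_pos : 0 < ss p S W U V := by
  have := cov_not_sub hV.1 hU.1 hne.symm
  obtain ⟨i, hi, hiU⟩ := Finset.not_subset.1 this
  have h1 := nn_eq hV.1 hU.perp hi
  have h2 := nn_pos hU.2 (hV.2.2.2.1 hi) hiU
  have h3 := nn_pos hV.1 hi (fun h => hiU (hU.1.2.2.1 h))
  unfold ss
  rw [real_inner_comm]
  rw [h1] at h2
  exact (mul_pos_iff_of_pos_left h3).1 h2

lemma pair_n : nn p S V = cc p S U V • nn p S U + ss p S W U V • nn p U W :=
  frame_eq hU (nn_perp hV.1) (KK_mono hV.2.2.2.1 (nn_mem hV.1))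

lemma cs_sq : cc p S U V ^ 2 + ss p S W U V ^ 2 = 1 := by
  have h := nn_self hV.1
  rw [pair_n hU hV hne] at h
  simp only [inner_add_left, inner_add_right, inner_smul_left, inner_smul_right, nn_self hU.1,
    nn_self hU.2, hU.orth, hU.orth'] at h
  simp at h
  linarith

lemma ss_comm : ss p S W U V = ss p S W V U := by
  have h1 := cs_sq hU hV hne
  have h2 := cs_sq hV hU hne.symm
  have h3 := ss_pos hU hV hne
  have h4 := ss_pos hV hU hne.symm
  rw [cc_comm] at h1
  have : ss p S W U V ^ 2 = ss p S W V U ^ 2 := by linarith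
  exact (pow_left_inj₀ h3.le h4.le two_ne_zero).1 this

lemma pair_w : nn p V W = ss p S W U V • nn p S U - cc p S U V • nn p U W := by
  have h1 := pair_n hV hU hne.symm
  rw [pair_n hU hV hne, cc_comm, ← ss_comm hU hV hne] at h1
  have h3 := ss_pos hU hV hne
  have h2 := cs_sq hU hV hne
  have h4 : ss p S W U V • nn p V W =
      ss p S W U V • (ss p S W U V • nn p S U - cc p S U V • nn p U W) := by
    have : ss p S W U V • nn p V W = nn p S U -
      cc p S U V • (cc p S U V • nn p S U + ss p S W U V • nn p U W) := by
      rw [eq_sub_iff_add_eq, add_comm]; exact h1.symm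
    rw [this]
    have h5 : ss p S W U V ^ 2 = 1 - cc p S U V ^ 2 := by linarith
    rw [smul_sub, smul_smul (ss p S W U V) (ss p S W U V), ← pow_two, h5]
    module
  exact smul_right_injective E h3.ne' h4

lemma pair_rot (z w : E) :
    ⟪nn p U W, z⟫ * ⟪nn p S U, w⟫ + ⟪nn p V W, z⟫ * ⟪nn p S V, w⟫ =
    ⟪nn p S U, z⟫ * ⟪nn p U W, w⟫ + ⟪nn p S V, z⟫ * ⟪nn p V W, w⟫ := by
  rw [pair_w hU hV hne, pair_n hU hV hne]
  simp only [inner_add_left, inner_sub_left, inner_smul_left, RCLike.conj_to_real]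
  have h2 := cs_sq hU hV hne
  linear_combination (⟪nn p S U, z⟫ * ⟪nn p U W, w⟫ - ⟪nn p U W, z⟫ * ⟪nn p S U, w⟫) * h2

lemma no_third {X : Finset ι} (hX : Mid p S W X) (h1 : X ≠ U) (h2 : X ≠ V) : False := by
  have e1 := pair_w hU hV hne
  have e2 := pair_w hU hX h1.symm
  have e3 := pair_n hU hV hne
  have e4 := pair_n hU hX h1.symm
  have p1 := ss_pos hV hX h2.symm
  have p2 := ss_pos hX hV h2
  unfold ss at p1 p2
  rw [e1, e4] at p1
  rw [e2, e3] at p2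
  simp only [inner_add_left, inner_sub_left, inner_add_right, inner_sub_right, inner_smul_left,
    inner_smul_right, RCLike.conj_to_real, nn_self hU.1, nn_self hU.2, hU.orth, hU.orth'] at p1 p2
  linarith
end pair

open Classical in
def opp (p : ι → E) (S W U : Finset ι) : Finset ι :=
  if h : Mid p S W U then (exists_other h).choose else U

lemma opp_mid {S U W : Finset ι} (h : Mid p S W U) : Mid p S W (opp p S W U) := by
  unfold opp; rw [dif_pos h]; exact (exists_other h).choose_spec.1
lemma opp_ne {S U W : Finset ι} (h : Mid p S W U) : U ≠ opp p S W U := by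
  unfold opp; rw [dif_pos h]; exact (exists_other h).choose_spec.2.symm
lemma eq_opp {S U W V : Finset ι} (h : Mid p S W U) (hV : Mid p S W V) (hne : V ≠ U) :
    V = opp p S W U := by
  by_contra hc
  exact no_third h (opp_mid h) (opp_ne h) hV hne hc
lemma opp_opp {S U W : Finset ι} (h : Mid p S W U) : opp p S W (opp p S W U) = U :=
  (eq_opp (opp_mid h) h (opp_ne h)).symm

/-! ### connectivity -/

lemma conn (hb : Bdd p) {S : Finset ι} (hS : IsFace p S) (hr : rk p S + 2 ≤ Module.finrank ℝ E)
    (P : Finset ι → Prop) (hP : ∀ U W, Mid p S W U → P U → P (opp p S W U))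
    {U0 U1 : Finset ι} (h0 : Cov p S U0) (hP0 : P U0) (h1 : Cov p S U1) : P U1 := by
  classical
  by_contra hc
  obtain ⟨U, hU, hmax⟩ := Finset.exists_max_image
    (Finset.univ.filter (fun U => Cov p S U ∧ P U))
    (fun U => ⟪nn p S U, bb p U1 - bb p S⟫ / HH p S U) ⟨U0, by simp [h0, hP0]⟩
  simp only [Finset.mem_filter, Finset.mem_univ, true_and] at hU hmax
  obtain ⟨hU, hPU⟩ := hU
  have hHU := HH_pos hU
  have hneU : U ≠ U1 := fun h => hc (h ▸ hPU)
  set w := bb p U1 - bb p S with hw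
  set l := ⟪nn p S U, w⟫ / HH p S U with hl
  have hlH : ⟪nn p S U, w⟫ = l * HH p S U := by rw [hl]; field_simp
  have hl1 : l < 1 := by
    rw [hl, div_lt_one hHU, hw, HH, inner_sub_right, inner_sub_right]
    linarith [nn_lt hU h1.2.1 h1.2.2.1 (cov_not_sub hU h1 hneU)]
  have hwS : Perp p S w := perp_bb hS h1.2.1 h1.2.2.1
  set w' := w - l • (bb p U - bb p S) with hw'
  have hw'U : Perp p U w' := by
    apply perp_up hU (hwS.sub ((perp_bb hS hU.2.1 hU.2.2.1).smul _))
    rw [inner_sub_right, inner_smul_right, hlH]; unfold HH; ring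
  have key : ∀ W, Cov p U W → ⟪nn p U W, w'⟫ ≤ l * HH p U W := by
    intro W hW
    have hm : Mid p S W U := ⟨hU, hW⟩
    have hm' := opp_mid hm
    have h2 := hmax _ ⟨hm'.1, hP _ _ hm hPU⟩
    rw [div_le_iff₀ (HH_pos hm'.1), ← HH_eq hm'.1 hW.2.1 hm'.2.2.2.1, pair_n hm hm' (opp_ne hm)] at h2
    have hs := ss_pos hm hm' (opp_ne hm)
    simp only [inner_add_left, inner_smul_left, RCLike.conj_to_real] at h2
    rw [hlH, HH_eq hU hW.2.1 hW.2.2.1] at h2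
    have h3 : ss p S W U (opp p S W U) * ⟪nn p U W, w⟫ ≤
      ss p S W U (opp p S W U) * (l * ⟪nn p U W, bb p W - bb p S⟫) := by linarith
    have h4 := le_of_mul_le_mul_left h3 hs
    rw [hw', inner_sub_right, inner_smul_right]
    unfold HH
    simp only [inner_sub_right] at *
    linarith
  have hH1 := HH_pos h1
  have hw1 : ⟪nn p S U1, w⟫ = HH p S U1 := rfl
  rcases le_or_gt l 0 with hl0 | hl0
  · have hz : w' = 0 := eq_zero_of_nn hb hU.2.1 hw'U (fun W hW => (key W hW).trans
      (mul_nonpos_of_nonpos_of_nonneg hl0 (HH_pos hW).le))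
    obtain ⟨W, hW⟩ := exists_cov' hb hU.2.1 (by have := hU.2.2.2; omega)
    have h3 := key W hW
    rw [hz, inner_zero_right] at h3
    have hl' : l = 0 := le_antisymm hl0 (nonneg_of_mul_nonneg_left h3 (HH_pos hW))
    rw [hw', hl', zero_smul, sub_zero] at hz
    rw [hz, inner_zero_right] at hw1
    linarith
  · have hQ := inQ_of_nn hb hU.2.1 (w := l⁻¹ • w') (hw'U.smul _) (by
      intro W hW
      rw [inner_smul_right, inv_mul_le_iff₀ hl0]; exact key W hW)
    have he : bb p U + l⁻¹ • w' = bb p S + l⁻¹ • w := by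
      rw [hw', smul_sub, smul_smul, inv_mul_cancel₀ hl0.ne', one_smul]; abel
    rw [he] at hQ
    have h3 := nn_le h1 hQ (by
      intro i hi; rw [inner_add_right, inner_smul_right, hwS i hi, bb_eq hS hi]; simp)
    rw [inner_add_right, inner_smul_right, hw1] at h3
    have h4 : l⁻¹ * HH p S U1 ≤ HH p S U1 := by
      conv_rhs => unfold HH
      rw [inner_sub_right]; linarith
    have h5 : 1 < l⁻¹ := (one_lt_inv₀ hl0).2 hl1
    nlinarith

lemma conn_X {S X : Finset ι} (hS : IsFace p S) (hX : IsFace p X) (hSX : S ⊆ X)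
    (P : Finset ι → Prop)
    (hP : ∀ U W, Mid p S W U → W ⊆ X → P U → P (opp p S W U))
    {U0 U1 : Finset ι} (h0 : Cov p S U0) (h0X : U0 ⊆ X) (hP0 : ¬ P U0) (h1 : Cov p S U1)
    (h1X : U1 ⊆ X) : ¬ P U1 := by
  classical
  intro hP1
  set k := bb p U0 - bb p X with hk
  obtain ⟨U, hU, hmax⟩ := Finset.exists_max_image
    (Finset.univ.filter (fun U => (Cov p S U ∧ U ⊆ X) ∧ P U))
    (fun U => ⟪nn p S U, k⟫ / HH p S U) ⟨U1, by simp [h1, hP1, h1X]⟩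
  simp only [Finset.mem_filter, Finset.mem_univ, true_and] at hU hmax
  obtain ⟨⟨hU, hUX⟩, hPU⟩ := hU
  have hHU := HH_pos hU
  have hneU : U ≠ U0 := fun h => hP0 (h ▸ hPU)
  set l := ⟪nn p S U, k⟫ / HH p S U with hl
  have hlH : ⟪nn p S U, k⟫ = l * HH p S U := by rw [hl]; field_simp
  have hl0 : l < 0 := by
    apply div_neg_of_neg_of_pos _ hHU
    rw [hk, inner_sub_right, nn_tight hU (fun i hi => bb_eq hX (hUX hi))]
    linarith [nn_lt hU h0.2.1 h0.2.2.1 (cov_not_sub hU h0 hneU)]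
  have hkS : Perp p S k := by
    have := ((perp_bb h0.2.1 hX h0X).neg).mono h0.2.2.1
    rwa [neg_sub] at this
  have heS := perp_bb hS hX hSX
  have hw'S : Perp p S (k - l • (bb p X - bb p S)) := hkS.sub (heS.smul _)
  have hw'U : Perp p U (k - l • (bb p X - bb p S)) := by
    apply perp_up hU hw'S
    rw [inner_sub_right, inner_smul_right, hlH, HH_eq hU hX hUX]; ring
  have key := le_zero_of_nn hU.2.1 hX hUX hw'U (by
    intro W hW hWX
    have hm : Mid p S W U := ⟨hU, hW⟩
    have hm' := opp_mid hm
    have hVX : opp p S W U ⊆ X := hm'.2.2.2.1.trans hWX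
    have h2 := hmax _ ⟨⟨hm'.1, hVX⟩, hP _ _ hm hWX hPU⟩
    rw [div_le_iff₀ (HH_pos hm'.1), ← HH_eq hm'.1 hX hVX] at h2
    have h3 : ⟪nn p S (opp p S W U), k - l • (bb p X - bb p S)⟫ ≤ 0 := by
      rw [inner_sub_right, inner_smul_right]; linarith
    have hs := ss_pos hm hm' (opp_ne hm)
    rw [pair_n hm hm' (opp_ne hm), inner_add_left, inner_smul_left, inner_smul_left,
      nn_zero hU hw'U] at h3
    simp only [RCLike.conj_to_real, mul_zero, zero_add] at h3
    by_contra hcc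
    push Not at hcc
    nlinarith [mul_pos hs hcc])
  obtain ⟨j, hj, hjS⟩ := Finset.exists_of_ssubset h0.ssub
  have h3 := key j (h0X hj)
  rw [inner_sub_right, inner_smul_right, hk, inner_sub_right, inner_sub_right, bb_eq h0.2.1 hj,
    bb_eq hX (h0X hj)] at h3
  have := bb_lt hS hjS
  nlinarith

end
end LV


namespace LV
noncomputable section
open scoped RealInnerProductSpace
set_option linter.all false
set_option linter.unusedSectionVars false

variable {E : Type*} [NormedAddCommGroup E] [InnerProductSpace ℝ E] [FiniteDimensional ℝ E]
variable {ι : Type*} [Fintype ι] [DecidableEq ι] {p : ι → E}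

open Classical in
/-- covers of `S` inside `X` -/
def cv (p : ι → E) (X S : Finset ι) : Finset (Finset ι) :=
  Finset.univ.filter (fun U => Cov p S U ∧ U ⊆ X)

lemma mem_cv {X S U : Finset ι} : U ∈ cv p X S ↔ Cov p S U ∧ U ⊆ X := by
  classical simp [cv]

lemma mem_cvu {S U : Finset ι} : U ∈ cv p Finset.univ S ↔ Cov p S U := by
  classical simp [cv]

/-- sum over flags -/
def fsum (p : ι → E) (X S : Finset ι) (f : Finset ι → Finset ι → ℝ) : ℝ :=
  ∑ U ∈ cv p X S, ∑ W ∈ cv p X U, f U W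

lemma fsum_sigma (X S : Finset ι) (f : Finset ι → Finset ι → ℝ) :
    fsum p X S f = ∑ x ∈ (cv p X S).sigma (fun U => cv p X U), f x.1 x.2 := by
  unfold fsum; rw [Finset.sum_sigma]

lemma flag_mem {X S : Finset ι} {x : (_ : Finset ι) × Finset ι} :
    x ∈ (cv p X S).sigma (fun U => cv p X U) ↔ Mid p S x.2 x.1 ∧ x.2 ⊆ X := by
  rw [Finset.mem_sigma, mem_cv, mem_cv]
  constructor
  · rintro ⟨⟨h1, _⟩, h2, h3⟩; exact ⟨⟨h1, h2⟩, h3⟩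
  · rintro ⟨⟨h1, h2⟩, h3⟩; exact ⟨⟨h1, h2.2.2.1.trans h3⟩, h2, h3⟩

lemma fsum_opp (X S : Finset ι) (f : Finset ι → Finset ι → ℝ) :
    fsum p X S f = fsum p X S (fun U W => f (opp p S W U) W) := by
  rw [fsum_sigma, fsum_sigma]
  refine Finset.sum_nbij' (fun x => ⟨opp p S x.2 x.1, x.2⟩) (fun x => ⟨opp p S x.2 x.1, x.2⟩)
    ?_ ?_ ?_ ?_ ?_
  · intro x hx; rw [flag_mem] at *; exact ⟨opp_mid hx.1, hx.2⟩
  · intro x hx; rw [flag_mem] at *; exact ⟨opp_mid hx.1, hx.2⟩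
  · intro x hx; rw [flag_mem] at hx; simp only; rw [opp_opp hx.1]
  · intro x hx; rw [flag_mem] at hx; simp only; rw [opp_opp hx.1]
  · intro x hx; rw [flag_mem] at hx; simp only; rw [opp_opp hx.1]

lemma fsum_congr' {X S : Finset ι} {f g : Finset ι → Finset ι → ℝ}
    (h : ∀ U W, Mid p S W U → W ⊆ X → f U W = g U W) : fsum p X S f = fsum p X S g := by
  rw [fsum_sigma, fsum_sigma]
  exact Finset.sum_congr rfl (fun x hx => h _ _ (flag_mem.1 hx).1 (flag_mem.1 hx).2)

lemma fsum_add (X S : Finset ι) (f g : Finset ι → Finset ι → ℝ) :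
    fsum p X S (fun U W => f U W + g U W) = fsum p X S f + fsum p X S g := by
  rw [fsum_sigma, fsum_sigma, fsum_sigma, Finset.sum_add_distrib]

lemma fsum_mul (X S : Finset ι) (c : ℝ) (f : Finset ι → Finset ι → ℝ) :
    fsum p X S (fun U W => c * f U W) = c * fsum p X S f := by
  rw [fsum_sigma, fsum_sigma, Finset.mul_sum]

lemma fsum_sub (X S : Finset ι) (f g : Finset ι → Finset ι → ℝ) :
    fsum p X S (fun U W => f U W - g U W) = fsum p X S f - fsum p X S g := by
  rw [fsum_sigma, fsum_sigma, fsum_sigma, Finset.sum_sub_distrib]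

/-- symmetrisation principle -/
lemma fsum_symm {X S : Finset ι} {f g : Finset ι → Finset ι → ℝ}
    (h : ∀ U W, Mid p S W U → W ⊆ X →
      f U W + f (opp p S W U) W = g U W + g (opp p S W U) W) : fsum p X S f = fsum p X S g := by
  have h1 := fsum_opp X S f (p := p)
  have h2 := fsum_opp X S g (p := p)
  have h3 := fsum_congr' h
  rw [fsum_add, fsum_add] at h3
  linarith

lemma fsum_nonneg {X S : Finset ι} {f : Finset ι → Finset ι → ℝ}
    (h : ∀ U W, Mid p S W U → W ⊆ X → 0 ≤ f U W) : 0 ≤ fsum p X S f := by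
  rw [fsum_sigma]
  exact Finset.sum_nonneg (fun x hx => h _ _ (flag_mem.1 hx).1 (flag_mem.1 hx).2)

lemma fsum_eq_zero {X S : Finset ι} {f : Finset ι → Finset ι → ℝ}
    (h : ∀ U W, Mid p S W U → W ⊆ X → 0 ≤ f U W) (h0 : fsum p X S f = 0) :
    ∀ U W, Mid p S W U → W ⊆ X → f U W = 0 := by
  rw [fsum_sigma] at h0
  intro U W h1 h2
  exact (Finset.sum_eq_zero_iff_of_nonneg
    (fun x hx => h _ _ (flag_mem.1 hx).1 (flag_mem.1 hx).2)).1 h0 ⟨U, W⟩ (flag_mem.2 ⟨h1, h2⟩)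

lemma fsum_rot {X S : Finset ι} (g : Finset ι → ℝ) (z w : Finset ι → E) :
    fsum p X S (fun U W => g W * (⟪nn p U W, z W⟫ * ⟪nn p S U, w W⟫)) =
    fsum p X S (fun U W => g W * (⟪nn p S U, z W⟫ * ⟪nn p U W, w W⟫)) := by
  apply fsum_symm
  intro U W h _
  have := pair_rot h (opp_mid h) (opp_ne h) (z W) (w W)
  linear_combination g W * this

lemma nn_inj {S U V : Finset ι} (h : Cov p S U) (h' : Cov p S V) (he : nn p S U = nn p S V) :
    U = V := by
  by_contra hne
  have h1 := nn_lt h h'.2.1 h'.2.2.1 (cov_not_sub h h' hne)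
  have h2 := nn_lt h' h.2.1 h.2.2.1 (cov_not_sub h' h (Ne.symm hne))
  rw [he] at h1
  linarith

lemma KK_top {S : Finset ι} (hr : rk p S = Module.finrank ℝ E) : KK p S = ⊤ :=
  Submodule.eq_top_of_finrank_eq hr

lemma perp_top {S : Finset ι} (hr : rk p S = Module.finrank ℝ E) {w : E} (hw : Perp p S w) : w = 0 := by
  have := hw.inner_KK (x := w) (by rw [KK_top hr]; trivial)
  rwa [inner_self_eq_zero] at this

lemma line_eq {S U : Finset ι} (h : Cov p S U) (hr : rk p S + 1 = Module.finrank ℝ E) {w : E}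
    (hw : Perp p S w) : w = ⟪nn p S U, w⟫ • nn p S U := by
  have := perp_top (by rw [h.2.2.2, hr]) (perp_proj h hw)
  rwa [sub_eq_zero] at this

lemma two_cov (hb : Bdd p) {S : Finset ι} (hS : IsFace p S) (hr : rk p S + 1 = Module.finrank ℝ E) :
    ∃ U V, Cov p S U ∧ Cov p S V ∧ U ≠ V ∧ cv p Finset.univ S = {U, V} ∧ nn p S V = - nn p S U := by
  obtain ⟨U, hU⟩ := exists_cov' hb hS (by omega)
  have hn0 : -nn p S U ≠ 0 := by
    intro h; have := nn_self hU; rw [neg_eq_zero.1 h] at this; simp at this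
  obtain ⟨V, hV, hpos⟩ := exists_cov_pos hb hS (nn_perp hU).neg hn0
  rw [inner_neg_right] at hpos
  have hsq : ∀ X, Cov p S X → ⟪nn p S U, nn p S X⟫ = 1 ∨ ⟪nn p S U, nn p S X⟫ = -1 := by
    intro X hX
    have h1 := line_eq hU hr (nn_perp hX)
    have h2 := nn_self hX
    rw [h1, inner_smul_left, inner_smul_right, nn_self hU] at h2
    simp at h2
    exact mul_self_eq_one_iff.1 h2
  have hV1 : nn p S V = - nn p S U := by
    have h1 := line_eq hU hr (nn_perp hV)
    rcases hsq V hV with h | h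
    · rw [real_inner_comm] at h; linarith
    · rw [h] at h1; rw [h1]; simp
  have hne : U ≠ V := by
    rintro rfl; rw [nn_self hU] at hpos; linarith
  refine ⟨U, V, hU, hV, hne, ?_, hV1⟩
  ext X
  rw [mem_cvu, Finset.mem_insert, Finset.mem_singleton]
  constructor
  · intro hX
    have h1 := line_eq hU hr (nn_perp hX)
    rcases hsq X hX with h | h
    · left; apply nn_inj hX hU; rw [h1, h]; simp
    · right; apply nn_inj hX hV; rw [h1, h, hV1]; simp
  · rintro (rfl | rfl) <;> assumption

/-- volumes -/
def vv (p : ι → E) : ℕ → Finset ι → ℝ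
  | 0, _ => 1
  | (m+1), S => (∑ U ∈ cv p Finset.univ S, HH p S U * vv p m U) / (m + 1)

lemma vv_rec (m : ℕ) (S : Finset ι) :
    ((m : ℝ) + 1) * vv p (m+1) S = ∑ U ∈ cv p Finset.univ S, HH p S U * vv p m U := by
  rw [vv]; field_simp

lemma minkowski (hb : Bdd p) (m : ℕ) {S : Finset ι} (hS : IsFace p S)
    (hr : rk p S + (m + 1) = Module.finrank ℝ E) (w : E) :
    ∑ U ∈ cv p Finset.univ S, vv p m U * ⟪nn p S U, w⟫ = 0 := by
  induction m generalizing S w with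
  | zero =>
    obtain ⟨U, V, hU, hV, hne, hcv, hn⟩ := two_cov hb hS (by omega)
    rw [hcv, Finset.sum_pair hne, hn]; simp [vv]
  | succ m ih =>
    have h1 : ((m : ℝ) + 1) * ∑ U ∈ cv p Finset.univ S, vv p (m+1) U * ⟪nn p S U, w⟫ =
        fsum p Finset.univ S (fun U W => vv p m W * (⟪nn p U W, bb p W - bb p S⟫ * ⟪nn p S U, w⟫)) := by
      rw [Finset.mul_sum]
      refine Finset.sum_congr rfl (fun U hU => ?_)
      rw [mem_cvu] at hU
      have h2 := ih hU.2.1 (by rw [hU.2.2.2]; omega) (bb p U - bb p S)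
      rw [← mul_assoc, vv_rec, Finset.sum_mul]
      have h3 : ∀ W ∈ cv p Finset.univ U, vv p m W * (⟪nn p U W, bb p W - bb p S⟫ * ⟪nn p S U, w⟫) =
          HH p U W * vv p m W * ⟪nn p S U, w⟫ +
            (vv p m W * ⟪nn p U W, bb p U - bb p S⟫) * ⟪nn p S U, w⟫ := by
        intro W _
        unfold HH
        simp only [inner_sub_right]; ring
      rw [Finset.sum_congr rfl h3, Finset.sum_add_distrib, ← Finset.sum_mul _ _ ⟪nn p S U, w⟫,
        ← Finset.sum_mul _ _ ⟪nn p S U, w⟫, h2]; ring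
    rw [fsum_rot (fun W => vv p m W) (fun W => bb p W - bb p S) (fun _ => w)] at h1
    have h4 : fsum p Finset.univ S (fun U W => vv p m W * (⟪nn p S U, bb p W - bb p S⟫ * ⟪nn p U W, w⟫)) = 0 := by
      apply Finset.sum_eq_zero
      intro U hU
      rw [mem_cvu] at hU
      have h2 := ih hU.2.1 (by rw [hU.2.2.2]; omega) w
      have h3 : ∀ W ∈ cv p Finset.univ U, vv p m W * (⟪nn p S U, bb p W - bb p S⟫ * ⟪nn p U W, w⟫) =
          HH p S U * (vv p m W * ⟪nn p U W, w⟫) := by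
        intro W hW
        rw [mem_cvu] at hW
        rw [HH_eq hU hW.2.1 hW.2.2.1]; ring
      rw [Finset.sum_congr rfl h3, ← Finset.mul_sum, h2, mul_zero]
    rw [h4] at h1
    rcases mul_eq_zero.1 h1 with h | h
    · exact absurd h (by positivity)
    · exact h

/-- first moments of the linear function `⟪x, ·⟫` -/
def mm (p : ι → E) (x : E) : ℕ → Finset ι → ℝ
  | 0, S => ⟪x, bb p S⟫
  | (m+1), S => (∑ U ∈ cv p Finset.univ S, HH p S U * mm p x m U + ⟪x, bb p S⟫ * vv p (m+1) S) / (m + 2)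

lemma mm_rec (x : E) (m : ℕ) (S : Finset ι) :
    ((m : ℝ) + 2) * mm p x (m+1) S =
      ∑ U ∈ cv p Finset.univ S, HH p S U * mm p x m U + ⟪x, bb p S⟫ * vv p (m+1) S := by
  rw [mm]; field_simp

lemma stokes (hb : Bdd p) (x : E) (m : ℕ) {S : Finset ι} (hS : IsFace p S)
    (hr : rk p S + (m + 1) = Module.finrank ℝ E) {w : E} (hw : Perp p S w) :
    ∑ U ∈ cv p Finset.univ S, mm p x m U * ⟪nn p S U, w⟫ = vv p (m+1) S * ⟪x, w⟫ := by
  induction m generalizing S w with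
  | zero =>
    obtain ⟨U, V, hU, hV, hne, hcv, hn⟩ := two_cov hb hS (by omega)
    have h1 := vv_rec 0 S (p := p)
    rw [hcv, Finset.sum_pair hne] at h1
    simp only [vv, mul_one, HH, hn, Nat.cast_zero, zero_add, one_mul] at h1
    rw [hcv, Finset.sum_pair hne, hn, vv, hcv, Finset.sum_pair hne]
    simp only [vv, mm, HH, hn]
    have h2 := line_eq hU (by omega) hw
    have h3 : Perp p S (bb p U - bb p V) := by
      have := (perp_bb hS hU.2.1 hU.2.2.1).sub (perp_bb hS hV.2.1 hV.2.2.1)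
      rwa [sub_sub_sub_cancel_right] at this
    have h4 := line_eq hU (by omega) h3
    have h5 : ⟪x, bb p U⟫ - ⟪x, bb p V⟫ = ⟪nn p S U, bb p U - bb p V⟫ * ⟪x, nn p S U⟫ := by
      rw [← inner_sub_right, h4, inner_smul_right, inner_smul_right, nn_self hU]; ring
    have h6 : ⟪x, w⟫ = ⟪nn p S U, w⟫ * ⟪x, nn p S U⟫ := by
      rw [h2, inner_smul_right, inner_smul_right, nn_self hU]; ring
    rw [h6]
    simp only [inner_sub_right, inner_neg_left] at *
    push_cast
    linear_combination ⟪nn p S U, w⟫ * h5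
  | succ m ih =>
    have hproj : ∀ U, Cov p S U → ∀ y, Perp p S y →
        ∑ W ∈ cv p Finset.univ U, mm p x m W * ⟪nn p U W, y⟫ =
        vv p (m+1) U * (⟪x, y⟫ - ⟪nn p S U, y⟫ * ⟪x, nn p S U⟫) := by
      intro U hU y hy
      have := ih hU.2.1 (by rw [hU.2.2.2]; omega) (perp_proj hU hy)
      rw [inner_sub_right, inner_smul_right] at this
      rw [← this]
      refine Finset.sum_congr rfl (fun W hW => ?_)
      rw [mem_cvu] at hW
      have h0 : ⟪nn p U W, nn p S U⟫ = 0 := Mid.orth' (S := S) ⟨hU, hW⟩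
      rw [inner_sub_right, inner_smul_right, h0]; ring
    have h1 : ((m : ℝ) + 2) * ∑ U ∈ cv p Finset.univ S, mm p x (m+1) U * ⟪nn p S U, w⟫ =
        fsum p Finset.univ S (fun U W => mm p x m W * (⟪nn p U W, bb p W - bb p S⟫ * ⟪nn p S U, w⟫)) +
        ∑ U ∈ cv p Finset.univ S, (⟪x, bb p S⟫ + HH p S U * ⟪x, nn p S U⟫) * (vv p (m+1) U * ⟪nn p S U, w⟫) := by
      unfold fsum
      rw [← Finset.sum_add_distrib, Finset.mul_sum]
      refine Finset.sum_congr rfl (fun U hU => ?_)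
      rw [mem_cvu] at hU
      have h2 := hproj U hU (bb p U - bb p S) (perp_bb hS hU.2.1 hU.2.2.1)
      rw [← mul_assoc, mm_rec]
      have h3 : ∀ W ∈ cv p Finset.univ U, mm p x m W * (⟪nn p U W, bb p W - bb p S⟫ * ⟪nn p S U, w⟫) =
          HH p U W * mm p x m W * ⟪nn p S U, w⟫ +
            (mm p x m W * ⟪nn p U W, bb p U - bb p S⟫) * ⟪nn p S U, w⟫ := by
        intro W _
        unfold HH
        simp only [inner_sub_right]; ring
      rw [Finset.sum_congr rfl h3, Finset.sum_add_distrib, ← Finset.sum_mul _ _ ⟪nn p S U, w⟫,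
        ← Finset.sum_mul _ _ ⟪nn p S U, w⟫, h2, inner_sub_right x]
      unfold HH
      ring
    rw [fsum_rot (fun W => mm p x m W) (fun W => bb p W - bb p S) (fun _ => w)] at h1
    have h4 : fsum p Finset.univ S (fun U W => mm p x m W * (⟪nn p S U, bb p W - bb p S⟫ * ⟪nn p U W, w⟫)) =
        ∑ U ∈ cv p Finset.univ S, HH p S U * (vv p (m+1) U * (⟪x, w⟫ - ⟪nn p S U, w⟫ * ⟪x, nn p S U⟫)) := by
      refine Finset.sum_congr rfl (fun U hU => ?_)
      rw [mem_cvu] at hU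
      rw [← hproj U hU w hw, Finset.mul_sum]
      refine Finset.sum_congr rfl (fun W hW => ?_)
      rw [mem_cvu] at hW
      beta_reduce; rw [HH_eq hU hW.2.1 hW.2.2.1]; ring
    have h5 := minkowski hb (m+1) hS hr w
    have h6 := vv_rec (m+1) S (p := p)
    rw [h4, ← Finset.sum_add_distrib] at h1
    have h7 : ∀ U ∈ cv p Finset.univ S, HH p S U * (vv p (m+1) U * (⟪x, w⟫ - ⟪nn p S U, w⟫ * ⟪x, nn p S U⟫)) +
        (⟪x, bb p S⟫ + HH p S U * ⟪x, nn p S U⟫) * (vv p (m+1) U * ⟪nn p S U, w⟫) =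
        HH p S U * vv p (m+1) U * ⟪x, w⟫ + ⟪x, bb p S⟫ * (vv p (m+1) U * ⟪nn p S U, w⟫) := by
      intro U _; ring
    rw [Finset.sum_congr rfl h7, Finset.sum_add_distrib, ← Finset.sum_mul, ← Finset.mul_sum, h5, ← h6] at h1
    push_cast at h1
    have h8 : ((m : ℝ) + 2) * (∑ U ∈ cv p Finset.univ S, mm p x (m+1) U * ⟪nn p S U, w⟫) =
        ((m : ℝ) + 2) * (vv p (m + 1 + 1) S * ⟪x, w⟫) := by rw [h1]; ring
    exact mul_left_cancel₀ (by positivity) h8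

lemma vv_pos (hb : Bdd p) (m : ℕ) {S : Finset ι} (hS : IsFace p S)
    (hr : rk p S + m = Module.finrank ℝ E) : 0 < vv p m S := by
  induction m generalizing S with
  | zero => simp [vv]
  | succ m ih =>
    rw [vv]
    refine div_pos (Finset.sum_pos ?_ ?_) (by positivity)
    · intro U hU
      rw [mem_cvu] at hU
      exact mul_pos (HH_pos hU) (ih hU.2.1 (by rw [hU.2.2.2]; omega))
    · obtain ⟨U, hU⟩ := exists_cov' hb hS (by omega)
      exact ⟨U, mem_cvu.2 hU⟩

end
end LV


namespace LV
noncomputable section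
open scoped RealInnerProductSpace
set_option linter.all false
set_option linter.unusedSectionVars false

variable {E : Type*} [NormedAddCommGroup E] [InnerProductSpace ℝ E] [FiniteDimensional ℝ E]
variable {ι : Type*} [Fintype ι] [DecidableEq ι] {p : ι → E}

/-- the induced support values on the facet `U` -/
def zz (p : ι → E) (S : Finset ι) (Y : Finset ι → ℝ) (U W : Finset ι) : ℝ :=
  (Y (opp p S W U) - cc p S U (opp p S W U) * Y U) / ss p S W U (opp p S W U)

lemma zz_add (S : Finset ι) (Y Y' : Finset ι → ℝ) (U W : Finset ι) :
    zz p S (fun U => Y U + Y' U) U W = zz p S Y U W + zz p S Y' U W := by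
  unfold zz; ring
lemma zz_smul (S : Finset ι) (c : ℝ) (Y : Finset ι → ℝ) (U W : Finset ι) :
    zz p S (fun U => c * Y U) U W = c * zz p S Y U W := by
  unfold zz; ring
lemma zz_sub (S : Finset ι) (Y Y' : Finset ι → ℝ) (U W : Finset ι) :
    zz p S (fun U => Y U - Y' U) U W = zz p S Y U W - zz p S Y' U W := by
  unfold zz; ring

lemma so_pos {S U W : Finset ι} (h : Mid p S W U) : 0 < ss p S W U (opp p S W U) :=
  ss_pos h (opp_mid h) (opp_ne h)

lemma nn_opp {S U W : Finset ι} (h : Mid p S W U) (w : E) :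
    ⟪nn p S (opp p S W U), w⟫ = cc p S U (opp p S W U) * ⟪nn p S U, w⟫ +
      ss p S W U (opp p S W U) * ⟪nn p U W, w⟫ := by
  rw [pair_n h (opp_mid h) (opp_ne h), inner_add_left, inner_smul_left, inner_smul_left]; simp

lemma zz_lin {S U W : Finset ι} (h : Mid p S W U) {Y : Finset ι → ℝ} {w : E}
    (h1 : Y U = ⟪nn p S U, w⟫) (h2 : Y (opp p S W U) = ⟪nn p S (opp p S W U), w⟫) :
    zz p S Y U W = ⟪nn p U W, w⟫ := by
  unfold zz
  have := so_pos h
  rw [h1, h2, nn_opp h]; field_simp; ring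

/-- converse of `zz_lin` -/
lemma opp_of_zz {S U W : Finset ι} (h : Mid p S W U) {Y : Finset ι → ℝ} {w : E}
    (h1 : ⟪nn p S U, w⟫ = Y U) (h2 : ⟪nn p U W, w⟫ = zz p S Y U W) :
    ⟪nn p S (opp p S W U), w⟫ = Y (opp p S W U) := by
  have := so_pos h
  rw [nn_opp h, h1, h2, zz]; field_simp; ring

def mY (p : ι → E) (g : Finset ι → ℝ) (S : Finset ι) (Y : Finset ι → ℝ) (U : Finset ι) : ℝ :=
  ∑ W ∈ cv p Finset.univ U, g W * zz p S Y U W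

def Mb (p : ι → E) (g : Finset ι → ℝ) (S : Finset ι) (Y Y' : Finset ι → ℝ) : ℝ :=
  ∑ U ∈ cv p Finset.univ S, Y U * mY p g S Y' U

variable {g : Finset ι → ℝ} {S : Finset ι}

lemma mY_add (Y Y' : Finset ι → ℝ) (U : Finset ι) :
    mY p g S (fun U => Y U + Y' U) U = mY p g S Y U + mY p g S Y' U := by
  unfold mY; rw [← Finset.sum_add_distrib]
  exact Finset.sum_congr rfl (fun W _ => by rw [zz_add]; ring)
lemma mY_smul (c : ℝ) (Y : Finset ι → ℝ) (U : Finset ι) :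
    mY p g S (fun U => c * Y U) U = c * mY p g S Y U := by
  unfold mY; rw [Finset.mul_sum]
  exact Finset.sum_congr rfl (fun W _ => by rw [zz_smul]; ring)

lemma Mb_eq_fsum (Y Y' : Finset ι → ℝ) :
    Mb p g S Y Y' = fsum p Finset.univ S (fun U W => g W * (Y U * zz p S Y' U W)) := by
  unfold Mb fsum mY
  refine Finset.sum_congr rfl (fun U _ => ?_)
  rw [Finset.mul_sum]
  exact Finset.sum_congr rfl (fun W _ => by ring)

lemma cs_opp {S U W : Finset ι} (h : Mid p S W U) :
    cc p S (opp p S W U) U = cc p S U (opp p S W U) ∧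
    ss p S W (opp p S W U) U = ss p S W U (opp p S W U) :=
  ⟨cc_comm _ _ _, (ss_comm h (opp_mid h) (opp_ne h)).symm⟩

lemma zz_opp {S U W : Finset ι} (h : Mid p S W U) (Y : Finset ι → ℝ) :
    zz p S Y (opp p S W U) W =
      (Y U - cc p S U (opp p S W U) * Y (opp p S W U)) / ss p S W U (opp p S W U) := by
  unfold zz; rw [opp_opp h, (cs_opp h).1, (cs_opp h).2]

lemma Mb_comm (Y Y' : Finset ι → ℝ) : Mb p g S Y Y' = Mb p g S Y' Y := by
  rw [Mb_eq_fsum, Mb_eq_fsum]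
  apply fsum_symm
  intro U W h _
  rw [zz_opp h, zz_opp h]; unfold zz; ring

lemma Mb_add_right (Y Y' Y'' : Finset ι → ℝ) :
    Mb p g S Y (fun U => Y' U + Y'' U) = Mb p g S Y Y' + Mb p g S Y Y'' := by
  unfold Mb; rw [← Finset.sum_add_distrib]
  exact Finset.sum_congr rfl (fun W _ => by rw [mY_add]; ring)
lemma Mb_smul_right (c : ℝ) (Y Y' : Finset ι → ℝ) :
    Mb p g S Y (fun U => c * Y' U) = c * Mb p g S Y Y' := by
  unfold Mb; rw [Finset.mul_sum]
  exact Finset.sum_congr rfl (fun W _ => by rw [mY_smul]; ring)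

lemma Mb_quad (c : ℝ) (Y Y' : Finset ι → ℝ) :
    Mb p g S (fun U => Y U + c * Y' U) (fun U => Y U + c * Y' U) =
      Mb p g S Y Y + 2 * c * Mb p g S Y Y' + c ^ 2 * Mb p g S Y' Y' := by
  rw [Mb_add_right (Y' := Y) (Y'' := fun U => c * Y' U), Mb_smul_right,
    Mb_comm _ Y, Mb_comm _ Y', Mb_add_right (Y' := Y) (Y'' := fun U => c * Y' U),
    Mb_add_right (Y' := Y) (Y'' := fun U => c * Y' U), Mb_smul_right, Mb_smul_right, Mb_comm Y' Y]
  ring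

lemma mY_congr {Y Y' : Finset ι → ℝ} (h : ∀ U, Cov p S U → Y U = Y' U) {U : Finset ι} (hU : Cov p S U) :
    mY p g S Y U = mY p g S Y' U := by
  unfold mY
  refine Finset.sum_congr rfl (fun W hW => ?_)
  rw [mem_cvu] at hW
  unfold zz
  rw [h U hU, h _ (opp_mid ⟨hU, hW⟩).1]

lemma mY_lin {U : Finset ι} (hU : Cov p S U) (w : E) :
    mY p g S (fun V => ⟪nn p S V, w⟫) U = ∑ W ∈ cv p Finset.univ U, g W * ⟪nn p U W, w⟫ := by
  refine Finset.sum_congr rfl (fun W hW => ?_)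
  rw [mem_cvu] at hW
  rw [zz_lin ⟨hU, hW⟩ rfl rfl]

/-- `S` has codimension `m + 2`. -/
lemma mY_lin_zero (hb : Bdd p) {m : ℕ} (hr : rk p S + (m + 2) = Module.finrank ℝ E)
    {U : Finset ι} (hU : Cov p S U) (w : E) :
    mY p (vv p m) S (fun V => ⟪nn p S V, w⟫) U = 0 := by
  rw [mY_lin hU]
  exact minkowski hb m hU.2.1 (by rw [hU.2.2.2]; omega) w

lemma zz_HH {S U W : Finset ι} (h : Mid p S W U) :
    zz p S (HH p S) U W = ⟪nn p U W, bb p W - bb p S⟫ := by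
  apply zz_lin h
  · exact (HH_eq h.1 h.2.2.1 h.2.2.2.1).symm
  · have := opp_mid h
    exact (HH_eq this.1 this.2.2.1 this.2.2.2.1).symm

lemma mY_HH (hb : Bdd p) {m : ℕ} (hr : rk p S + (m + 2) = Module.finrank ℝ E)
    {U : Finset ι} (hU : Cov p S U) :
    mY p (vv p m) S (HH p S) U = ((m : ℝ) + 1) * vv p (m+1) U := by
  rw [vv_rec]
  have h2 := minkowski hb m hU.2.1 (by rw [hU.2.2.2]; omega) (bb p U - bb p S)
  unfold mY
  rw [← add_zero (∑ W ∈ cv p Finset.univ U, HH p U W * vv p m W), ← h2, ← Finset.sum_add_distrib]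
  refine Finset.sum_congr rfl (fun W hW => ?_)
  rw [mem_cvu] at hW
  rw [zz_HH ⟨hU, hW⟩, HH]
  simp only [inner_sub_right]; ring

def LL (p : ι → E) (m : ℕ) (S : Finset ι) (Y : Finset ι → ℝ) : ℝ :=
  ∑ U ∈ cv p Finset.univ S, vv p (m+1) U * Y U

lemma Mb_HH (hb : Bdd p) {m : ℕ} (hr : rk p S + (m + 2) = Module.finrank ℝ E) (Y : Finset ι → ℝ) :
    Mb p (vv p m) S Y (HH p S) = ((m : ℝ) + 1) * LL p m S Y := by
  unfold Mb LL
  rw [Finset.mul_sum]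
  refine Finset.sum_congr rfl (fun U hU => ?_)
  rw [mY_HH hb hr (mem_cvu.1 hU)]; ring

lemma LL_HH (m : ℕ) (S : Finset ι) : LL p m S (HH p S) = ((m : ℝ) + 2) * vv p (m+2) S := by
  have := vv_rec (m+1) S (p := p)
  push_cast at this
  rw [show (m:ℝ) + 2 = m + 1 + 1 by ring, this]
  unfold LL
  exact Finset.sum_congr rfl (fun U _ => by ring)

lemma LL_add (m : ℕ) (Y Y' : Finset ι → ℝ) (c : ℝ) :
    LL p m S (fun U => Y U + c * Y' U) = LL p m S Y + c * LL p m S Y' := by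
  unfold LL
  rw [Finset.mul_sum, ← Finset.sum_add_distrib]
  exact Finset.sum_congr rfl (fun U _ => by ring)

lemma ground {F : Finset ι → ℝ} (hF : ∀ U, Cov p S U → F U ≠ 0) (Y : Finset ι → ℝ) :
    Mb p g S Y Y = - (1/2) * fsum p Finset.univ S (fun U W => g W *
      (F U * F (opp p S W U) / ss p S W U (opp p S W U) *
        (Y U / F U - Y (opp p S W U) / F (opp p S W U)) ^ 2)) +
      ∑ U ∈ cv p Finset.univ S, (Y U / F U) ^ 2 * (F U * mY p g S F U) := by
  have h1 : ∑ U ∈ cv p Finset.univ S, (Y U / F U) ^ 2 * (F U * mY p g S F U) =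
      fsum p Finset.univ S (fun U W => g W * ((Y U / F U) ^ 2 * (F U * zz p S F U W))) := by
    unfold fsum mY
    refine Finset.sum_congr rfl (fun U _ => ?_)
    rw [Finset.mul_sum, Finset.mul_sum]
    exact Finset.sum_congr rfl (fun W _ => by ring)
  rw [h1, Mb_eq_fsum, ← fsum_mul, ← fsum_add]
  apply fsum_symm
  intro U W h _
  rw [zz_opp h, zz_opp h, opp_opp h, (cs_opp h).2]
  unfold zz
  have h2 := hF U h.1
  have h3 := hF _ (opp_mid h).1
  have h4 := (so_pos h).ne'
  field_simp
  ring

/-- the hyperbolicity claims -/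
def ClaimA (p : ι → E) (m : ℕ) (S : Finset ι) : Prop :=
  ∀ Y : Finset ι → ℝ, LL p m S Y = 0 → Mb p (vv p m) S Y Y ≤ 0

def ClaimB (p : ι → E) (m : ℕ) (S : Finset ι) : Prop :=
  ∀ Y : Finset ι → ℝ, (∀ U, Cov p S U → mY p (vv p m) S Y U = 0) →
    ∃ w, Perp p S w ∧ ∀ U, Cov p S U → Y U = ⟪nn p S U, w⟫

/-- A criterion for claim A by an arbitrary functional. -/
lemma claimA_of_functional (hb : Bdd p) {m : ℕ} (hS : IsFace p S)
    (hr : rk p S + (m + 2) = Module.finrank ℝ E) (l : (Finset ι → ℝ) → ℝ)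
    (hl : ∀ (Y Y' : Finset ι → ℝ) (c : ℝ), l (fun U => Y U + c * Y' U) = l Y + c * l Y')
    (h : ∀ Y, l Y = 0 → Mb p (vv p m) S Y Y ≤ 0) : ClaimA p m S := by
  intro Y hY
  have hHH : 0 < Mb p (vv p m) S (HH p S) (HH p S) := by
    rw [Mb_HH hb hr, LL_HH]
    have := vv_pos hb (m+2) hS hr
    positivity
  have hlH : l (HH p S) ≠ 0 := fun h0 => by linarith [h _ h0]
  have h1 := h (fun U => Y U + (-(l Y / l (HH p S))) * HH p S U) (by
    rw [hl]; field_simp; ring)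
  rw [Mb_quad, Mb_HH hb hr Y, hY] at h1
  nlinarith [mul_nonneg (sq_nonneg (-(l Y / l (HH p S)))) hHH.le]

end
end LV


namespace LV
noncomputable section
open scoped RealInnerProductSpace
set_option linter.all false
set_option linter.unusedSectionVars false

variable {E : Type*} [NormedAddCommGroup E] [InnerProductSpace ℝ E] [FiniteDimensional ℝ E]
variable {ι : Type*} [Fintype ι] [DecidableEq ι] {p : ι → E} {S : Finset ι}

lemma face_eq_of_bb {T T' : Finset ι} (h : IsFace p T) (h' : IsFace p T') (he : bb p T = bb p T') :
    T = T' := by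
  ext i
  rw [← (bb_wit h i).2, ← (bb_wit h' i).2, he]

lemma base_unique (hr : rk p S + 2 = Module.finrank ℝ E) {f k : E} {κ κ' : ℝ}
    {U W U' W' : Finset ι} (h : Mid p S W U) (h' : Mid p S W' U')
    (h1 : 0 < ⟪nn p S U, f⟫) (h2 : ⟪nn p S (opp p S W U), f⟫ < 0)
    (h1' : 0 < ⟪nn p S U', f⟫) (h2' : ⟪nn p S (opp p S W' U'), f⟫ < 0)
    (hq : ⟪nn p S U, f⟫ • nn p S (opp p S W U) - ⟪nn p S (opp p S W U), f⟫ • nn p S U = κ • k)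
    (hq' : ⟪nn p S U', f⟫ • nn p S (opp p S W' U') - ⟪nn p S (opp p S W' U'), f⟫ • nn p S U' = κ' • k)
    (hκ : 0 < κ * κ') : U = U' ∧ W = W' := by
  have hV := opp_mid h
  have hV' := opp_mid h'
  have aux : ∀ {U W W' : Finset ι}, Cov p S U → U ⊆ W → IsFace p W → IsFace p W' → S ⊆ W' →
      ⟪nn p S U, bb p W' - bb p W⟫ ≤ 0 := by
    intro U W W' hU hUW hW hW' hSW'
    rw [inner_sub_right, nn_tight hU (fun i hi => bb_eq hW (hUW hi))]
    linarith [nn_le hU (fun i => bb_le hW' i) (fun i hi => bb_eq hW' (hSW' hi))]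
  have hW := h.2.2.1
  have hW' := h'.2.2.1
  have hSW : S ⊆ W := h.1.2.2.1.trans h.2.2.2.1
  have hSW' : S ⊆ W' := h'.1.2.2.1.trans h'.2.2.2.1
  have a1 := aux h.1 h.2.2.2.1 hW hW' hSW'
  have a2 := aux hV.1 hV.2.2.2.1 hW hW' hSW'
  have a1' := aux h'.1 h'.2.2.2.1 hW' hW hSW
  have a2' := aux hV'.1 hV'.2.2.2.1 hW' hW hSW
  have e1 := congrArg (fun v => ⟪v, bb p W' - bb p W⟫) hq
  have e2 := congrArg (fun v => ⟪v, bb p W - bb p W'⟫) hq'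
  simp only [inner_sub_left, inner_smul_left, RCLike.conj_to_real] at e1 e2
  have hneg : ⟪k, bb p W - bb p W'⟫ = - ⟪k, bb p W' - bb p W⟫ := by
    rw [← inner_neg_right, neg_sub]
  rw [hneg] at e2
  have b1 : κ * ⟪k, bb p W' - bb p W⟫ ≤ 0 := by
    rw [← e1]; nlinarith
  have b2 : κ' * -⟪k, bb p W' - bb p W⟫ ≤ 0 := by
    rw [← e2]; nlinarith
  have b3 : ⟪k, bb p W' - bb p W⟫ = 0 := by
    rcases lt_or_ge 0 κ with hk | hk
    · have : 0 < κ' := (mul_pos_iff_of_pos_left hk).1 hκ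
      nlinarith
    · have hk0 : κ < 0 := lt_of_le_of_ne hk (by rintro rfl; simp at hκ)
      have : κ' < 0 := by by_contra hc; push Not at hc; nlinarith
      nlinarith
  rw [b3, mul_zero] at e1
  have c1 : ⟪nn p S U, bb p W' - bb p W⟫ = 0 := by nlinarith
  have c2 : ⟪nn p S (opp p S W U), bb p W' - bb p W⟫ = 0 := by nlinarith
  have hPS : Perp p S (bb p W' - bb p W) := by
    intro i hi; rw [inner_sub_right, bb_eq hW (hSW hi), bb_eq hW' (hSW' hi), sub_self]
  have hPU := perp_up h.1 hPS c1
  rw [nn_opp h, c1, mul_zero, zero_add] at c2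
  have hPW := perp_up h.2 hPU ((mul_eq_zero.1 c2).resolve_left (so_pos h).ne')
  have := perp_top (by rw [h.rk, hr]) hPW
  have hWW : W = W' := face_eq_of_bb hW hW' (sub_eq_zero.1 this).symm
  subst hWW
  refine ⟨?_, rfl⟩
  by_contra hne
  have := eq_opp h h' (Ne.symm hne)
  rw [this] at h1'
  linarith

lemma baseA (hb : Bdd p) (hS : IsFace p S) (hr : rk p S + (0 + 2) = Module.finrank ℝ E) :
    ClaimA p 0 S := by
  classical
  obtain ⟨U0, hU0⟩ := exists_cov' hb hS (by omega)
  obtain ⟨W0, hW0⟩ := exists_cov' hb hU0.2.1 (by rw [hU0.2.2.2]; omega)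
  have hm0 : Mid p S W0 U0 := ⟨hU0, hW0⟩
  set a := nn p S U0 with ha
  set b := nn p U0 W0 with hbdef
  have hfr : ∀ x, Perp p S x → x = ⟪a, x⟫ • a + ⟪b, x⟫ • b := by
    intro x hx
    exact frame_eq hm0 hx (by rw [KK_top (by rw [hm0.rk]; omega)]; trivial)
  have haa : ⟪a, a⟫ = 1 := nn_self hU0
  have hbb : ⟪b, b⟫ = 1 := nn_self hW0
  have hab : ⟪a, b⟫ = 0 := hm0.orth
  have hba : ⟪b, a⟫ = 0 := hm0.orth'
  obtain ⟨t, ht⟩ := Infinite.exists_notMem_finset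
    ((cv p Finset.univ S).image (fun U => - ⟪b, nn p S U⟫ / ⟪a, nn p S U⟫))
  obtain ⟨f, hf⟩ : ∃ f, f = t • a + b := ⟨_, rfl⟩
  obtain ⟨k, hk⟩ : ∃ k, k = a - t • b := ⟨_, rfl⟩
  have hF : ∀ U, Cov p S U → ⟪nn p S U, f⟫ ≠ 0 := by
    intro U hU h0
    rw [hf, inner_add_right, inner_smul_right, real_inner_comm a, real_inner_comm b] at h0
    by_cases hz : ⟪a, nn p S U⟫ = 0
    · rw [hz] at h0
      have := hfr _ (nn_perp hU)
      rw [hz, show ⟪b, nn p S U⟫ = 0 by linarith] at this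
      have h1 := nn_self hU
      rw [this] at h1; simp at h1
    · apply ht
      rw [Finset.mem_image]
      refine ⟨U, mem_cvu.2 hU, ?_⟩
      field_simp; linarith
  -- the crossing vector
  have hq : ∀ U W, Mid p S W U → ∃ κ : ℝ, κ ≠ 0 ∧
      ⟪nn p S U, f⟫ • nn p S (opp p S W U) - ⟪nn p S (opp p S W U), f⟫ • nn p S U = κ • k := by
    intro U W h
    have hV := opp_mid h
    set q := ⟪nn p S U, f⟫ • nn p S (opp p S W U) - ⟪nn p S (opp p S W U), f⟫ • nn p S U with hqd
    have hqf : ⟪f, q⟫ = 0 := by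
      rw [hqd, inner_sub_right, inner_smul_right, inner_smul_right,
        real_inner_comm _ f, real_inner_comm _ f]; ring
    have hqP : Perp p S q := ((nn_perp hV.1).smul _).sub ((nn_perp h.1).smul _)
    have h1 := hfr q hqP
    rw [hf, inner_add_left, inner_smul_left] at hqf
    simp only [RCLike.conj_to_real] at hqf
    have h2 : q = ⟪a, q⟫ • k := by
      conv_lhs => rw [h1]
      rw [show ⟪b, q⟫ = - t * ⟪a, q⟫ by linarith, hk]
      module
    refine ⟨⟪a, q⟫, ?_, h2⟩
    intro h0
    rw [h0, zero_smul] at h2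
    have h3 : ⟪nn p U W, q⟫ = 0 := by rw [h2, inner_zero_right]
    rw [hqd, inner_sub_right, inner_smul_right, inner_smul_right, h.orth', mul_zero, sub_zero] at h3
    rcases mul_eq_zero.1 h3 with h4 | h4
    · exact hF U h.1 h4
    · exact (so_pos h).ne' h4
  choose! κ hκ0 hκ using hq
  set F : Finset ι → ℝ := fun U => ⟪nn p S U, f⟫ with hFd
  set G : Finset ι → ℝ := fun U => ⟪nn p S U, k⟫ with hGd
  let D : ((_ : Finset ι) × Finset ι) → (Finset ι → ℝ) → ℝ := fun x Y =>
    Y x.1 * F (opp p S x.2 x.1) - Y (opp p S x.2 x.1) * F x.1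
  have hkk : 0 < ⟪k, k⟫ := by
    rw [hk]
    simp only [inner_sub_left, inner_sub_right, inner_smul_left, inner_smul_right, haa, hbb, hab, hba]
    simp; nlinarith [mul_self_nonneg t]
  have hDG : ∀ x : (_ : Finset ι) × Finset ι, Mid p S x.2 x.1 → D x G = - κ x.1 x.2 * ⟪k, k⟫ := by
    intro x hx
    have := congrArg (fun v => ⟪v, k⟫) (hκ x.1 x.2 hx)
    simp only [inner_sub_left, inner_smul_left, RCLike.conj_to_real] at this
    simp only [D, G, F]
    linarith
  let Fl := (cv p Finset.univ S).sigma (fun U => cv p Finset.univ U)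
  let C1 := Fl.filter (fun x => (0 < F x.1 ∧ F (opp p S x.2 x.1) < 0) ∧ 0 < κ x.1 x.2)
  let C2 := Fl.filter (fun x => (0 < F x.1 ∧ F (opp p S x.2 x.1) < 0) ∧ κ x.1 x.2 < 0)
  have huniq : ∀ x ∈ Fl, ∀ y ∈ Fl, (0 < F x.1 ∧ F (opp p S x.2 x.1) < 0) →
      (0 < F y.1 ∧ F (opp p S y.2 y.1) < 0) → 0 < κ x.1 x.2 * κ y.1 y.2 → x = y := by
    intro x hx y hy h1 h2 h3
    have hx' := (flag_mem.1 hx).1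
    have hy' := (flag_mem.1 hy).1
    obtain ⟨e1, e2⟩ := base_unique (by omega) hx' hy' h1.1 h1.2 h2.1 h2.2 (hκ _ _ hx') (hκ _ _ hy') h3
    exact Sigma.ext e1 (heq_of_eq e2)
  have hDlin : ∀ x (Y Y' : Finset ι → ℝ) (c : ℝ), D x (fun U => Y U + c * Y' U) = D x Y + c * D x Y' := by
    intro x Y Y' c; simp only [D]; ring
  apply claimA_of_functional hb hS hr
    (fun Y => ∑ x ∈ C1, D x Y / D x G - ∑ x ∈ C2, D x Y / D x G)
  · intro Y Y' c
    simp only [hDlin, add_div, Finset.sum_add_distrib, mul_div_assoc, ← Finset.mul_sum]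
    ring
  · intro Y hl
    set e := ∑ x ∈ C1, D x Y / D x G with he
    have hcross : ∀ U W, Mid p S W U → 0 < F U → F (opp p S W U) < 0 →
        (Y U + (-e) * G U) * F (opp p S W U) = (Y (opp p S W U) + (-e) * G (opp p S W U)) * F U := by
      intro U W h h1 h2
      have hxF : (⟨U, W⟩ : (_ : Finset ι) × Finset ι) ∈ Fl := flag_mem.2 ⟨h, Finset.subset_univ _⟩
      have hDx : D ⟨U, W⟩ G ≠ 0 := by
        rw [hDG _ h]; exact mul_ne_zero (neg_ne_zero.2 (hκ0 U W h)) hkk.ne'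
      have hex : e = D ⟨U, W⟩ Y / D ⟨U, W⟩ G := by
        rcases lt_or_gt_of_ne (hκ0 U W h) with h3 | h3
        · have : C2 = {⟨U, W⟩} := by
            ext y
            simp only [C2, Finset.mem_filter, Finset.mem_singleton]
            constructor
            · rintro ⟨hy, hy1, hy2⟩
              exact huniq y hy _ hxF hy1 ⟨h1, h2⟩ (mul_pos_of_neg_of_neg hy2 h3)
            · rintro rfl; exact ⟨hxF, ⟨h1, h2⟩, h3⟩
          rw [this, Finset.sum_singleton] at hl
          linarith
        · have : C1 = {⟨U, W⟩} := by
            ext y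
            simp only [C1, Finset.mem_filter, Finset.mem_singleton]
            constructor
            · rintro ⟨hy, hy1, hy2⟩
              exact huniq y hy _ hxF hy1 ⟨h1, h2⟩ (mul_pos hy2 h3)
            · rintro rfl; exact ⟨hxF, ⟨h1, h2⟩, h3⟩
          rw [he, this, Finset.sum_singleton]
      have h4 : D ⟨U, W⟩ Y - e * D ⟨U, W⟩ G = 0 := by rw [hex]; field_simp; ring
      simp only [D] at h4
      linarith
    have hG0 : ∀ Y', Mb p (vv p 0) S Y' G = 0 := by
      intro Y'
      apply Finset.sum_eq_zero
      intro U hU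
      rw [mY_lin_zero hb hr (mem_cvu.1 hU), mul_zero]
    have h5 := Mb_quad (p := p) (g := vv p 0) (S := S) (-e) Y G
    rw [hG0, hG0, mul_zero, mul_zero, add_zero, add_zero] at h5
    rw [← h5, ground (F := F) hF]
    have h6 : ∀ Z : Finset ι → ℝ, ∑ U ∈ cv p Finset.univ S, (Z U / F U) ^ 2 * (F U * mY p (vv p 0) S F U) = 0 := by
      intro Z
      apply Finset.sum_eq_zero
      intro U hU
      rw [mY_lin_zero hb hr (mem_cvu.1 hU)]; simp
    rw [h6, add_zero]
    have h7 : 0 ≤ fsum p Finset.univ S (fun U W => vv p 0 W *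
      (F U * F (opp p S W U) / ss p S W U (opp p S W U) *
        ((Y U + (-e) * G U) / F U - (Y (opp p S W U) + (-e) * G (opp p S W U)) / F (opp p S W U)) ^ 2)) := by
      apply fsum_nonneg
      intro U W h _
      have hs := so_pos h
      have f1 := hF U h.1
      have f2 := hF _ (opp_mid h).1
      simp only [vv, one_mul]
      have hzero : (Y U + (-e) * G U) * F (opp p S W U) = (Y (opp p S W U) + (-e) * G (opp p S W U)) * F U →
        0 ≤ (F U * F (opp p S W U) / ss p S W U (opp p S W U) *
        ((Y U + (-e) * G U) / F U - (Y (opp p S W U) + (-e) * G (opp p S W U)) / F (opp p S W U)) ^ 2) := by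
        intro hz
        have : (Y U + (-e) * G U) / F U = (Y (opp p S W U) + (-e) * G (opp p S W U)) / F (opp p S W U) := by
          rw [div_eq_div_iff f1 f2, hz]
        rw [this]; simp
      rcases lt_or_gt_of_ne f1 with g1 | g1 <;> rcases lt_or_gt_of_ne f2 with g2 | g2
      · have : 0 < F U * F (opp p S W U) := mul_pos_of_neg_of_neg g1 g2
        positivity
      · apply hzero
        have := hcross _ W (opp_mid h) g2 (by rw [opp_opp h]; exact g1)
        rw [opp_opp h] at this
        exact this.symm
      · exact hzero (hcross U W h g1 g2)
      · have : 0 < F U * F (opp p S W U) := mul_pos g1 g2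
        positivity
    linarith

lemma baseB (hb : Bdd p) (hS : IsFace p S) (hr : rk p S + (0 + 2) = Module.finrank ℝ E) :
    ClaimB p 0 S := by
  intro Y hY
  obtain ⟨U0, hU0⟩ := exists_cov' hb hS (by omega)
  have hY' : ∀ U, Cov p S U → ∃ W V, Cov p U W ∧ Cov p U V ∧ cv p Finset.univ U = {W, V} ∧
      nn p U V = - nn p U W ∧ zz p S Y U V = - zz p S Y U W := by
    intro U hU
    obtain ⟨W, V, hW, hV, hne, hcv, hn⟩ := two_cov hb hU.2.1 (by rw [hU.2.2.2]; omega)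
    refine ⟨W, V, hW, hV, hcv, hn, ?_⟩
    have := hY U hU
    unfold mY at this
    rw [hcv, Finset.sum_pair hne] at this
    simp only [vv, one_mul] at this
    linarith
  have hall : ∀ U w, Cov p S U → (∃ W, Cov p U W ∧ ⟪nn p U W, w⟫ = zz p S Y U W) →
      ∀ W, Cov p U W → ⟪nn p U W, w⟫ = zz p S Y U W := by
    rintro U w hU ⟨W1, hW1, h1⟩ W2 hW2
    obtain ⟨W, V, hW, hV, hcv, hn, hz⟩ := hY' U hU
    have m1 : W1 = W ∨ W1 = V := by have := mem_cvu.2 hW1; rw [hcv] at this; simpa using this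
    have m2 : W2 = W ∨ W2 = V := by have := mem_cvu.2 hW2; rw [hcv] at this; simpa using this
    rcases m1 with rfl | rfl <;> rcases m2 with rfl | rfl
    · exact h1
    · rw [hn, inner_neg_left, h1, hz]
    · rw [hn, inner_neg_left, hz] at h1; linarith
    · exact h1
  obtain ⟨W0, V0, hW0, -⟩ := hY' U0 hU0
  have hm0 : Mid p S W0 U0 := ⟨hU0, hW0⟩
  set w := Y U0 • nn p S U0 + zz p S Y U0 W0 • nn p U0 W0 with hw
  have hwS : Perp p S w := ((nn_perp hU0).smul _).add (hm0.perp.smul _)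
  refine ⟨w, hwS, ?_⟩
  intro U1 hU1
  refine ((conn hb hS (by omega) (fun U => Cov p S U ∧ ⟪nn p S U, w⟫ = Y U ∧
    ∀ W, Cov p U W → ⟪nn p U W, w⟫ = zz p S Y U W) ?_ hU0 ?_ hU1).2.1).symm
  · rintro U W hm ⟨hU, h1, h2⟩
    have h3 := opp_of_zz hm h1 (h2 W hm.2)
    have hm' := opp_mid hm
    refine ⟨hm'.1, h3, hall _ _ hm'.1 ⟨W, hm'.2, ?_⟩⟩
    symm
    apply zz_lin hm' h3.symm
    rw [opp_opp hm, h1]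
  · refine ⟨hU0, ?_, hall _ _ hU0 ⟨W0, hW0, ?_⟩⟩
    · rw [hw, inner_add_right, inner_smul_right, inner_smul_right, nn_self hU0, hm0.orth]; ring
    · rw [hw, inner_add_right, inner_smul_right, inner_smul_right, nn_self hW0, hm0.orth']; ring

end
end LV


namespace LV
noncomputable section
open scoped RealInnerProductSpace
set_option linter.all false
set_option linter.unusedSectionVars false

variable {E : Type*} [NormedAddCommGroup E] [InnerProductSpace ℝ E] [FiniteDimensional ℝ E]
variable {ι : Type*} [Fintype ι] [DecidableEq ι] {p : ι → E}

lemma Mid.up {S U W X : Finset ι} (h : Mid p S W U) (hX : IsFace p X) (hr : LV.rk p X = LV.rk p S + 3)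
    (hWX : W ⊆ X) : Mid p U X W := by
  refine Mid.of_sub h.2 hX ?_ hWX
  have := h.1.2.2.2
  omega

lemma cov_mid {S U W X : Finset ι} (h : Cov p S U) (h2 : Mid p U X W) : Mid p S W U := ⟨h, h2.1⟩

lemma inner_opp2 (X U : Finset ι) (f : Finset ι → ℝ) (hX : IsFace p X) (hr : rk p X = rk p U + 2) :
    ∑ W ∈ cv p X U, f W = ∑ W ∈ cv p X U, f (opp p U X W) := by
  have key : ∀ W ∈ cv p X U, Mid p U X W := fun W hW => by
    rw [mem_cv] at hW
    exact Mid.of_sub hW.1 hX hr hW.2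
  refine Finset.sum_nbij' (fun W => opp p U X W) (fun W => opp p U X W) ?_ ?_ ?_ ?_ ?_
  · intro W hW
    have := opp_mid (key W hW)
    exact mem_cv.2 ⟨this.1, this.2.2.2.1⟩
  · intro W hW
    have := opp_mid (key W hW)
    exact mem_cv.2 ⟨this.1, this.2.2.2.1⟩
  · intro W hW; exact opp_opp (key W hW)
  · intro W hW; exact opp_opp (key W hW)
  · intro W hW; rw [opp_opp (key W hW)]

lemma fsum_symm2 {X S : Finset ι} {f g : Finset ι → Finset ι → ℝ} (hX : IsFace p X)
    (hr : rk p X = rk p S + 3)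
    (h : ∀ U W, Mid p S W U → W ⊆ X →
      f U W + f U (opp p U X W) = g U W + g U (opp p U X W)) : fsum p X S f = fsum p X S g := by
  unfold fsum
  refine Finset.sum_congr rfl fun U hU => ?_
  rw [mem_cv] at hU
  have hrU : rk p X = rk p U + 2 := by have := hU.1.2.2.2; omega
  have h1 := inner_opp2 X U (f U) hX hrU
  have h2 := inner_opp2 X U (g U) hX hrU
  have h3 : ∑ W ∈ cv p X U, (f U W + f U (opp p U X W)) =
      ∑ W ∈ cv p X U, (g U W + g U (opp p U X W)) := by
    refine Finset.sum_congr rfl fun W hW => ?_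
    rw [mem_cv] at hW
    exact h U W ⟨hU.1, hW.1⟩ hW.2
  rw [Finset.sum_add_distrib, Finset.sum_add_distrib] at h3
  linarith

/-- local rotation at `U` -/
lemma rotU {X S : Finset ι} (hX : IsFace p X) (hr : rk p X = rk p S + 3)
    (g : Finset ι → ℝ) (z w : Finset ι → E) :
    fsum p X S (fun U W => g U * (⟪nn p W X, z U⟫ * ⟪nn p U W, w U⟫)) =
    fsum p X S (fun U W => g U * (⟪nn p U W, z U⟫ * ⟪nn p W X, w U⟫)) := by
  refine fsum_symm2 hX hr fun U W h hW => ?_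
  have h1 := h.up hX hr hW
  have := pair_rot h1 (opp_mid h1) (opp_ne h1) (z U) (w U)
  rw [← mul_add, ← mul_add, this]

def dX (p : ι → E) (X S : Finset ι) (Y : Finset ι → ℝ) : ℝ :=
  fsum p X S (fun U W => zz p S Y U W * (HH p S U * zz p U (zz p S Y U) W X -
    ⟪nn p W X, bb p X - bb p S⟫ * Y U))

def WS (p : ι → E) (X S : Finset ι) (Y : Finset ι → ℝ) (w : Finset ι → E) : Prop :=
  ∀ U, Cov p S U → U ⊆ X → Perp p S (w U) ∧ w U ∈ KK p X ∧ ⟪nn p S U, w U⟫ = Y U ∧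
    ∀ W, Mid p U X W → ⟪nn p U W, w U⟫ = zz p S Y U W

lemma exists_WS {X S : Finset ι} (hX : IsFace p X) (hr : rk p X = rk p S + 3) (Y : Finset ι → ℝ) :
    ∃ w, WS p X S Y w := by
  have : ∀ U, ∃ w : E, Cov p S U → U ⊆ X → Perp p S w ∧ w ∈ KK p X ∧ ⟪nn p S U, w⟫ = Y U ∧
    ∀ W, Mid p U X W → ⟪nn p U W, w⟫ = zz p S Y U W := by
    intro U
    by_cases hU : Cov p S U ∧ U ⊆ X
    swap
    · exact ⟨0, fun h1 h2 => absurd ⟨h1, h2⟩ hU⟩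
    obtain ⟨hU, hUX⟩ := hU
    have hrU : rk p X = rk p U + 2 := by have := hU.2.2.2; omega
    have hss : U ⊂ X := hUX.ssubset_of_ne (by rintro rfl; omega)
    obtain ⟨W, hW, hWX⟩ := exists_cov hU.2.1 hX hss
    have hM : Mid p U X W := Mid.of_sub hW hX hrU hWX
    have hM' : Mid p S W U := ⟨hU, hW⟩
    have hpl : Perp p U (nn p W X) := hM.perp
    have o1 : ⟪nn p S U, nn p U W⟫ = 0 := hM'.orth
    have o2 : ⟪nn p U W, nn p W X⟫ = 0 := hM.orth
    have o3 : ⟪nn p S U, nn p W X⟫ = 0 := hpl.inner_KK (nn_mem hU)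
    have o1' : ⟪nn p U W, nn p S U⟫ = 0 := by rw [real_inner_comm]; exact o1
    refine ⟨Y U • nn p S U + zz p S Y U W • nn p U W + zz p U (zz p S Y U) W X • nn p W X,
      fun _ _ => ⟨?_, ?_, ?_, ?_⟩⟩
    · exact (((nn_perp hU).smul _).add (hM'.perp.smul _)).add ((hpl.mono hU.2.2.1).smul _)
    · refine add_mem (add_mem (Submodule.smul_mem _ _ (KK_mono hUX (nn_mem hU)))
        (Submodule.smul_mem _ _ (KK_mono hWX (nn_mem hW)))) (Submodule.smul_mem _ _ (nn_mem hM.2))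
    · simp only [inner_add_right, inner_smul_right, o1, o3, nn_self hU]; ring
    · intro W' hW'
      have e1 : ⟪nn p U W, Y U • nn p S U + zz p S Y U W • nn p U W +
          zz p U (zz p S Y U) W X • nn p W X⟫ = zz p S Y U W := by
        simp only [inner_add_right, inner_smul_right, o1', o2, nn_self hW]; ring
      by_cases he : W' = W
      · rw [he]; exact e1
      · rw [eq_opp hM hW' he]
        refine opp_of_zz hM e1 ?_
        have o3' := o3
        rw [real_inner_comm] at o3 
        have o2' := o2
        rw [real_inner_comm] at o2
        simp only [inner_add_right, inner_smul_right, o3, o2, nn_self hM.2]; ring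
  choose w hw using this
  exact ⟨w, hw⟩

section D
variable {X S : Finset ι} {Y : Finset ι → ℝ} {w : Finset ι → E}

lemma WS.l (hw : WS p X S Y w) (hX : IsFace p X) (hr : rk p X = rk p S + 3) {U W : Finset ι}
    (h : Mid p S W U) (hW : W ⊆ X) : ⟪nn p W X, w U⟫ = zz p U (zz p S Y U) W X := by
  have h1 := h.up hX hr hW
  have h2 := hw U h.1 (h.2.2.2.1.trans hW)
  exact (zz_lin h1 (h2.2.2.2 W h1).symm (h2.2.2.2 _ (opp_mid h1)).symm).symm

lemma WS.m (hw : WS p X S Y w) (hX : IsFace p X) (hr : rk p X = rk p S + 3) {U W : Finset ι}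
    (h : Mid p S W U) (hW : W ⊆ X) : ⟪nn p U W, w U⟫ = zz p S Y U W :=
  (hw U h.1 (h.2.2.2.1.trans hW)).2.2.2 W (h.up hX hr hW)

lemma WS.n (hw : WS p X S Y w) {U : Finset ι} (h : Cov p S U) (hW : U ⊆ X) :
    ⟪nn p S U, w U⟫ = Y U := (hw U h hW).2.2.1

lemma WS.v (hw : WS p X S Y w) (hX : IsFace p X) (hr : rk p X = rk p S + 3) {U W : Finset ι}
    (h : Mid p S W U) (hW : W ⊆ X) : ⟪nn p S (opp p S W U), w U⟫ = Y (opp p S W U) :=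
  opp_of_zz h (hw.n h.1 (h.2.2.2.1.trans hW)) (hw.m hX hr h hW)

lemma mm_eq {U W : Finset ι} (h : Mid p S W U) (x : E) :
    ⟪nn p U W, x⟫ = (⟪nn p S (opp p S W U), x⟫ - cc p S U (opp p S W U) * ⟪nn p S U, x⟫) /
      ss p S W U (opp p S W U) := by
  have := so_pos h
  rw [nn_opp h x]; field_simp; ring

/-- D in terms of `w` -/
lemma dX_eq (hw : WS p X S Y w) (hX : IsFace p X) (hr : rk p X = rk p S + 3) :
    dX p X S Y = fsum p X S (fun U W => ⟪nn p W X, w U⟫ *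
      ((HH p S U * Y (opp p S W U) - Y U * HH p S (opp p S W U)) / ss p S W U (opp p S W U))) := by
  have e1 : dX p X S Y = fsum p X S (fun U W => HH p S U * (⟪nn p W X, w U⟫ * ⟪nn p U W, w U⟫)) -
      fsum p X S (fun U W => Y U * (⟪nn p U W, w U⟫ * ⟪nn p W X, bb p X - bb p S⟫)) := by
    rw [← fsum_sub]
    refine fsum_congr' fun U W h hW => ?_
    rw [hw.l hX hr h hW, hw.m hX hr h hW]; ring
  rw [e1, ← rotU hX hr Y w (fun _ => bb p X - bb p S), ← fsum_sub]
  refine fsum_congr' fun U W h hW => ?_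
  have hV := opp_mid h
  rw [mm_eq h (w U), mm_eq h (bb p X - bb p S), hw.v hX hr h hW, hw.n h.1 (h.2.2.2.1.trans hW),
    HH_eq h.1 hX (h.2.2.2.1.trans hW), HH_eq hV.1 hX (hV.2.2.2.1.trans hW)]
  ring

/-- invariance under adding linear functions -/
lemma dX_shift (hw : WS p X S Y w) (hX : IsFace p X) (hr : rk p X = rk p S + 3) (w0 : E) :
    dX p X S Y = fsum p X S (fun U W => ⟪nn p W X, w U - w0⟫ *
      ((HH p S U * (Y (opp p S W U) - ⟪nn p S (opp p S W U), w0⟫) -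
        (Y U - ⟪nn p S U, w0⟫) * HH p S (opp p S W U)) / ss p S W U (opp p S W U))) := by
  set e := bb p X - bb p S with he
  have c1 : fsum p X S (fun U W => ⟪nn p W X, w0⟫ *
      ((HH p S U * Y (opp p S W U) - Y U * HH p S (opp p S W U)) / ss p S W U (opp p S W U))) =
      fsum p X S (fun U W => 0) := by
    refine fsum_symm fun U W h hW => ?_
    rw [opp_opp h, (cs_opp h).2]; ring
  have c2 : fsum p X S (fun U W => ⟪nn p W X, w U - w0⟫ *
      ((HH p S U * ⟪nn p S (opp p S W U), w0⟫ - ⟪nn p S U, w0⟫ * HH p S (opp p S W U)) /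
        ss p S W U (opp p S W U))) = fsum p X S (fun U W => 0) := by
    have a1 : fsum p X S (fun U W => ⟪nn p W X, w U - w0⟫ *
      ((HH p S U * ⟪nn p S (opp p S W U), w0⟫ - ⟪nn p S U, w0⟫ * HH p S (opp p S W U)) /
        ss p S W U (opp p S W U))) =
        fsum p X S (fun U W => HH p S U * (⟪nn p W X, w U - w0⟫ * ⟪nn p U W, w0⟫)) -
        fsum p X S (fun U W => ⟪nn p S U, w0⟫ * (⟪nn p W X, w U - w0⟫ * ⟪nn p U W, e⟫)) := by
      rw [← fsum_sub]
      refine fsum_congr' fun U W h hW => ?_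
      have hV := opp_mid h
      rw [mm_eq h w0, mm_eq h e, HH_eq h.1 hX (h.2.2.2.1.trans hW),
        HH_eq hV.1 hX (hV.2.2.2.1.trans hW)]
      ring
    rw [a1, rotU hX hr (HH p S) (fun U => w U - w0) (fun U => w0),
      rotU hX hr (fun U => ⟪nn p S U, w0⟫) (fun U => w U - w0) (fun U => e), ← fsum_sub]
    have a2 : fsum p X S (fun U W => HH p S U * (⟪nn p U W, w U - w0⟫ * ⟪nn p W X, w0⟫) -
          ⟪nn p S U, w0⟫ * (⟪nn p U W, w U - w0⟫ * ⟪nn p W X, e⟫)) =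
        fsum p X S (fun U W => (Y U - ⟪nn p S U, w0⟫) * (⟪nn p W X, w0⟫ * ⟪nn p U W, e⟫) -
          (Y U - ⟪nn p S U, w0⟫) * (⟪nn p U W, w0⟫ * ⟪nn p W X, e⟫)) := by
      refine fsum_symm fun U W h hW => ?_
      have hV := opp_mid h
      have o1 := mm_eq hV (w (opp p S W U) - w0)
      have o2 := mm_eq hV w0
      have o3 := mm_eq hV e
      have o4 := hw.v hX hr hV hW
      rw [opp_opp h] at o1 o2 o3 o4
      rw [o1, o2, o3, mm_eq h (w U - w0), mm_eq h w0, mm_eq h e]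
      simp only [inner_sub_right] 
      rw [o4, hw.v hX hr h hW, hw.n h.1 (h.2.2.2.1.trans hW), hw.n hV.1 (hV.2.2.2.1.trans hW),
        HH_eq h.1 hX (h.2.2.2.1.trans hW) |>.symm, HH_eq hV.1 hX (hV.2.2.2.1.trans hW) |>.symm,
        (cs_opp h).1, (cs_opp h).2, he]
      simp only [inner_sub_right]
      ring
    rw [a2, fsum_sub, rotU hX hr (fun U => Y U - ⟪nn p S U, w0⟫) (fun U => w0) (fun U => e),
      ← fsum_sub]
    exact fsum_congr' fun U W h hW => by ring
  have z0 : fsum p X S (fun U W => (0:ℝ)) = 0 := by simp [fsum]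
  have := dX_eq hw hX hr
  rw [this]
  have e1 : fsum p X S (fun U W => ⟪nn p W X, w U⟫ *
      ((HH p S U * Y (opp p S W U) - Y U * HH p S (opp p S W U)) / ss p S W U (opp p S W U))) =
    fsum p X S (fun U W => ⟪nn p W X, w U - w0⟫ *
      ((HH p S U * (Y (opp p S W U) - ⟪nn p S (opp p S W U), w0⟫) -
        (Y U - ⟪nn p S U, w0⟫) * HH p S (opp p S W U)) / ss p S W U (opp p S W U))) +
    (fsum p X S (fun U W => ⟪nn p W X, w0⟫ *
      ((HH p S U * Y (opp p S W U) - Y U * HH p S (opp p S W U)) / ss p S W U (opp p S W U))) +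
     fsum p X S (fun U W => ⟪nn p W X, w U - w0⟫ *
      ((HH p S U * ⟪nn p S (opp p S W U), w0⟫ - ⟪nn p S U, w0⟫ * HH p S (opp p S W U)) /
        ss p S W U (opp p S W U)))) := by
    rw [← fsum_add, ← fsum_add]
    refine fsum_congr' fun U W h hW => ?_
    simp only [inner_sub_right]; ring
  rw [e1, c1, c2, z0]; ring

end D
end
end LV


namespace LV
noncomputable section
open scoped RealInnerProductSpace
set_option linter.all false
set_option linter.unusedSectionVars false

variable {E : Type*} [NormedAddCommGroup E] [InnerProductSpace ℝ E] [FiniteDimensional ℝ E]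
variable {ι : Type*} [Fintype ι] [DecidableEq ι] {p : ι → E}

section D
variable {X S U0 : Finset ι} {Y : Finset ι → ℝ} {w : Finset ι → E}

/-- frame decomposition for a flag -/
lemma frame3 {U W : Finset ι} (h : Mid p S W U) (h2 : Mid p U X W) {x : E} (hx : Perp p S x)
    (hxX : x ∈ KK p X) :
    x = ⟪nn p S U, x⟫ • nn p S U + ⟪nn p U W, x⟫ • nn p U W + ⟪nn p W X, x⟫ • nn p W X := by
  have h1 := perp_proj h.1 hx
  have hUX : U ⊆ X := h.2.2.2.1.trans h2.2.2.2.1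
  have hm : x - ⟪nn p S U, x⟫ • nn p S U ∈ KK p X :=
    Submodule.sub_mem _ hxX (Submodule.smul_mem _ _ (KK_mono hUX (nn_mem h.1)))
  have h3 := frame_eq h2 h1 hm
  have o3 : ⟪nn p W X, nn p S U⟫ = 0 := by
    rw [real_inner_comm]; exact h2.perp.inner_KK (nn_mem h.1)
  simp only [inner_sub_right, inner_smul_right, o3, h.orth', mul_zero, sub_zero] at h3
  rw [sub_eq_iff_eq_add] at h3
  rw [add_assoc, add_comm]; exact h3

lemma WS.tau (hw : WS p X S Y w) (hX : IsFace p X) (hr : rk p X = rk p S + 3) {U W : Finset ι}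
    (h : Mid p S W U) (hW : W ⊆ X) :
    w U - w (opp p S W U) = ⟪nn p W X, w U - w (opp p S W U)⟫ • nn p W X := by
  have hV := opp_mid h
  have h1 := hw U h.1 (h.2.2.2.1.trans hW)
  have h2 := hw _ hV.1 (hV.2.2.2.1.trans hW)
  have h3 := frame3 h (h.up hX hr hW) (h1.1.sub h2.1) (Submodule.sub_mem _ h1.2.1 h2.2.1)
  have o4 := hw.v hX hr hV hW
  rw [opp_opp h] at o4
  have e1 : ⟪nn p S U, w U - w (opp p S W U)⟫ = 0 := by
    rw [inner_sub_right, o4, h1.2.2.1]; ring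
  have e2 : ⟪nn p U W, w U - w (opp p S W U)⟫ = 0 := by
    rw [mm_eq h, e1, inner_sub_right, hw.v hX hr h hW, h2.2.2.1]; simp
  rw [e1, e2, zero_smul, zero_smul, zero_add, zero_add] at h3
  exact h3

lemma l_zero {W : Finset ι} (h : Cov p W X) (h0 : Cov p S U0) (hs : U0 ⊆ W) :
    ⟪nn p W X, nn p S U0⟫ = 0 := by
  rw [real_inner_comm]
  exact (nn_perp h).inner_KK (KK_mono hs (nn_mem h0))

lemma l_pos {W : Finset ι} (h : Cov p W X) (h0 : Cov p S U0) (hSW : S ⊆ W) (hX : U0 ⊆ X)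
    (hs : ¬ U0 ⊆ W) : 0 < ⟪nn p W X, nn p S U0⟫ := by
  obtain ⟨i, hi, hiW⟩ := Finset.not_subset.1 hs
  have h1 := nn_pos h (hX hi) hiW
  have h2 := nn_eq h0 ((nn_perp h).mono hSW) hi
  have h3 := nn_pos h0 hi (fun h => hiW (hSW h))
  rw [real_inner_comm]
  rw [h2] at h1
  exact (mul_pos_iff_of_pos_left h3).1 h1

def dl (p : ι → E) (X S U0 U W : Finset ι) : ℝ :=
  (ss p S W U (opp p S W U) * ⟪nn p W X, nn p S U0⟫)⁻¹

lemma dl_opp {U W : Finset ι} (h : Mid p S W U) : dl p X S U0 (opp p S W U) W = dl p X S U0 U W := by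
  unfold dl; rw [opp_opp h, (cs_opp h).2]

/-- lemma four -/
lemma lemma_four (hX : IsFace p X) (hr : rk p X = rk p S + 3) (h0 : Cov p S U0) (h0X : U0 ⊆ X)
    {U : Finset ι} (hU : Cov p S U) (hUX : U ⊆ X) (hno : ∀ W ∈ cv p X U, ¬ U0 ⊆ W) :
    ∃ ρ σ : ℝ, 0 < σ ∧ ∀ x : E, ∑ W ∈ cv p X U, dl p X S U0 U W * ⟪nn p S (opp p S W U), x⟫ =
      ρ * ⟪nn p S U, x⟫ + σ * ⟪nn p S U0, x⟫ := by
  have hrU : rk p X = rk p U + 2 := by have := hU.2.2.2; omega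
  have hss : U ⊂ X := hUX.ssubset_of_ne (by rintro rfl; omega)
  obtain ⟨W, hW, hWX⟩ := exists_cov hU.2.1 hX hss
  have hM : Mid p U X W := Mid.of_sub hW hX hrU hWX
  have hMo := opp_mid hM
  have hne := opp_ne hM
  set W' := opp p U X W with hW'
  have hcv : cv p X U = {W, W'} := by
    ext T
    rw [mem_cv, Finset.mem_insert, Finset.mem_singleton]
    constructor
    · rintro ⟨a, b⟩
      by_cases hT : T = W
      · exact Or.inl hT
      · exact Or.inr (eq_opp hM (Mid.of_sub a hX hrU b) hT)
    · rintro (rfl | rfl)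
      · exact ⟨hW, hWX⟩
      · exact ⟨hMo.1, hMo.2.2.2.1⟩
  have f1 : Mid p S W U := ⟨hU, hW⟩
  have f2 : Mid p S W' U := ⟨hU, hMo.1⟩
  have b1 : 0 < ⟪nn p W X, nn p S U0⟫ := l_pos hM.2 h0 (hU.2.2.1.trans hW.2.2.1) h0X
    (hno W (by rw [hcv]; simp))
  have b2 : 0 < ⟪nn p W' X, nn p S U0⟫ := l_pos hMo.2 h0 (hU.2.2.1.trans hMo.1.2.2.1) h0X
    (hno W' (by rw [hcv]; simp))
  have s1 := so_pos f1
  have s2 := so_pos f2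
  have sg := ss_pos hM hMo hne
  have hg := frame3 f1 hM (nn_perp h0) (KK_mono h0X (nn_mem h0))
  set n := nn p S U
  set g := nn p S U0
  set b := ⟪nn p W X, g⟫ with hb
  set b' := ⟪nn p W' X, g⟫ with hb'
  set a := ⟪nn p U W, g⟫ with ha
  have e1 := pair_n hM hMo hne
  have e2 := pair_w hM hMo hne
  set C := cc p U W W'
  set G := ss p U X W W'
  have e3 : b' = G * a - C * b := by
    rw [hb', e2, inner_sub_left, inner_smul_left, inner_smul_left]; rfl
  refine ⟨cc p S U (opp p S W U) * (ss p S W U (opp p S W U) * b)⁻¹ +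
    cc p S U (opp p S W' U) * (ss p S W' U (opp p S W' U) * b')⁻¹ - G / (b * b') * ⟪n, g⟫,
    G / (b * b'), by positivity, fun x => ?_⟩
  rw [hcv, Finset.sum_pair hne]
  unfold dl
  rw [nn_opp f1, nn_opp f2]
  have e4 : ⟪nn p U W', x⟫ = C * ⟪nn p U W, x⟫ + G * ⟪nn p W X, x⟫ := by
    rw [e1, inner_add_left, inner_smul_left, inner_smul_left]; rfl
  have e5 : ⟪g, x⟫ = ⟪n, g⟫ * ⟪n, x⟫ + a * ⟪nn p U W, x⟫ + b * ⟪nn p W X, x⟫ := by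
    conv_lhs => rw [hg]
    rw [inner_add_left, inner_add_left, inner_smul_left, inner_smul_left, inner_smul_left]; rfl
  rw [e5, e4]
  change (_ * b)⁻¹ * (_ * ⟪n, x⟫ + _) + (_ * b')⁻¹ * (_ * ⟪n, x⟫ + _) = _
  have e6 : G * a = b' + C * b := by linarith
  have b1' := b1.ne'
  have b2' := b2.ne'
  generalize ⟪nn p U W, x⟫ = μ at *
  generalize ⟪nn p W X, x⟫ = lam at *
  generalize ⟪n, x⟫ = ν at *
  generalize ⟪n, g⟫ = κ at *
  generalize ss p S W U (opp p S W U) = t1 at *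
  generalize ss p S W' U (opp p S W' U) = t2 at *
  generalize cc p S U (opp p S W U) = k1 at *
  generalize cc p S U (opp p S W' U) = k2 at *
  clear_value a b b' C G
  have i1 : (t1 * b)⁻¹ * (k1 * ν + t1 * μ) = k1 * (t1 * b)⁻¹ * ν + b⁻¹ * μ := by
    field_simp
  have i2 : (t2 * b')⁻¹ * (k2 * ν + t2 * (C * μ + G * lam)) =
      k2 * (t2 * b')⁻¹ * ν + b'⁻¹ * (C * μ + G * lam) := by
    field_simp
  rw [i1, i2]
  have i3 : G / (b * b') * (κ * ν + a * μ + b * lam) =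
      G / (b * b') * κ * ν + (b⁻¹ + C * b'⁻¹) * μ + G * b'⁻¹ * lam := by
    field_simp
    linear_combination μ * e6
  rw [i3]; ring

theorem dX_main (hS : IsFace p S) (hX : IsFace p X) (hSX : S ⊆ X) (hr : rk p X = rk p S + 3)
    (Y : Finset ι → ℝ) :
    0 ≤ dX p X S Y ∧ (dX p X S Y = 0 → ∃ w : E, Perp p S w ∧
      ∀ U, Cov p S U → U ⊆ X → Y U = ⟪nn p S U, w⟫) := by
  obtain ⟨w, hw⟩ := exists_WS hX hr Y
  have hss : S ⊂ X := hSX.ssubset_of_ne (by rintro rfl; omega)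
  obtain ⟨U0, h0, h0X⟩ := exists_cov hS hX hss
  set w0 := w U0 with hw0
  set y : Finset ι → ℝ := fun U => Y U - ⟪nn p S U, w0⟫ with hy
  set t : Finset ι → ℝ := fun U => ⟪nn p S U0, w U - w0⟫ with ht
  set f : Finset ι → ℝ := fun U => ⟪nn p S U, bb p X - bb p U0⟫ with hf
  set δ := dl p X S U0 with hδ
  -- neighbours
  have hnb : ∀ U W, Mid p S W U → W ⊆ X → U0 ⊆ W → y U = 0 ∧ t U = 0 := by
    intro U W h hW hs
    have h1 := h.up hX hr hW
    have h0W : Mid p S W U0 := Mid.of_sub h0 h.2.2.1 h.rk hs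
    have hd : ∃ τ : ℝ, w U - w0 = τ • nn p W X := by
      by_cases he : U = U0
      · exact ⟨0, by rw [he]; simp [hw0]⟩
      · have := hw.tau hX hr h0W hW
        rw [← eq_opp h0W h he] at this
        refine ⟨-⟪nn p W X, w U0 - w U⟫, ?_⟩
        rw [neg_smul, ← this]; simp [hw0]
    obtain ⟨τ, hτ⟩ := hd
    constructor
    · have : ⟪nn p S U, w U - w0⟫ = 0 := by
        rw [hτ, inner_smul_right, real_inner_comm, l_zero h1.2 h.1 h.2.2.2.1]; simp
      simp only [hy]
      rw [inner_sub_right, hw.n h.1 (h.2.2.2.1.trans hW)] at this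
      exact this
    · simp only [ht]
      rw [hτ, inner_smul_right, real_inner_comm, l_zero h1.2 h0 hs]; simp
  have hδ0 : ∀ U W, Mid p S W U → W ⊆ X → U0 ⊆ W → δ U W = 0 := by
    intro U W h hW hs
    simp only [hδ, dl]
    rw [l_zero (h.up hX hr hW).2 h0 hs]; simp
  have hδ1 : ∀ U W, Mid p S W U → W ⊆ X → ¬ U0 ⊆ W → 0 < δ U W := by
    intro U W h hW hs
    simp only [hδ, dl]
    have := l_pos (h.up hX hr hW).2 h0 (h.1.2.2.1.trans h.2.2.2.1) h0X hs
    have := so_pos h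
    positivity
  have hfpos : ∀ U, Cov p S U → U ⊆ X → U ≠ U0 → 0 < f U := by
    intro U hU hUX hne
    have h1 := nn_lt hU h0.2.1 h0.2.2.1 (cov_not_sub hU h0 hne)
    have h2 := nn_tight hU (z := bb p X) (fun i hi => bb_eq hX (hUX hi))
    simp only [hf]
    rw [inner_sub_right]; linarith
  -- step 4
  have step4 : dX p X S Y = fsum p X S (fun U W => δ U W *
      (HH p S U * y (opp p S W U) - y U * HH p S (opp p S W U)) * t U) := by
    rw [dX_shift hw hX hr w0]
    refine fsum_symm fun U W h hW => ?_
    have hV := opp_mid h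
    rw [opp_opp h, (cs_opp h).2, hδ, dl_opp h]
    have htau := hw.tau hX hr h hW
    set V := opp p S W U with hVdef
    change ⟪nn p W X, w U - w0⟫ * ((HH p S U * y V - y U * HH p S V) / ss p S W U V) +
      ⟪nn p W X, w V - w0⟫ * ((HH p S V * y U - y V * HH p S U) / ss p S W U V) = _
    by_cases hs : U0 ⊆ W
    · rw [(hnb U W h hW hs).1, (hnb V W hV hW hs).1]; ring
    · have hl := l_pos (h.up hX hr hW).2 h0 (h.1.2.2.1.trans h.2.2.2.1) h0X hs
      have hs' := so_pos h
      rw [← hVdef] at hs'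
      have e1 : t U - t V = ⟪nn p W X, w U - w V⟫ * ⟪nn p W X, nn p S U0⟫ := by
        simp only [ht]
        rw [← inner_sub_right, show w U - w0 - (w V - w0) = w U - w V by abel]
        conv_lhs => rw [htau]
        rw [inner_smul_right, real_inner_comm (nn p S U0)]
      have e2 : ⟪nn p W X, w U - w V⟫ = ⟪nn p W X, w U - w0⟫ - ⟪nn p W X, w V - w0⟫ := by
        rw [← inner_sub_right]; congr 1; abel
      have e3 : dl p X S U0 U W = (ss p S W U V * ⟪nn p W X, nn p S U0⟫)⁻¹ := rfl
      rw [e2] at e1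
      have e4 : t U = t V + (⟪nn p W X, w U - w0⟫ - ⟪nn p W X, w V - w0⟫) *
        ⟪nn p W X, nn p S U0⟫ := by linarith
      rw [e3, e4]
      field_simp
      ring
  have ysum : ∀ U, Cov p S U → U ⊆ X → y U = ⟪nn p S U, w U - w0⟫ := by
    intro U h hW
    simp only [hy]; rw [inner_sub_right, hw.n h hW]
  have yVsum : ∀ U W, Mid p S W U → W ⊆ X → y (opp p S W U) = ⟪nn p S (opp p S W U), w U - w0⟫ := by
    intro U W h hW
    simp only [hy]; rw [inner_sub_right, hw.v hX hr h hW]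
  have H0 := HH_pos h0
  -- step 5
  have step5 : ∀ U ∈ cv p X S, 0 ≤ (∑ W ∈ cv p X U, δ U W *
      (HH p S U * y (opp p S W U) - y U * HH p S (opp p S W U)) * t U) +
      HH p S U0 * ∑ W ∈ cv p X U, δ U W * (y U * y (opp p S W U) -
        y U ^ 2 * f (opp p S W U) / f U) := by
    intro U hUm
    have hUm' := mem_cv.1 hUm
    obtain ⟨hU, hUX⟩ := hUm'
    by_cases hno : ∃ W ∈ cv p X U, U0 ⊆ W
    · obtain ⟨W, hW, hs⟩ := hno
      rw [mem_cv] at hW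
      have := hnb U W ⟨hU, hW.1⟩ hW.2 hs
      simp [this.1, this.2]
    · push Not at hno
      obtain ⟨ρ, σ, hσ, hx⟩ := lemma_four hX hr h0 h0X hU hUX hno
      have ra : ∑ W ∈ cv p X U, δ U W * y (opp p S W U) = ρ * y U + σ * t U := by
        have := hx (w U - w0)
        rw [← ysum U hU hUX] at this
        simp only [ht]
        rw [← this]
        refine Finset.sum_congr rfl fun W hW => ?_
        rw [mem_cv] at hW
        rw [yVsum U W ⟨hU, hW.1⟩ hW.2]
      have rc : ∑ W ∈ cv p X U, δ U W * HH p S (opp p S W U) = ρ * HH p S U + σ * HH p S U0 := by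
        have := hx (bb p X - bb p S)
        rw [HH_eq hU hX hUX, HH_eq h0 hX h0X] at this
        rw [← this]
        refine Finset.sum_congr rfl fun W hW => ?_
        rw [mem_cv] at hW
        have hV := opp_mid (p := p) (S := S) (U := U) (W := W) ⟨hU, hW.1⟩
        rw [HH_eq hV.1 hX (hV.2.2.2.1.trans hW.2)]
      have rf : ∑ W ∈ cv p X U, δ U W * f (opp p S W U) = ρ * f U := by
        have := hx (bb p X - bb p U0)
        have h3 : ⟪nn p S U0, bb p X - bb p U0⟫ = 0 :=
          (perp_bb h0.2.1 hX h0X).inner_KK (nn_mem h0)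
        rw [h3, mul_zero, add_zero] at this
        exact this
      have hne : U ≠ U0 := by
        rintro rfl
        have hss : U ⊂ X := hUX.ssubset_of_ne (by rintro rfl; have := hU.2.2.2; omega)
        obtain ⟨W, hW, hWX⟩ := exists_cov hU.2.1 hX hss
        exact hno W (mem_cv.2 ⟨hW, hWX⟩) hW.2.2.1
      have hfU := (hfpos U hU hUX hne).ne'
      have s1 : (∑ W ∈ cv p X U, δ U W *
          (HH p S U * y (opp p S W U) - y U * HH p S (opp p S W U)) * t U) =
          t U * (HH p S U * ∑ W ∈ cv p X U, δ U W * y (opp p S W U) -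
            y U * ∑ W ∈ cv p X U, δ U W * HH p S (opp p S W U)) := by
        rw [Finset.mul_sum, Finset.mul_sum, ← Finset.sum_sub_distrib, Finset.mul_sum]
        exact Finset.sum_congr rfl fun W hW => by ring
      have s2 : ∑ W ∈ cv p X U, δ U W * (y U * y (opp p S W U) -
          y U ^ 2 * f (opp p S W U) / f U) = y U * ∑ W ∈ cv p X U, δ U W * y (opp p S W U) -
          y U ^ 2 / f U * ∑ W ∈ cv p X U, δ U W * f (opp p S W U) := by
        rw [Finset.mul_sum, Finset.mul_sum, ← Finset.sum_sub_distrib]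
        exact Finset.sum_congr rfl fun W hW => by ring
      rw [s1, s2, ra, rc, rf]
      have hH := HH_pos hU
      have : 0 ≤ σ * HH p S U * t U ^ 2 := by positivity
      have e : y U ^ 2 / f U * (ρ * f U) = ρ * y U ^ 2 := by field_simp
      rw [e]
      nlinarith
  have step6 : fsum p X S (fun U W => δ U W * (y U * y (opp p S W U) -
        y U ^ 2 * f (opp p S W U) / f U)) = fsum p X S (fun U W => (-(1/2)) * (δ U W *
        (f U * f (opp p S W U) * (y U / f U - y (opp p S W U) / f (opp p S W U)) ^ 2))) := by
    refine fsum_symm fun U W h hW => ?_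
    have hV := opp_mid h
    rw [opp_opp h, hδ, dl_opp h, ← hδ]
    by_cases hs : U0 ⊆ W
    · rw [hδ0 U W h hW hs]; ring
    · have h1 := (hfpos U h.1 (h.2.2.2.1.trans hW) (by rintro rfl; exact hs h.2.2.2.1)).ne'
      have h2 := (hfpos _ hV.1 (hV.2.2.2.1.trans hW) (by
        intro h; rw [h] at hV; exact hs hV.2.2.2.1)).ne'
      field_simp
      ring
  rw [fsum_mul] at step6
  set Q := fsum p X S (fun U W => (δ U W *
        (f U * f (opp p S W U) * (y U / f U - y (opp p S W U) / f (opp p S W U)) ^ 2))) with hQ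
  have hQt : ∀ U W, Mid p S W U → W ⊆ X → 0 ≤ (δ U W *
        (f U * f (opp p S W U) * (y U / f U - y (opp p S W U) / f (opp p S W U)) ^ 2)) := by
    intro U W h hW
    have hV := opp_mid h
    by_cases hs : U0 ⊆ W
    · rw [hδ0 U W h hW hs]; simp
    · have h1 := (hfpos U h.1 (h.2.2.2.1.trans hW) (by rintro rfl; exact hs h.2.2.2.1))
      have h2 := (hfpos _ hV.1 (hV.2.2.2.1.trans hW) (by
        intro h; rw [h] at hV; exact hs hV.2.2.2.1))
      have := hδ1 U W h hW hs
      positivity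
  have hQ0 : 0 ≤ Q := fsum_nonneg hQt
  have hfin : HH p S U0 * (1/2 * Q) ≤ dX p X S Y := by
    have := Finset.sum_nonneg step5
    rw [Finset.sum_add_distrib, ← Finset.mul_sum] at this
    have e1 := step4
    unfold fsum at e1 step6
    rw [step6] at this
    rw [e1]; linarith
  refine ⟨le_trans (by positivity) hfin, fun hz => ?_⟩
  have hQz : Q = 0 := by
    rw [hz] at hfin
    nlinarith
  have hall := fsum_eq_zero hQt hQz
  refine ⟨w0, (hw U0 h0 h0X).1, fun U1 h1 h1X => ?_⟩
  have := conn_X hS hX hSX (fun U => y U ≠ 0) ?_ h0 h0X (by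
      simp only [hy, not_not]
      rw [hw0, hw.n h0 h0X]; ring) h1 h1X
  · simp only [hy, not_not] at this
    linarith
  · intro U W h hW hyU
    have hs : ¬ U0 ⊆ W := fun hs => hyU (hnb U W h hW hs).1
    have hV := opp_mid h
    have h1 := (hfpos U h.1 (h.2.2.2.1.trans hW) (by rintro rfl; exact hs h.2.2.2.1))
    have h2 := (hfpos _ hV.1 (hV.2.2.2.1.trans hW) (by
        intro h; rw [h] at hV; exact hs hV.2.2.2.1))
    have h3 := hδ1 U W h hW hs
    have h4 := hall U W h hW
    intro hyV
    rw [hyV, zero_div, sub_zero] at h4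
    have : 0 < (δ U W * (f U * f (opp p S W U) * (y U / f U) ^ 2)) := by
      have : y U / f U ≠ 0 := div_ne_zero hyU h1.ne'
      positivity
    linarith

end D
end
end LV


namespace LV
noncomputable section
open scoped RealInnerProductSpace
set_option linter.all false
set_option linter.unusedSectionVars false

lemma spec {F : Type*} [NormedAddCommGroup F] [InnerProductSpace ℝ F] [FiniteDimensional ℝ F]
    (T : F →ₗ[ℝ] F) (hT : T.IsSymmetric) (h : F) (ha : ∀ y, ⟪T y, y⟫ ≤ ⟪T y, T y⟫)
    (hb : ∀ y, ⟪T y, y⟫ ≤ ⟪y, y⟫) (hc : ∀ y, T y = y → ∃ c : ℝ, y = c • h) (y : F)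
    (hy : ⟪y, h⟫ = 0) : ⟪T y, y⟫ ≤ 0 := by
  set e := hT.eigenvectorBasis rfl with he
  have h1 : ⟪T y, y⟫ = ∑ i, hT.eigenvalues rfl i * ⟪e i, y⟫ ^ 2 := by
    rw [← e.sum_inner_mul_inner (T y) y]
    refine Finset.sum_congr rfl fun i _ => ?_
    rw [hT y (e i), he, hT.apply_eigenvectorBasis, inner_smul_right, real_inner_comm]
    simp; ring
  rw [h1]
  refine Finset.sum_nonpos fun i _ => ?_
  by_cases hl : hT.eigenvalues rfl i ≤ 0
  · exact mul_nonpos_of_nonpos_of_nonneg hl (sq_nonneg _)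
  push Not at hl
  have e1 : ⟪e i, e i⟫ = (1:ℝ) := by
    rw [real_inner_self_eq_norm_sq, e.norm_eq_one]; simp
  have e2 : T (e i) = hT.eigenvalues rfl i • e i := by
    rw [he, hT.apply_eigenvectorBasis]; simp
  have a1 := ha (e i)
  have a2 := hb (e i)
  rw [e2, inner_smul_left, e1] at a2
  rw [e2, inner_smul_left, inner_smul_left, inner_smul_right, e1] at a1
  simp at a1 a2
  have : hT.eigenvalues rfl i = 1 := by nlinarith
  rw [this, one_smul] at e2
  obtain ⟨c, hc⟩ := hc _ e2
  rw [hc, inner_smul_left, real_inner_comm, hy]; simp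

variable {E : Type*} [NormedAddCommGroup E] [InnerProductSpace ℝ E] [FiniteDimensional ℝ E]
variable {ι : Type*} [Fintype ι] [DecidableEq ι] {p : ι → E} {S : Finset ι}

open Classical in
def FF (p : ι → E) (S : Finset ι) : Finset (Finset ι) :=
  Finset.univ.filter (fun X => IsFace p X ∧ S ⊆ X ∧ rk p X = rk p S + 3)

lemma mem_FF {X : Finset ι} : X ∈ FF p S ↔ IsFace p X ∧ S ⊆ X ∧ rk p X = rk p S + 3 := by
  simp [FF]

lemma FF_swap (T : Finset ι → Finset ι → Finset ι → ℝ) :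
    ∑ X ∈ FF p S, ∑ U ∈ cv p X S, ∑ W ∈ cv p X U, T U W X =
    ∑ U ∈ cv p Finset.univ S, ∑ W ∈ cv p Finset.univ U, ∑ X ∈ cv p Finset.univ W, T U W X := by
  rw [Finset.sum_comm' (t' := cv p Finset.univ S)
    (s' := fun U => (FF p S).filter (fun X => U ⊆ X))]
  · refine Finset.sum_congr rfl fun U hU => ?_
    rw [mem_cvu] at hU
    refine Finset.sum_comm' fun X W => ?_
    rw [Finset.mem_filter, mem_FF, mem_cv, mem_cvu, mem_cvu]
    constructor
    · rintro ⟨⟨⟨hX, h1, h2⟩, h3⟩, h4, h5⟩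
      have := hU.2.2.2
      have := h4.2.2.2
      exact ⟨⟨h4.2.1, hX, h5, by omega⟩, h4⟩
    · rintro ⟨h1, h2⟩
      have a1 := hU.2.2.2
      have a2 := h2.2.2.2
      have a3 := h1.2.2.2
      exact ⟨⟨⟨h1.2.1, (hU.2.2.1.trans h2.2.2.1).trans h1.2.2.1, by omega⟩,
        h2.2.2.1.trans h1.2.2.1⟩, h2, h1.2.2.1⟩
  · intro X U
    rw [Finset.mem_filter, mem_cv, mem_cvu]
    tauto

section step
variable {m : ℕ} (hb : Bdd p) (hS : IsFace p S) (hr : rk p S + (m + 3) = Module.finrank ℝ E)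
include hb hS hr

lemma ident (Y : Finset ι → ℝ) :
    ∑ U ∈ cv p Finset.univ S, HH p S U * Mb p (vv p m) U (zz p S Y U) (zz p S Y U) -
      ((m : ℝ) + 1) * Mb p (vv p (m+1)) S Y Y = ∑ X ∈ FF p S, vv p m X * dX p X S Y := by
  have h1 : ∑ X ∈ FF p S, vv p m X * dX p X S Y =
      ∑ X ∈ FF p S, ∑ U ∈ cv p X S, ∑ W ∈ cv p X U, vv p m X *
        (zz p S Y U W * (HH p S U * zz p U (zz p S Y U) W X -
    ⟪nn p W X, bb p X - bb p S⟫ * Y U)) := by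
    refine Finset.sum_congr rfl fun X hX => ?_
    unfold dX fsum
    rw [Finset.mul_sum]
    exact Finset.sum_congr rfl fun U hU => by rw [Finset.mul_sum]
  rw [h1, FF_swap]
  unfold Mb mY
  rw [Finset.mul_sum, ← Finset.sum_sub_distrib]
  refine Finset.sum_congr rfl fun U hU => ?_
  rw [Finset.mul_sum, Finset.mul_sum, Finset.mul_sum, ← Finset.sum_sub_distrib]
  refine Finset.sum_congr rfl fun W hW => ?_
  rw [mem_cvu] at hU hW
  have hrW : rk p W + (m + 1) = Module.finrank ℝ E := by
    have := hU.2.2.2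
    have := hW.2.2.2
    omega
  have h2 : ((m:ℝ) + 1) * vv p (m+1) W = ∑ X ∈ cv p Finset.univ W,
      vv p m X * ⟪nn p W X, bb p X - bb p S⟫ := by
    have := minkowski hb m hW.2.1 hrW (bb p W - bb p S)
    rw [vv_rec, ← add_zero (∑ U ∈ cv p Finset.univ W, HH p W U * vv p m U), ← this,
      ← Finset.sum_add_distrib]
    refine Finset.sum_congr rfl fun X hX => ?_
    unfold HH
    simp only [inner_sub_right]; ring
  rw [show ((m:ℝ) + 1) * (Y U * (vv p (m+1) W * zz p S Y U W)) =
    Y U * zz p S Y U W * (((m:ℝ) + 1) * vv p (m+1) W) by ring, h2, Finset.mul_sum, Finset.mul_sum,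
    Finset.mul_sum, ← Finset.sum_sub_distrib]
  exact Finset.sum_congr rfl fun X hX => by ring

lemma FF_nonneg (Y : Finset ι → ℝ) : ∀ X ∈ FF p S, 0 ≤ vv p m X * dX p X S Y := by
  intro X hX
  rw [mem_FF] at hX
  have := vv_pos hb m hX.1 (by omega)
  exact mul_nonneg this.le (dX_main hS hX.1 hX.2.1 hX.2.2 Y).1


lemma stepA_quad (hA : ∀ U, Cov p S U → ClaimA p m U) (Y : Finset ι → ℝ) :
    Mb p (vv p (m+1)) S Y Y ≤ ∑ U ∈ cv p Finset.univ S,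
      mY p (vv p (m+1)) S Y U ^ 2 / (((m:ℝ) + 2) * vv p (m+2) U / HH p S U) := by
  have hid := ident hb hS hr Y
  have hnn := Finset.sum_nonneg (FF_nonneg hb hS hr Y)
  have hU : ∀ U ∈ cv p Finset.univ S,
      HH p S U * Mb p (vv p m) U (zz p S Y U) (zz p S Y U) ≤ ((m:ℝ) + 1) *
      (mY p (vv p (m+1)) S Y U ^ 2 / (((m:ℝ) + 2) * vv p (m+2) U / HH p S U)) := by
    intro U hU
    rw [mem_cvu] at hU
    have hrU : rk p U + (m + 2) = Module.finrank ℝ E := by have := hU.2.2.2; omega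
    have hH := HH_pos hU
    have hv := vv_pos hb (m+2) hU.2.1 hrU
    set Z := zz p S Y U with hZ
    have hL : LL p m U Z = mY p (vv p (m+1)) S Y U := rfl
    have hLH := LL_HH (p := p) m U
    set L := LL p m U Z
    rw [← hL]
    set K := ((m:ℝ) + 2) * vv p (m+2) U with hK
    have hKp : 0 < K := by positivity
    have h1 := hA U hU (fun W => Z W + (-(L / K)) * HH p U W) (by
      rw [LL_add, hLH]
      change L + _ = 0
      field_simp; ring)
    rw [Mb_quad, Mb_HH hb hrU, Mb_HH hb hrU, hLH] at h1
    change Mb p (vv p m) U Z Z + 2 * -(L / K) * (((m:ℝ) + 1) * L) +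
      (-(L / K)) ^ 2 * (((m:ℝ) + 1) * K) ≤ 0 at h1
    have h2 : Mb p (vv p m) U Z Z ≤ ((m:ℝ) + 1) * (L ^ 2 / K) := by
      have : 2 * -(L / K) * (((m:ℝ) + 1) * L) + (-(L / K)) ^ 2 * (((m:ℝ) + 1) * K) =
        - (((m:ℝ) + 1) * (L ^ 2 / K)) := by field_simp; ring
      linarith
    calc HH p S U * Mb p (vv p m) U Z Z ≤ HH p S U * (((m:ℝ) + 1) * (L ^ 2 / K)) :=
          mul_le_mul_of_nonneg_left h2 hH.le
      _ = _ := by field_simp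
  have hs := Finset.sum_le_sum hU
  rw [← Finset.mul_sum] at hs
  have hm : (0:ℝ) < (m:ℝ) + 1 := by positivity
  exact le_of_mul_le_mul_left (by linarith) hm

lemma stepA (hA : ∀ U, Cov p S U → ClaimA p m U) : ClaimA p (m+1) S := by
  have hr' : rk p S + ((m + 1) + 2) = Module.finrank ℝ E := by omega
  have hquad := stepA_quad hb hS hr hA
  set B : Finset ι → ℝ := fun U => ((m:ℝ) + 2) * vv p (m+2) U / HH p S U with hB
  have hBp : ∀ U, Cov p S U → 0 < B U := by
    intro U hU
    have hrU : rk p U + (m + 2) = Module.finrank ℝ E := by have := hU.2.2.2; omega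
    have hH := HH_pos hU
    have hv := vv_pos hb (m+2) hU.2.1 hrU
    simp only [hB]; positivity
  have hmH : ∀ U, Cov p S U → mY p (vv p (m+1)) S (HH p S) U = B U * HH p S U := by
    intro U hU
    rw [mY_HH hb hr' hU]
    have hH := HH_pos hU
    simp only [hB]; push_cast; field_simp; ring
  have hg := fun Y => ground (g := vv p (m+1)) (S := S) (F := HH p S)
    (fun U hU => (HH_pos hU).ne') Y
  have hterm : ∀ (Y : Finset ι → ℝ) U W, Mid p S W U → W ⊆ Finset.univ → 0 ≤ vv p (m+1) W *
      (HH p S U * HH p S (opp p S W U) / ss p S W U (opp p S W U) *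
        (Y U / HH p S U - Y (opp p S W U) / HH p S (opp p S W U)) ^ 2) := by
    intro Y U W h _
    have h1 := HH_pos h.1
    have h2 := HH_pos (opp_mid h).1
    have h3 := so_pos h
    have h4 := vv_pos hb (m+1) h.2.2.1 (by
      have := h.1.2.2.2
      have := h.2.2.2.2
      omega)
    positivity
  have hsum : ∀ Y : Finset ι → ℝ, ∑ U ∈ cv p Finset.univ S, (Y U / HH p S U) ^ 2 *
      (HH p S U * mY p (vv p (m+1)) S (HH p S) U) = ∑ U ∈ cv p Finset.univ S, B U * Y U ^ 2 := by
    intro Y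
    refine Finset.sum_congr rfl fun U hU => ?_
    rw [mem_cvu] at hU
    have h1 := HH_pos hU
    rw [hmH U hU]; field_simp
  -- the operator
  let κ := {U // U ∈ cv p Finset.univ S}
  let Yv : EuclideanSpace ℝ κ → Finset ι → ℝ := fun v U =>
    if h : U ∈ cv p Finset.univ S then v ⟨U, h⟩ / √(B U) else 0
  have hYadd : ∀ v v', Yv (v + v') = fun U => Yv v U + Yv v' U := by
    intro v v'; funext U
    simp only [Yv]; split_ifs with h
    · rw [PiLp.add_apply]; ring
    · ring
  have hYsmul : ∀ (c : ℝ) v, Yv (c • v) = fun U => c * Yv v U := by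
    intro v v'; funext U
    simp only [Yv]; split_ifs with h
    · rw [PiLp.smul_apply, smul_eq_mul]; ring
    · ring
  have hYin : ∀ v (U : κ), Yv v U.1 = v U / √(B U.1) := by
    intro v U; simp only [Yv]; rw [dif_pos U.2]
  have hsq : ∀ U : κ, 0 < √(B U.1) := fun U => Real.sqrt_pos.2 (hBp _ (mem_cvu.1 U.2))
  have hsq2 : ∀ U : κ, √(B U.1) ^ 2 = B U.1 := fun U => Real.sq_sqrt (hBp _ (mem_cvu.1 U.2)).le
  let T : EuclideanSpace ℝ κ →ₗ[ℝ] EuclideanSpace ℝ κ :=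
    { toFun := fun v => WithLp.toLp 2 (fun U : κ => mY p (vv p (m+1)) S (Yv v) U.1 / √(B U.1))
      map_add' := by
        intro v v'; ext U
        simp only [PiLp.add_apply]
        rw [hYadd, mY_add]; ring
      map_smul' := by
        intro c v; ext U
        simp only [PiLp.smul_apply, smul_eq_mul, RingHom.id_apply]
        rw [hYsmul, mY_smul]; ring }
  have hTa : ∀ v (U : κ), T v U = mY p (vv p (m+1)) S (Yv v) U.1 / √(B U.1) := fun v U => rfl
  have hin : ∀ v v' : EuclideanSpace ℝ κ, ⟪v, v'⟫ = ∑ U : κ, v U * v' U := by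
    intro v v'
    rw [PiLp.inner_apply]
    exact Finset.sum_congr rfl fun U _ => by simp [mul_comm]
  have hTin : ∀ v v', ⟪T v, v'⟫ = Mb p (vv p (m+1)) S (Yv v') (Yv v) := by
    intro v v'
    rw [hin]
    unfold Mb
    rw [← Finset.sum_coe_sort (cv p Finset.univ S)]
    refine Finset.sum_congr rfl fun U _ => ?_
    rw [hTa, hYin]; ring
  have hTs : T.IsSymmetric := by
    intro v v'
    rw [hTin, real_inner_comm, hTin, Mb_comm]
  let hv : EuclideanSpace ℝ κ := WithLp.toLp 2 (fun U : κ => √(B U.1) * HH p S U.1)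
  have hsp := spec T hTs hv ?_ ?_ ?_
  · intro Y hY
    let v : EuclideanSpace ℝ κ := WithLp.toLp 2 (fun U : κ => √(B U.1) * Y U.1)
    have hYv : ∀ U ∈ cv p Finset.univ S, Yv v U = Y U := by
      intro U hU
      have := hYin v ⟨U, hU⟩
      rw [this]
      have := hsq ⟨U, hU⟩
      simp only [v]; field_simp
    have h1 := hsp v (by
      rw [hin]
      have : ∀ U : κ, v U * hv U = ((m:ℝ) + 2) * (vv p (m+2) U.1 * Y U.1) := by
        intro U
        have h1 := hsq2 U
        have h2 := HH_pos (mem_cvu.1 U.2)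
        calc v U * hv U = (√(B U.1)) ^ 2 * HH p S U.1 * Y U.1 := by simp only [v, hv]; ring
          _ = _ := by rw [h1]; simp only [hB]; field_simp
      rw [Finset.sum_congr rfl (fun U _ => this U), ← Finset.mul_sum,
        Finset.sum_coe_sort (cv p Finset.univ S) (fun U => vv p (m+2) U * Y U)]
      have : ∑ U ∈ cv p Finset.univ S, vv p (m+2) U * Y U = 0 := hY
      rw [this, mul_zero])
    rw [hTin] at h1
    refine le_of_eq_of_le ?_ h1
    unfold Mb
    refine Finset.sum_congr rfl fun U hU => ?_
    rw [hYv U hU, mY_congr (fun U h => hYv U (mem_cvu.2 h)) (mem_cvu.1 hU)]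
  · intro v
    rw [hTin, hin]
    refine (hquad _).trans (le_of_eq ?_)
    rw [← Finset.sum_coe_sort (cv p Finset.univ S)]
    refine Finset.sum_congr rfl fun U _ => ?_
    rw [hTa]
    change _ / B U.1 = _
    rw [← hsq2 U, Real.sqrt_sq (hsq U).le]
    have := hsq U
    field_simp
  · intro v
    rw [hTin, hin, hg, hsum]
    have h1 := fsum_nonneg (hterm (Yv v))
    have h2 : ∑ U ∈ cv p Finset.univ S, B U * Yv v U ^ 2 = ∑ U : κ, v U * v U := by
      rw [← Finset.sum_coe_sort (cv p Finset.univ S)]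
      refine Finset.sum_congr rfl fun U _ => ?_
      rw [hYin, ← hsq2 U, Real.sqrt_sq (hsq U).le]
      have := hsq U
      field_simp
    rw [h2]; linarith
  · intro v hTv
    have h1 := hTin v v
    rw [hTv, hin, hg, hsum] at h1
    have h2 : ∑ U ∈ cv p Finset.univ S, B U * Yv v U ^ 2 = ∑ U : κ, v U * v U := by
      rw [← Finset.sum_coe_sort (cv p Finset.univ S)]
      refine Finset.sum_congr rfl fun U _ => ?_
      rw [hYin, ← hsq2 U, Real.sqrt_sq (hsq U).le]
      have := hsq U
      field_simp
    rw [h2] at h1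
    have h3 := fsum_eq_zero (hterm (Yv v)) (by linarith)
    obtain ⟨U0, hU0⟩ := exists_cov' hb hS (by omega)
    have h4 : ∀ U, Cov p S U → Yv v U / HH p S U = Yv v U0 / HH p S U0 := by
      intro U hU
      refine conn hb hS (by omega) (fun U => Yv v U / HH p S U = Yv v U0 / HH p S U0) ?_ hU0 rfl hU
      intro U W h hP
      have h5 := h3 U W h (Finset.subset_univ _)
      have a1 := HH_pos h.1
      have a2 := HH_pos (opp_mid h).1
      have a3 := so_pos h
      have a4 := vv_pos hb (m+1) h.2.2.1 (by
        have := h.1.2.2.2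
        have := h.2.2.2.2
        omega)
      have h6 : (Yv v U / HH p S U - Yv v (opp p S W U) / HH p S (opp p S W U)) ^ 2 = 0 := by
        rcases mul_eq_zero.1 h5 with h | h
        · exact absurd h a4.ne'
        · rcases mul_eq_zero.1 h with h | h
          · exact absurd h (by positivity)
          · exact h
      have h7 := pow_eq_zero_iff (two_ne_zero) |>.1 h6
      show Yv v (opp p S W U) / HH p S (opp p S W U) = _
      rw [← hP]; linarith
    refine ⟨Yv v U0 / HH p S U0, ?_⟩
    ext U
    have h5 := h4 U.1 (mem_cvu.1 U.2)
    rw [PiLp.smul_apply, smul_eq_mul, ← h5, hYin]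
    have a1 := HH_pos (mem_cvu.1 U.2)
    have a2 := hsq U
    show v U = _ * (√(B U.1) * HH p S U.1)
    field_simp

lemma stepB (hA : ∀ U, Cov p S U → ClaimA p m U) (hB : ∀ U, Cov p S U → ClaimB p m U) :
    ClaimB p (m+1) S := by
  intro Y hY
  have hid := ident hb hS hr Y
  have hnn := FF_nonneg hb hS hr Y
  have hM0 : Mb p (vv p (m+1)) S Y Y = 0 := by
    unfold Mb
    exact Finset.sum_eq_zero fun U hU => by rw [hY U (mem_cvu.1 hU), mul_zero]
  have hL : ∀ U, Cov p S U → LL p m U (zz p S Y U) = 0 := fun U hU => hY U hU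
  have hle : ∀ U ∈ cv p Finset.univ S,
      HH p S U * Mb p (vv p m) U (zz p S Y U) (zz p S Y U) ≤ 0 := by
    intro U hU
    rw [mem_cvu] at hU
    exact mul_nonpos_of_nonneg_of_nonpos (HH_pos hU).le (hA U hU _ (hL U hU))
  have hs0 := Finset.sum_nonpos hle
  have hs1 := Finset.sum_nonneg hnn
  rw [hM0, mul_zero, sub_zero] at hid
  have hD : ∀ X ∈ FF p S, dX p X S Y = 0 := by
    have := (Finset.sum_eq_zero_iff_of_nonneg hnn).1 (by linarith)
    intro X hX
    have h1 := this X hX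
    rw [mem_FF] at hX
    have := vv_pos hb m hX.1 (by omega)
    rcases mul_eq_zero.1 h1 with h | h
    · exact absurd h this.ne'
    · exact h
  have hMU : ∀ U, Cov p S U → Mb p (vv p m) U (zz p S Y U) (zz p S Y U) = 0 := by
    have := (Finset.sum_eq_zero_iff_of_nonpos hle).1 (by linarith)
    intro U hU
    have h1 := this U (mem_cvu.2 hU)
    rcases mul_eq_zero.1 h1 with h | h
    · exact absurd h (HH_pos hU).ne'
    · exact h
  have hker : ∀ U, Cov p S U → ∀ W, Cov p U W → mY p (vv p m) U (zz p S Y U) W = 0 := by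
    intro U hU
    have hrU : rk p U + (m + 2) = Module.finrank ℝ E := by have := hU.2.2.2; omega
    set Z := zz p S Y U
    have hv := vv_pos hb (m+2) hU.2.1 hrU
    have hK : 0 < LL p m U (HH p U) := by rw [LL_HH]; positivity
    have hZH : Mb p (vv p m) U Z (HH p U) = 0 := by
      rw [Mb_HH hb hrU, hL U hU, mul_zero]
    have k1 : ∀ Z', LL p m U Z' = 0 → Mb p (vv p m) U Z Z' = 0 := by
      intro Z' hZ'
      by_contra hne
      set a := Mb p (vv p m) U Z Z'
      set b := Mb p (vv p m) U Z' Z' with hbdef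
      have h1 : ∀ c : ℝ, 2 * c * a + c ^ 2 * b ≤ 0 := by
        intro c
        have := hA U hU (fun W => Z W + c * Z' W) (by rw [LL_add, hZ', hL U hU]; ring)
        rw [Mb_quad, hMU U hU] at this
        linarith
      have hb0 : b ≤ 0 := hA U hU Z' hZ'
      have h2 := h1 (a / (1 - b))
      have h3 : 0 < 1 - b := by linarith
      have h4 : 2 * (a / (1 - b)) * a + (a / (1 - b)) ^ 2 * b = a ^ 2 * (2 - b) / (1 - b) ^ 2 := by
        field_simp; ring
      rw [h4] at h2
      have : 0 < a ^ 2 * (2 - b) / (1 - b) ^ 2 := by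
        have : 0 < 2 - b := by linarith
        positivity
      linarith
    have k2 : ∀ Z', Mb p (vv p m) U Z Z' = 0 := by
      intro Z'
      have h1 := k1 (fun W => Z' W + (-(LL p m U Z' / LL p m U (HH p U))) * HH p U W) (by
        rw [LL_add]; field_simp; ring)
      rw [Mb_add_right, Mb_smul_right, hZH] at h1
      linarith
    intro W hW
    have h1 := k2 (fun W' => if W' = W then 1 else 0)
    rw [Mb_comm] at h1
    unfold Mb at h1
    rw [Finset.sum_eq_single W] at h1
    · simpa using h1
    · intro W' _ hne; simp [hne]
    · intro h; exact absurd (mem_cvu.2 hW) h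
  have hw : ∀ U, ∃ w : E, Cov p S U → Perp p S w ∧ ⟪nn p S U, w⟫ = Y U ∧
      ∀ W, Cov p U W → ⟪nn p U W, w⟫ = zz p S Y U W := by
    intro U
    by_cases hU : Cov p S U
    swap
    · exact ⟨0, fun h => absurd h hU⟩
    obtain ⟨w, hw, hw2⟩ := hB U hU _ (hker U hU)
    refine ⟨w + Y U • nn p S U, fun _ => ⟨?_, ?_, ?_⟩⟩
    · exact (hw.mono hU.2.2.1).add ((nn_perp hU).smul _)
    · rw [inner_add_right, inner_smul_right, nn_self hU, hw.inner_KK (nn_mem hU)]; ring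
    · intro W hW
      have h : Mid p S W U := ⟨hU, hW⟩
      rw [inner_add_right, inner_smul_right, h.orth', ← hw2 W hW]; ring
  choose w hw using hw
  obtain ⟨U0, hU0⟩ := exists_cov' hb hS (by omega)
  refine ⟨w U0, (hw U0 hU0).1, fun U hU => ?_⟩
  have hconn : w U = w U0 := by
    refine conn hb hS (by omega) (fun U => w U = w U0) ?_ hU0 rfl hU
    intro U W h hP
    have hV := opp_mid h
    show w (opp p S W U) = w U0
    rw [← hP]
    set V := opp p S W U with hVd
    have a1 := hw U h.1
    have a2 := hw V hV.1
    have hXl : ∀ X, Cov p W X → ∀ U, Mid p S W U → ∀ wX : E,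
        (∀ U, Cov p S U → U ⊆ X → Y U = ⟪nn p S U, wX⟫) →
        ⟪nn p W X, w U⟫ = ⟪nn p W X, wX⟫ := by
      intro X hX U h wX hwX
      have hM : Mid p U X W := ⟨h.2, hX⟩
      have z1 : ∀ W', Mid p U X W' → zz p S Y U W' = ⟪nn p U W', wX⟫ := by
        intro W' hW'
        have hm : Mid p S W' U := ⟨h.1, hW'.1⟩
        have hX' := hW'.2.2.2.1
        have ho := opp_mid hm
        exact zz_lin hm (hwX U h.1 (hm.2.2.2.1.trans hX')) (hwX _ ho.1 (ho.2.2.2.1.trans hX'))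
      have z2 := zz_lin (Y := zz p S Y U) hM (w := w U) ((hw U h.1).2.2 W hM.1).symm
        ((hw U h.1).2.2 _ (opp_mid hM).1).symm
      have z3 := zz_lin (Y := zz p S Y U) hM (w := wX) (z1 W hM) (z1 _ (opp_mid hM))
      rw [← z2, z3]
    have hd : w V - w U = 0 := by
      have b0 : Perp p S (w V - w U) := a2.1.sub a1.1
      have b1 : ⟪nn p S V, w U⟫ = Y V := opp_of_zz h a1.2.1 (a1.2.2 W h.2)
      have b2 : ⟪nn p S U, w V⟫ = Y U := by
        have := opp_of_zz hV a2.2.1 (a2.2.2 W hV.2)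
        rw [hVd, opp_opp h] at this
        exact this
      have b3 : Perp p U (w V - w U) := perp_up h.1 b0 (by
        rw [inner_sub_right, b2, a1.2.1, sub_self])
      have b4 : Perp p W (w V - w U) := perp_up h.2 b3 (by
        rw [mm_eq h, inner_sub_right, inner_sub_right, b2, a1.2.1, ← hVd, b1, a2.2.1]; simp)
      refine eq_zero_of_nn hb h.2.2.1 b4 fun X hX => ?_
      have hSX : S ⊆ X := (h.1.2.2.1.trans h.2.2.2.1).trans hX.2.2.1
      have hrX : rk p X = rk p S + 3 := by
        have := hX.2.2.2
        have := h.rk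
        omega
      obtain ⟨wX, -, hwX⟩ := (dX_main hS hX.2.1 hSX hrX Y).2
        (hD X (mem_FF.2 ⟨hX.2.1, hSX, hrX⟩))
      rw [inner_sub_right, hXl X hX U h wX hwX, hXl X hX V hV wX hwX, sub_self]
    exact sub_eq_zero.1 hd
  rw [← hconn]; exact (hw U hU).2.1.symm

end step

theorem claims (hb : Bdd p) : ∀ (m : ℕ) (S : Finset ι), IsFace p S → rk p S + (m + 2) = Module.finrank ℝ E →
    ClaimA p m S ∧ ClaimB p m S := by
  intro m
  induction m with
  | zero => intro S hS hr; exact ⟨baseA hb hS hr, baseB hb hS hr⟩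
  | succ m ih =>
    intro S hS hr
    have h : ∀ U, Cov p S U → ClaimA p m U ∧ ClaimB p m U := fun U hU =>
      ih U hU.2.1 (by have := hU.2.2.2; omega)
    exact ⟨stepA hb hS (by omega) (fun U hU => (h U hU).1),
      stepB hb hS (by omega) (fun U hU => (h U hU).1) (fun U hU => (h U hU).2)⟩

end
end LV



namespace LV
noncomputable section
open scoped RealInnerProductSpace
set_option linter.all false
set_option linter.unusedSectionVars false

variable {E : Type*} [NormedAddCommGroup E] [InnerProductSpace ℝ E] [FiniteDimensional ℝ E]
variable {ι : Type*} [Fintype ι] [DecidableEq ι] {p : ι → E}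

lemma perp_empty (w : E) : Perp p ∅ w := fun i hi => by simp at hi

lemma rk_empty : rk p ∅ = 0 := by
  unfold rk KK; simp

lemma rk_single {i : ι} (h : IsFace p {i}) : rk p {i} = 1 := by
  unfold rk KK
  have : p i ≠ 0 := by
    intro h0
    have := bb_eq h (Finset.mem_singleton_self i)
    rw [h0, inner_zero_left] at this; norm_num at this
  rw [Finset.coe_singleton, Set.image_singleton]
  exact finrank_span_singleton (K := ℝ) this

lemma cov_single {i : ι} (h : IsFace p {i}) : Cov p ∅ {i} :=
  ⟨face_empty, h, Finset.empty_subset _, by rw [rk_single h, rk_empty]⟩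

lemma cov_empty (hf : ∀ i, IsFace p {i}) {U : Finset ι} (h : Cov p ∅ U) : ∃ i, U = {i} := by
  obtain ⟨i, hi, -⟩ := Finset.exists_of_ssubset h.ssub
  refine ⟨i, (eq_of_rk (hf i) h.2.1 (by simpa using hi) ?_).symm⟩
  rw [h.2.2.2, rk_empty, rk_single (hf i)]

lemma sum_cov (hf : ∀ i, IsFace p {i}) (f : Finset ι → ℝ) :
    ∑ U ∈ cv p Finset.univ ∅, f U = ∑ i, f {i} := by
  have : cv p Finset.univ ∅ = Finset.univ.image (fun i : ι => ({i} : Finset ι)) := by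
    ext U
    rw [mem_cvu, Finset.mem_image]
    constructor
    · intro h; obtain ⟨i, rfl⟩ := cov_empty hf h; exact ⟨i, Finset.mem_univ _, rfl⟩
    · rintro ⟨i, -, rfl⟩; exact cov_single (hf i)
  rw [this, Finset.sum_image]
  intro a _ b _ h; simpa using h

def aa (p : ι → E) (i : ι) : ℝ := ⟪p i, nn p ∅ {i}⟫

lemma aa_pos (hf : ∀ i, IsFace p {i}) (i : ι) : 0 < aa p i :=
  nn_pos (cov_single (hf i)) (Finset.mem_singleton_self i) (by simp)

lemma aa_eq (hf : ∀ i, IsFace p {i}) (i : ι) (w : E) : ⟪p i, w⟫ = aa p i * ⟪nn p ∅ {i}, w⟫ :=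
  nn_eq (cov_single (hf i)) (perp_empty w) (Finset.mem_singleton_self i)

def Yl (p : ι → E) (y : ι → ℝ) (U : Finset ι) : ℝ := ∑ i ∈ U, y i / aa p i

lemma Yl_single (y : ι → ℝ) (i : ι) : Yl p y {i} = y i / aa p i := by simp [Yl]

lemma mY_sum {g : Finset ι → ℝ} {S : Finset ι} {κ : Type*} (s : Finset κ) (c : κ → ℝ) (Y : κ → Finset ι → ℝ)
    (U : Finset ι) :
    mY p g S (fun U => ∑ j ∈ s, c j * Y j U) U = ∑ j ∈ s, c j * mY p g S (Y j) U := by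
  classical
  induction s using Finset.induction_on with
  | empty => simp [mY, zz]
  | insert a s ha ih =>
    simp only [Finset.sum_insert ha]
    rw [mY_add (Y := fun U => c a * Y a U), mY_smul, ih]

def Mg (p : ι → E) (g : Finset ι → ℝ) (i j : ι) : ℝ :=
  (1 / aa p i) * mY p g ∅ (Yl p (Pi.single j 1)) {i}

lemma Yl_sum (y : ι → ℝ) : Yl p y = fun U => ∑ j, y j * Yl p (Pi.single j 1) U := by
  funext U
  unfold Yl
  simp only [Finset.mul_sum]
  rw [Finset.sum_comm]
  refine Finset.sum_congr rfl (fun i _ => ?_)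
  rw [Finset.sum_eq_single i]
  · simp; ring
  · intro b _ hb; rw [Pi.single_eq_of_ne hb.symm]; simp
  · simp

lemma Mg_sum (g : Finset ι → ℝ) (i : ι) (y : ι → ℝ) :
    ∑ j, Mg p g i j * y j = (1 / aa p i) * mY p g ∅ (Yl p y) {i} := by
  rw [Yl_sum y, mY_sum, Finset.mul_sum]
  exact Finset.sum_congr rfl (fun j _ => by unfold Mg; ring)

lemma Mb_Yl (hf : ∀ i, IsFace p {i}) (g : Finset ι → ℝ) (y y' : ι → ℝ) :
    Mb p g ∅ (Yl p y) (Yl p y') = ∑ i, y i * ∑ j, Mg p g i j * y' j := by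
  unfold Mb
  rw [sum_cov hf]
  refine Finset.sum_congr rfl (fun i _ => ?_)
  rw [Mg_sum, Yl_single]; ring

lemma Mg_eq_Mb (hf : ∀ i, IsFace p {i}) (g : Finset ι → ℝ) (i j : ι) :
    Mg p g i j = Mb p g ∅ (Yl p (Pi.single i 1)) (Yl p (Pi.single j 1)) := by
  rw [Mb_Yl hf, Finset.sum_eq_single i]
  · rw [Finset.sum_eq_single j]
    · simp
    · intro b _ hb; simp [hb]
    · simp
  · intro b _ hb; simp [hb]
  · simp

lemma Mg_symm (hf : ∀ i, IsFace p {i}) (g : Finset ι → ℝ) (i j : ι) : Mg p g i j = Mg p g j i := by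
  rw [Mg_eq_Mb hf, Mb_comm, ← Mg_eq_Mb hf]

lemma mid_single (hf : ∀ i, IsFace p {i}) {i : ι} {W : Finset ι} (hW : Cov p {i} W) : Mid p ∅ W {i} :=
  ⟨cov_single (hf i), hW⟩

open Classical in
def cf (p : ι → E) (i j : ι) (W : Finset ι) : ℝ :=
  if opp p ∅ W {i} = {j} then 1 / (ss p ∅ W {i} {j} * aa p i * aa p j) else 0

lemma cf_nonneg (hf : ∀ i, IsFace p {i}) {i j : ι} {W : Finset ι} (hW : Cov p {i} W) : 0 ≤ cf p i j W := by
  unfold cf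
  split_ifs with h
  · have h1 := so_pos (mid_single hf hW)
    rw [h] at h1
    have := aa_pos hf i
    have := aa_pos hf j
    positivity
  · exact le_rfl

lemma cf_pos (hf : ∀ i, IsFace p {i}) {i j : ι} {W : Finset ι} (hW : Cov p {i} W)
    (h : opp p ∅ W {i} = {j}) : 0 < cf p i j W := by
  unfold cf
  rw [if_pos h]
  have h1 := so_pos (mid_single hf hW)
  rw [h] at h1
  have := aa_pos hf i
  have := aa_pos hf j
  positivity

lemma Mg_off (hf : ∀ i, IsFace p {i}) (g : Finset ι → ℝ) {i j : ι} (hij : i ≠ j) :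
    Mg p g i j = ∑ W ∈ cv p Finset.univ {i}, g W * cf p i j W := by
  unfold Mg mY
  rw [Finset.mul_sum]
  refine Finset.sum_congr rfl (fun W hW => ?_)
  rw [mem_cvu] at hW
  obtain ⟨k, hk⟩ := cov_empty hf (opp_mid (mid_single hf hW)).1
  have h0 := so_pos (mid_single hf hW)
  unfold zz cf
  rw [hk] at h0 ⊢
  have ai := aa_pos hf i
  have ak := aa_pos hf k
  rw [Yl_single, Yl_single, Pi.single_eq_of_ne hij]
  by_cases hkj : k = j
  · subst hkj
    simp; field_simp
  · rw [Pi.single_eq_of_ne hkj, if_neg (by simpa using hkj)]; simp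

lemma mm_vec (m : ℕ) : ∀ S : Finset ι, ∃ v : E, ∀ x, mm p x m S = ⟪x, v⟫ := by
  induction m with
  | zero => intro S; exact ⟨bb p S, fun x => rfl⟩
  | succ m ih =>
    intro S
    choose v hv using ih
    refine ⟨((m:ℝ)+2)⁻¹ • (∑ U ∈ cv p Finset.univ S, HH p S U • v U + vv p (m+1) S • bb p S), fun x => ?_⟩
    rw [mm, inner_smul_right, inner_add_right, inner_sum, inner_smul_right]
    simp only [inner_smul_right, hv]
    field_simp

lemma mY_vec (m : ℕ) (S : Finset ι) (Y : Finset ι → ℝ) (U : Finset ι) :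
    ∃ v : E, ∀ x, mY p (mm p x m) S Y U = ⟪x, v⟫ := by
  choose v hv using mm_vec (p := p) m
  refine ⟨∑ W ∈ cv p Finset.univ U, zz p S Y U W • v W, fun x => ?_⟩
  unfold mY
  rw [inner_sum]
  refine Finset.sum_congr rfl (fun W _ => ?_)
  rw [hv, inner_smul_right]; ring

def Nn (p : ι → E) (m : ℕ) (x : E) (i j : ι) : ℝ :=
  ((m:ℝ)+1) * (Mg p (mm p x m) i j +
    if i = j then (1 / aa p i ^ 2) * vv p (m+1) {i} * ⟪x, nn p ∅ {i}⟫ else 0)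

lemma Nn_vec (m : ℕ) (i j : ι) : ∃ v : E, ∀ x, Nn p m x i j = ⟪x, v⟫ := by
  obtain ⟨v, hv⟩ := mY_vec (p := p) m ∅ (Yl p (Pi.single j 1)) {i}
  refine ⟨((m:ℝ)+1) • ((1 / aa p i) • v +
    if i = j then ((1 / aa p i ^ 2) * vv p (m+1) {i}) • nn p ∅ {i} else 0), fun x => ?_⟩
  unfold Nn Mg
  rw [hv, inner_smul_right, inner_add_right, inner_smul_right]
  split_ifs
  · rw [inner_smul_right]
  · rw [inner_zero_right]

structure Data (p : ι → E) (M : ι → ι → ℝ) (N : E → ι → ι → ℝ) (C : ℝ) : Prop where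
  symm : ∀ i j, M i j = M j i
  nonneg : ∀ i j, i ≠ j → 0 ≤ M i j
  edge : ∀ i j, i ≠ j → M i j ≠ 0 →
    ∃ z : E, ⟪p i, z⟫ = 1 ∧ ⟪p j, z⟫ = 1 ∧ ∀ k, k ≠ i → k ≠ j → ⟪p k, z⟫ < 1
  row : ∀ i, 0 < ∑ j, M i j
  ker : ∀ i, ∑ j, M i j • p j = 0
  neg : ∀ y : ι → ℝ, ∑ i, (∑ j, M i j) * y i = 0 → ∑ i, y i * ∑ j, M i j * y j ≤ 0
  kerB : ∀ y : ι → ℝ, (∀ i, ∑ j, M i j * y j = 0) → ∃ w, ∀ i, y i = ⟪p i, w⟫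
  Nsymm : ∀ x i j, N x i j = N x j i
  Nbd : ∀ x i j, |N x i j| ≤ C * ‖x‖
  Nzero : ∀ x i j, i ≠ j → M i j = 0 → N x i j = 0
  Neq : ∀ x i, ∑ j, N x i j • p j = (∑ j, M i j) • x
  span : ∀ i w, ⟪p i, w⟫ = 0 → (∀ j, j ≠ i → M i j ≠ 0 → ⟪p j, w⟫ = 0) → w = 0

lemma Yl_inner (hf : ∀ i, IsFace p {i}) (w : E) {U : Finset ι} (hU : Cov p ∅ U) :
    Yl p (fun i => ⟪p i, w⟫) U = ⟪nn p ∅ U, w⟫ := by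
  obtain ⟨i, rfl⟩ := cov_empty hf hU
  have := aa_pos hf i
  rw [Yl_single, aa_eq hf]; field_simp

theorem exists_data (hb : Bdd p) (hf : ∀ i, IsFace p {i}) {m : ℕ} (hd : Module.finrank ℝ E = m + 2) :
    ∃ M N C, Data p M N C := by
  have hr0 : rk p ∅ + (m + 2) = Module.finrank ℝ E := by rw [rk_empty, hd, zero_add]
  have hr1 : ∀ i, rk p {i} + (m + 1) = Module.finrank ℝ E := fun i => by rw [rk_single (hf i), hd]; omega
  have hr2 : ∀ i W, Cov p {i} W → rk p W + m = Module.finrank ℝ E := fun i W hW => by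
    rw [hW.2.2.2, rk_single (hf i), hd]; omega
  obtain ⟨cA, cB⟩ := claims hb m ∅ face_empty hr0
  have rowsum : ∀ i, ∑ j, Mg p (vv p m) i j = (1 / aa p i) * (((m:ℝ)+1) * vv p (m+1) {i}) := by
    intro i
    have h1 := Mg_sum (p := p) (vv p m) i (fun _ => 1)
    simp only [mul_one] at h1
    rw [h1, mY_congr (Y' := fun U => HH p ∅ U + ⟪nn p ∅ U, bb p ∅⟫) _ (cov_single (hf i)),
      mY_add, mY_HH hb hr0 (cov_single (hf i)), mY_lin_zero hb hr0 (cov_single (hf i)), add_zero]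
    intro U hU
    obtain ⟨i, rfl⟩ := cov_empty hf hU
    have h2 := aa_eq hf i (bb p {i})
    rw [bb_eq (hf i) (Finset.mem_singleton_self i)] at h2
    have := aa_pos hf i
    rw [Yl_single, HH, inner_sub_right]
    field_simp
    linarith
  have vpos : ∀ i, 0 < vv p (m+1) {i} := fun i => vv_pos hb (m+1) (hf i) (hr1 i)
  have vpos2 : ∀ i W, W ∈ cv p Finset.univ {i} → 0 < vv p m W := fun i W hW => by
    rw [mem_cvu] at hW
    exact vv_pos hb m hW.2.1 (hr2 i W hW)
  have tnn : ∀ i j W, W ∈ cv p Finset.univ {i} → 0 ≤ vv p m W * cf p i j W := fun i j W hW =>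
    mul_nonneg (vpos2 i W hW).le (cf_nonneg hf (mem_cvu.1 hW))
  choose v hv using Nn_vec (p := p) m
  refine ⟨Mg p (vv p m), Nn p m, ∑ i, ∑ j, ‖v i j‖, ?_, ?_, ?_, ?_, ?_, ?_, ?_, ?_, ?_, ?_, ?_, ?_⟩
  · exact Mg_symm hf _
  · intro i j hij
    rw [Mg_off hf _ hij]
    exact Finset.sum_nonneg (fun W hW => tnn i j W hW)
  · intro i j hij hne
    rw [Mg_off hf _ hij] at hne
    obtain ⟨W, hW, hW2⟩ := Finset.exists_ne_zero_of_sum_ne_zero hne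
    have hop : opp p ∅ W {i} = {j} := by
      by_contra hc
      apply hW2; unfold cf; rw [if_neg hc, mul_zero]
    have hW' := mem_cvu.1 hW
    have hM := mid_single hf hW'
    have hM2 := opp_mid hM
    rw [hop] at hM2
    refine ⟨bb p W, bb_eq hW'.2.1 (hW'.2.2.1 (by simp)), bb_eq hW'.2.1 (hM2.2.2.2.1 (by simp)), ?_⟩
    intro k hki hkj
    apply bb_lt hW'.2.1
    intro hkW
    have := eq_opp hM (Mid.of_sub (cov_single (hf k)) hW'.2.1 hM.rk (by simpa using hkW)) (by simpa using hki)
    rw [hop] at this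
    exact hkj (by simpa using this)
  · intro i
    rw [rowsum]
    have := vpos i
    have := aa_pos hf i
    positivity
  · intro i
    apply ext_inner_right ℝ
    intro w
    rw [sum_inner, inner_zero_left]
    simp only [real_inner_smul_left]
    rw [Mg_sum, mY_congr (fun U hU => Yl_inner hf w hU) (cov_single (hf i)), mY_lin_zero hb hr0 (cov_single (hf i)), mul_zero]
  · intro y hy
    rw [← Mb_Yl hf]
    apply cA
    unfold LL
    rw [sum_cov hf]
    have : ((m:ℝ)+1) * ∑ i, vv p (m+1) {i} * Yl p y {i} = 0 := by
      rw [← hy, Finset.mul_sum]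
      refine Finset.sum_congr rfl (fun i _ => ?_)
      rw [rowsum, Yl_single]; ring
    rcases mul_eq_zero.1 this with h | h
    · exfalso; have : (0:ℝ) < (m:ℝ)+1 := by positivity
      linarith
    · exact h
  · intro y hy
    obtain ⟨w, -, hw⟩ := cB (Yl p y) (by
      intro U hU
      obtain ⟨i, rfl⟩ := cov_empty hf hU
      have := hy i
      rw [Mg_sum] at this
      have := aa_pos hf i
      rcases mul_eq_zero.1 ‹(1 / aa p i) * _ = 0› with h | h
      · exfalso; have : 0 < 1 / aa p i := by positivity
        linarith
      · exact h)
    refine ⟨w, fun i => ?_⟩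
    have h1 := hw _ (cov_single (hf i))
    have := aa_pos hf i
    rw [aa_eq hf, ← h1, Yl_single]; field_simp
  · intro x i j
    unfold Nn
    rw [Mg_symm hf]
    by_cases h : i = j
    · subst h; rfl
    · rw [if_neg h, if_neg (Ne.symm h)]
  · intro x i j
    rw [hv]
    have h1 : ‖v i j‖ ≤ ∑ i, ∑ j, ‖v i j‖ :=
      (Finset.single_le_sum (f := fun j => ‖v i j‖) (fun _ _ => norm_nonneg _) (Finset.mem_univ j)).trans
      (Finset.single_le_sum (f := fun i => ∑ j, ‖v i j‖) (fun _ _ => Finset.sum_nonneg (fun _ _ => norm_nonneg _)) (Finset.mem_univ i))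
    calc |⟪x, v i j⟫| ≤ ‖x‖ * ‖v i j‖ := abs_real_inner_le_norm _ _
      _ ≤ _ := by rw [mul_comm]; gcongr
  · intro x i j hij h0
    unfold Nn
    rw [if_neg hij, add_zero, Mg_off hf _ hij]
    rw [Mg_off hf _ hij, Finset.sum_eq_zero_iff_of_nonneg (fun W hW => tnn i j W hW)] at h0
    rw [Finset.sum_eq_zero, mul_zero]
    intro W hW
    rcases mul_eq_zero.1 (h0 W hW) with h | h
    · exact absurd h (vpos2 i W hW).ne'
    · rw [h, mul_zero]
  · intro x i
    apply ext_inner_right ℝ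
    intro w
    rw [sum_inner]
    simp only [real_inner_smul_left]
    have h1 := Mg_sum (p := p) (mm p x m) i (fun j => ⟪p j, w⟫)
    rw [mY_congr (fun U hU => Yl_inner hf w hU) (cov_single (hf i)), mY_lin (cov_single (hf i))] at h1
    have h2 := stokes hb x m (hf i) (hr1 i) (perp_proj (cov_single (hf i)) (perp_empty (p := p) w))
    have h3 : ∑ U ∈ cv p Finset.univ {i}, mm p x m U * ⟪nn p {i} U, w - ⟪nn p ∅ {i}, w⟫ • nn p ∅ {i}⟫ =
       ∑ U ∈ cv p Finset.univ {i}, mm p x m U * ⟪nn p {i} U, w⟫ := by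
      refine Finset.sum_congr rfl (fun W hW => ?_)
      rw [inner_sub_right, inner_smul_right, (mid_single hf (mem_cvu.1 hW)).orth']; ring
    rw [h3, inner_sub_right, inner_smul_right] at h2
    rw [h2] at h1
    rw [rowsum]
    have h4 : ∑ j, Nn p m x i j * ⟪p j, w⟫ = ((m:ℝ)+1) * (∑ j, Mg p (mm p x m) i j * ⟪p j, w⟫ +
        (1 / aa p i ^ 2) * vv p (m+1) {i} * ⟪x, nn p ∅ {i}⟫ * ⟪p i, w⟫) := by
      have h5 : ∀ j, Nn p m x i j * ⟪p j, w⟫ = ((m:ℝ)+1) * (Mg p (mm p x m) i j * ⟪p j, w⟫ +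
          if i = j then (1 / aa p i ^ 2) * vv p (m+1) {i} * ⟪x, nn p ∅ {i}⟫ * ⟪p i, w⟫ else 0) := by
        intro j
        unfold Nn
        split_ifs with h
        · rw [← h]; ring
        · ring
      simp only [h5]
      rw [← Finset.mul_sum, Finset.sum_add_distrib]
      congr 2
      simp
    rw [h4, h1, aa_eq hf i w]
    have := aa_pos hf i
    field_simp
    ring
  · intro i w hi hj
    have hai := aa_pos hf i
    have hni : ⟪nn p ∅ {i}, w⟫ = 0 := by
      rw [aa_eq hf] at hi
      exact (mul_eq_zero.1 hi).resolve_left hai.ne'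
    apply eq_zero_of_nn hb (hf i) (w := w) (by intro k hk; rw [Finset.mem_singleton] at hk; rw [hk, hi])
    intro W hW
    have hM := mid_single hf hW
    obtain ⟨j, hop⟩ := cov_empty hf (opp_mid hM).1
    have hji : j ≠ i := by
      rintro rfl; exact opp_ne hM hop.symm
    have hjw : ⟪p j, w⟫ = 0 := by
      apply hj j hji
      rw [Mg_off hf _ hji.symm]
      apply ne_of_gt
      apply Finset.sum_pos' (fun W hW => tnn i j W hW)
      exact ⟨W, mem_cvu.2 hW, mul_pos (vpos2 i W (mem_cvu.2 hW)) (cf_pos hf hW hop)⟩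
    have hnj : ⟪nn p ∅ {j}, w⟫ = 0 := by
      rw [aa_eq hf] at hjw
      exact (mul_eq_zero.1 hjw).resolve_left (aa_pos hf j).ne'
    rw [mm_eq hM, hop, hnj, hni]; simp

end
end LV


namespace LV
noncomputable section
open scoped RealInnerProductSpace
set_option linter.all false
set_option linter.unusedSectionVars false

variable {E : Type*} [NormedAddCommGroup E] [InnerProductSpace ℝ E] [FiniteDimensional ℝ E]
variable {ι : Type*} [Fintype ι] [DecidableEq ι] {p : ι → E}

def Qf (K : ι → ι → ℝ) (s : ι → E) : ℝ := ∑ i, ∑ j, K i j * ⟪s i, s j⟫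

lemma Qf_id {K : ι → ι → ℝ} (hK : ∀ i j, K i j = K j i) (q : ι → E) :
    Qf K q = ∑ i, (∑ j, K i j) * ‖q i‖ ^ 2 - (1/2) * ∑ i, ∑ j, K i j * ‖q i - q j‖ ^ 2 := by
  have h1 : ∀ i j, K i j * ‖q i - q j‖ ^ 2 = K i j * ‖q i‖^2 + K i j * ‖q j‖^2 - 2 * (K i j * ⟪q i, q j⟫) := by
    intro i j; rw [norm_sub_sq_real]; ring
  have h2 : ∑ i, ∑ j, K i j * ‖q j‖^2 = ∑ i, ∑ j, K i j * ‖q i‖^2 := by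
    rw [Finset.sum_comm]
    exact Finset.sum_congr rfl (fun i _ => Finset.sum_congr rfl (fun j _ => by rw [hK]))
  simp only [h1, Finset.sum_sub_distrib, Finset.sum_add_distrib, h2, ← Finset.mul_sum, Finset.sum_mul]
  unfold Qf
  ring

lemma Qf_diff {K : ι → ι → ℝ} (hK : ∀ i j, K i j = K j i) (p q : ι → E) :
    Qf K q - Qf K p = ∑ i, (∑ j, K i j) * (‖q i‖ ^ 2 - ‖p i‖^2) +
      (1/2) * ∑ i, ∑ j, K i j * (‖p i - p j‖ ^ 2 - ‖q i - q j‖^2) := by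
  rw [Qf_id hK, Qf_id hK]
  simp only [mul_sub, Finset.sum_sub_distrib]
  ring

lemma Qf_coord (K : ι → ι → ℝ) (s : ι → E) {κ : Type*} [Fintype κ] (b : OrthonormalBasis κ ℝ E) :
    Qf K s = ∑ k, ∑ i, ⟪s i, b k⟫ * ∑ j, K i j * ⟪s j, b k⟫ := by
  unfold Qf
  rw [Finset.sum_comm (s := (Finset.univ : Finset κ))]
  refine Finset.sum_congr rfl (fun i _ => ?_)
  simp only [Finset.mul_sum]
  rw [Finset.sum_comm]
  refine Finset.sum_congr rfl (fun j _ => ?_)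
  rw [← b.sum_inner_mul_inner (s i) (s j), Finset.mul_sum]
  refine Finset.sum_congr rfl (fun k _ => ?_)
  rw [real_inner_comm (s j)]; ring

lemma Qf_affine {K : ι → ι → ℝ} (hK : ∀ i j, K i j = K j i) (t s : ι → E) :
    Qf K (fun i => t i + s i) = Qf K t + 2 * ∑ i, ⟪s i, ∑ j, K i j • t j⟫ + Qf K s := by
  have h2 : ∑ i, ∑ j, K i j * ⟪t i, s j⟫ = ∑ i, ∑ j, K i j * ⟪s i, t j⟫ := by
    rw [Finset.sum_comm]
    exact Finset.sum_congr rfl (fun i _ => Finset.sum_congr rfl (fun j _ => by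
      rw [hK, real_inner_comm]))
  unfold Qf
  simp only [inner_add_left, inner_add_right, mul_add, Finset.sum_add_distrib, inner_sum, inner_smul_right]
  rw [h2]; ring

lemma Qf_smul (K : ι → ι → ℝ) (c : ℝ) (s : ι → E) : Qf K (fun i => c • s i) = c ^ 2 * Qf K s := by
  unfold Qf
  simp only [inner_smul_left, inner_smul_right, Finset.mul_sum]
  refine Finset.sum_congr rfl (fun i _ => Finset.sum_congr rfl (fun j _ => ?_))
  simp; ring

section
variable {M : ι → ι → ℝ} {N : E → ι → ι → ℝ} {C : ℝ} (D : Data p M N C)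
include D

lemma Data.nonpos {s : ι → E} (h : ∑ i, (∑ j, M i j) • s i = 0) : Qf M s ≤ 0 := by
  rw [Qf_coord M s (stdOrthonormalBasis ℝ E)]
  refine Finset.sum_nonpos (fun k _ => D.neg _ ?_)
  have := congrArg (fun v => ⟪v, stdOrthonormalBasis ℝ E k⟫) h
  simpa only [sum_inner, real_inner_smul_left, inner_zero_left] using this

lemma Data.ker_of {y : ι → ℝ} (hy : ∑ i, (∑ j, M i j) * y i = 0) (h0 : ∑ i, y i * ∑ j, M i j * y j = 0)
    (i : ι) : ∑ j, M i j * y j = 0 := by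
  have hA : 0 < ∑ i, ∑ j, M i j := Finset.sum_pos (fun i _ => D.row i) ⟨i, Finset.mem_univ _⟩
  -- pairing with 1
  have hone : ∑ i, ∑ j, M i j * y j = 0 := by
    rw [Finset.sum_comm, ← hy]
    refine Finset.sum_congr rfl (fun j _ => ?_)
    rw [Finset.sum_mul]
    exact Finset.sum_congr rfl (fun i _ => by rw [D.symm])
  set u : ι → ℝ := fun k => (if k = i then 1 else 0) - (∑ j, M i j) / (∑ i, ∑ j, M i j) with hu
  have hu0 : ∑ k, (∑ j, M k j) * u k = 0 := by
    simp only [hu, mul_sub, Finset.sum_sub_distrib, ← Finset.sum_mul]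
    rw [mul_div_cancel₀ _ hA.ne']
    simp
  have hpair : ∑ k, u k * ∑ j, M k j * y j = ∑ j, M i j * y j := by
    simp only [hu, sub_mul, Finset.sum_sub_distrib]
    rw [← Finset.mul_sum, hone]; simp
  have hsym : ∑ k, y k * ∑ j, M k j * u j = ∑ k, u k * ∑ j, M k j * y j := by
    simp only [Finset.mul_sum]
    rw [Finset.sum_comm]
    exact Finset.sum_congr rfl (fun i _ => Finset.sum_congr rfl (fun j _ => by rw [D.symm]; ring))
  have hq : ∀ t : ℝ, t * (2 * ∑ j, M i j * y j) + t ^ 2 * (∑ k, u k * ∑ j, M k j * u j) ≤ 0 := by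
    intro t
    have := D.neg (fun k => y k + t * u k) (by
      simp only [mul_add, Finset.sum_add_distrib, hy]
      have : ∑ k, (∑ j, M k j) * (t * u k) = t * ∑ k, (∑ j, M k j) * u k := by
        rw [Finset.mul_sum]; exact Finset.sum_congr rfl (fun k _ => by ring)
      rw [this, hu0]; ring)
    have e : ∑ k, (y k + t * u k) * ∑ j, M k j * (y j + t * u j) =
        ∑ k, y k * ∑ j, M k j * y j + t * (∑ k, y k * ∑ j, M k j * u j) + t * (∑ k, u k * ∑ j, M k j * y j)
         + t ^ 2 * (∑ k, u k * ∑ j, M k j * u j) := by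
      rw [Finset.mul_sum, Finset.mul_sum, Finset.mul_sum, ← Finset.sum_add_distrib, ← Finset.sum_add_distrib,
        ← Finset.sum_add_distrib]
      refine Finset.sum_congr rfl (fun k _ => ?_)
      have : ∑ j, M k j * (y j + t * u j) = ∑ j, M k j * y j + t * ∑ j, M k j * u j := by
        rw [Finset.mul_sum, ← Finset.sum_add_distrib]
        exact Finset.sum_congr rfl (fun k _ => by ring)
      rw [this]; ring
    rw [e, h0, hsym, hpair] at this
    linarith
  set a := ∑ j, M i j * y j
  set b := ∑ k, u k * ∑ j, M k j * u j
  by_contra ha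
  have h1 := hq (a / (1 + |b|))
  have hb1 : 0 < 1 + |b| := by positivity
  have h2 : a / (1 + |b|) * (2 * a) + (a / (1 + |b|)) ^ 2 * b = a ^ 2 / (1+|b|)^2 * (2 * (1 + |b|) + b) := by
    field_simp
  rw [h2] at h1
  have h3 : 0 < 2 * (1 + |b|) + b := by have := neg_abs_le b; have := abs_nonneg b; linarith
  have : 0 < a ^ 2 / (1+|b|)^2 * (2 * (1 + |b|) + b) := by positivity
  linarith

lemma Data.G_pos {s : ι → E} (hs : ∀ w, ∑ i, ⟪p i, w⟫ • s i = 0)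
    (hG : 2 / (∑ i, ∑ j, M i j) * ‖∑ i, (∑ j, M i j) • s i‖ ^ 2 - Qf M s ≤ 0) : s = 0 := by
  rcases isEmpty_or_nonempty ι with he | hne
  · exact Subsingleton.elim _ _
  have hA : 0 < ∑ i, ∑ j, M i j := Finset.sum_pos (fun i _ => D.row i) Finset.univ_nonempty
  set A := ∑ i, ∑ j, M i j with hAd
  set c := ∑ i, (∑ j, M i j) • s i with hc
  have h1 : ∑ i, (∑ j, M i j) • (s i - A⁻¹ • c) = 0 := by
    simp only [smul_sub, Finset.sum_sub_distrib, ← Finset.sum_smul]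
    rw [← hc, ← hAd, smul_smul, mul_inv_cancel₀ hA.ne', one_smul, sub_self]
  have h2 := D.nonpos h1
  have h3 := Qf_affine D.symm (fun i => A⁻¹ • c) (fun i => s i - A⁻¹ • c)
  simp only [add_sub_cancel] at h3
  have h4 : ∑ i, ⟪s i - A⁻¹ • c, ∑ j, M i j • A⁻¹ • c⟫ = 0 := by
    have : ∀ i, ⟪s i - A⁻¹ • c, ∑ j, M i j • A⁻¹ • c⟫ = ⟪(∑ j, M i j) • (s i - A⁻¹ • c), A⁻¹ • c⟫ := by
      intro i; rw [← Finset.sum_smul, inner_smul_right, real_inner_smul_left]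
    simp only [this]
    rw [← sum_inner, h1, inner_zero_left]
  have h5 : Qf M (fun _ => A⁻¹ • c) = A⁻¹ * ‖c‖ ^ 2 := by
    unfold Qf
    simp only [← Finset.sum_mul]
    rw [← hAd, inner_smul_left, inner_smul_right, real_inner_self_eq_norm_sq]
    simp; field_simp
  rw [h4, h5] at h3
  rw [h3] at hG
  have hAi : 0 < A⁻¹ := by positivity
  have hc0 : c = 0 := by
    by_contra hne
    have : 0 < ‖c‖ ^ 2 := by positivity
    have : 0 < A⁻¹ * ‖c‖ ^ 2 := by positivity
    rw [div_eq_mul_inv] at hG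
    linarith
  have hQ0 : Qf M s = 0 := by
    rw [hc0] at h3 hG h2
    rw [h3]
    simp at hG h2 ⊢
    linarith
  set b := stdOrthonormalBasis ℝ E
  have hcoord : ∀ k, ∑ i, (∑ j, M i j) * ⟪s i, b k⟫ = 0 := by
    intro k
    have := congrArg (fun v => ⟪v, b k⟫) hc0
    simpa only [hc, sum_inner, real_inner_smul_left, inner_zero_left] using this
  have hk0 : ∀ k, ∑ i, ⟪s i, b k⟫ * ∑ j, M i j * ⟪s j, b k⟫ = 0 := by
    rw [Qf_coord M s b, Finset.sum_eq_zero_iff_of_nonpos (fun k _ => D.neg _ (hcoord k))] at hQ0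
    exact fun k => hQ0 k (Finset.mem_univ _)
  have hw : ∀ k, ∃ w, ∀ i, ⟪s i, b k⟫ = ⟪p i, w⟫ := fun k => D.kerB _ (D.ker_of (hcoord k) (hk0 k))
  choose w hw using hw
  have hsum : ∑ i, ⟪s i, s i⟫ = 0 := by
    have : ∀ i, ⟪s i, s i⟫ = ∑ k, ⟪⟪p i, w k⟫ • s i, b k⟫ := by
      intro i
      rw [← b.sum_inner_mul_inner (s i) (s i)]
      refine Finset.sum_congr rfl (fun k _ => ?_)
      rw [real_inner_smul_left, ← hw, real_inner_comm (s i) (b k)]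
    simp only [this]
    rw [Finset.sum_comm]
    refine Finset.sum_eq_zero (fun k _ => ?_)
    rw [← sum_inner, hs, inner_zero_left]
  rw [Finset.sum_eq_zero_iff_of_nonneg (fun i _ => real_inner_self_nonneg)] at hsum
  funext i
  exact inner_self_eq_zero.1 (hsum i (Finset.mem_univ _))

lemma Data.G_bound : ∃ κ > 0, ∀ s : ι → E, (∀ w, ∑ i, ⟪p i, w⟫ • s i = 0) →
    κ * ‖s‖ ^ 2 ≤ 2 / (∑ i, ∑ j, M i j) * ‖∑ i, (∑ j, M i j) • s i‖ ^ 2 - Qf M s := by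
  set G : (ι → E) → ℝ := fun s => 2 / (∑ i, ∑ j, M i j) * ‖∑ i, (∑ j, M i j) • s i‖ ^ 2 - Qf M s with hG
  have hcont : Continuous G := by
    simp only [hG]; unfold Qf; fun_prop
  set S : Set (ι → E) := Metric.sphere 0 1 ∩ {s | ∀ w, ∑ i, ⟪p i, w⟫ • s i = 0} with hS
  have hcomp : IsCompact S := by
    apply (isCompact_sphere 0 1).inter_right
    rw [show {s : ι → E | ∀ w, ∑ i, ⟪p i, w⟫ • s i = 0} = ⋂ w, {s | ∑ i, ⟪p i, w⟫ • s i = 0} by ext; simp]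
    refine isClosed_iInter (fun w => isClosed_eq ?_ continuous_const)
    fun_prop
  have key : ∃ κ > 0, ∀ s ∈ S, κ ≤ G s := by
    rcases S.eq_empty_or_nonempty with h | h
    · exact ⟨1, one_pos, fun s hs => by rw [h] at hs; exact hs.elim⟩
    · obtain ⟨s, hs, hmin⟩ := hcomp.exists_isMinOn h hcont.continuousOn
      refine ⟨G s, ?_, fun t ht => hmin ht⟩
      by_contra hle
      have := D.G_pos hs.2 (not_lt.1 hle)
      have h1 := hs.1
      rw [this] at h1; simp at h1
  obtain ⟨κ, hκ, hk⟩ := key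
  refine ⟨κ, hκ, fun s hs => ?_⟩
  by_cases h0 : s = 0
  · rw [h0]; simp [Qf]
  have hn : 0 < ‖s‖ := norm_pos_iff.2 h0
  have h1 := hk (fun i => ‖s‖⁻¹ • s i) (by
    refine ⟨?_, ?_⟩
    · rw [mem_sphere_zero_iff_norm]
      change ‖‖s‖⁻¹ • s‖ = 1
      rw [norm_smul, norm_inv, norm_norm, inv_mul_cancel₀ hn.ne']
    · intro w
      simp only [smul_comm _ ‖s‖⁻¹]
      rw [← Finset.smul_sum, hs, smul_zero])
  have h2 : G (fun i => ‖s‖⁻¹ • s i) = (‖s‖⁻¹) ^ 2 * G s := by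
    simp only [hG]
    rw [Qf_smul]
    simp only [smul_comm _ ‖s‖⁻¹]
    rw [← Finset.smul_sum, norm_smul, mul_pow, norm_inv, norm_norm]
    ring
  rw [h2, inv_pow, inv_mul_eq_div, le_div_iff₀ (by positivity)] at h1
  exact h1
end

lemma fit (hb : Bdd p) : ∃ β : ℝ, 0 ≤ β ∧ ∀ (q : ι → E) (ε : ℝ), 0 ≤ ε → (∀ i, ‖q i - p i‖ ≤ ε) →
    ∃ B : E →ₗ[ℝ] E, (∀ w, ∑ i, ⟪p i, w⟫ • (q i - B (p i)) = 0) ∧ ∀ v, ‖B v - v‖ ≤ β * ε * ‖v‖ := by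
  let R : E →ₗ[ℝ] E := ∑ i, (innerₛₗ ℝ (p i)).smulRight (p i)
  have hR : ∀ w, R w = ∑ i, ⟪p i, w⟫ • p i := by
    intro w; simp [R]
  have hinj : Function.Injective R := by
    rw [injective_iff_map_eq_zero]
    intro w hw
    have h1 : ∑ i, ⟪p i, w⟫ * ⟪p i, w⟫ = 0 := by
      have := congrArg (fun v => ⟪v, w⟫) hw
      simpa only [hR, sum_inner, real_inner_smul_left, inner_zero_left] using this
    rw [Finset.sum_eq_zero_iff_of_nonneg (fun i _ => mul_self_nonneg _)] at h1
    by_contra hne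
    obtain ⟨i, hi⟩ := hb w hne
    have := h1 i (Finset.mem_univ _)
    nlinarith
  let Re := LinearEquiv.ofInjectiveEndo R hinj
  have hRe : ∀ w, Re w = R w := fun w => rfl
  let I : E →L[ℝ] E := LinearMap.toContinuousLinearMap (Re.symm : E →ₗ[ℝ] E)
  have hI : ∀ v, I v = Re.symm v := fun v => rfl
  refine ⟨(∑ i, ‖p i‖) * ‖I‖, by positivity, fun q ε hε hq => ?_⟩
  let D : E →ₗ[ℝ] E := (∑ i, (innerₛₗ ℝ (p i)).smulRight (q i - p i)) ∘ₗ (Re.symm : E →ₗ[ℝ] E)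
  have hD : ∀ v, D v = ∑ i, ⟪p i, I v⟫ • (q i - p i) := by
    intro v; simp [D, hI]
  refine ⟨LinearMap.id + D, ?_, ?_⟩
  · intro w
    have e : ∑ i, ⟪p i, w⟫ • (q i - (LinearMap.id + D : E →ₗ[ℝ] E) (p i)) =
        ∑ i, ⟪p i, w⟫ • (q i - p i) - D (R w) := by
      rw [hR, map_sum, ← Finset.sum_sub_distrib]
      refine Finset.sum_congr rfl (fun i _ => ?_)
      rw [map_smul, ← smul_sub]
      simp [sub_sub]
    rw [e, hD]
    have : I (R w) = w := by rw [hI, ← hRe, LinearEquiv.symm_apply_apply]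
    rw [this, sub_self]
  · intro v
    have : (LinearMap.id + D : E →ₗ[ℝ] E) v - v = D v := by simp
    rw [this, hD]
    calc ‖∑ i, ⟪p i, I v⟫ • (q i - p i)‖ ≤ ∑ i, ‖⟪p i, I v⟫ • (q i - p i)‖ := norm_sum_le _ _
      _ ≤ ∑ i, ‖p i‖ * ((‖I‖ * ‖v‖) * ε) := by
        refine Finset.sum_le_sum (fun i _ => ?_)
        rw [norm_smul]
        have h1 : ‖⟪p i, I v⟫‖ ≤ ‖p i‖ * (‖I‖ * ‖v‖) :=
          (norm_inner_le_norm _ _).trans (by gcongr; exact I.le_opNorm v)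
        calc _ ≤ ‖p i‖ * (‖I‖ * ‖v‖) * ε := by gcongr; exact hq i
          _ = _ := by ring
      _ = _ := by rw [← Finset.sum_mul]; ring

end
end LV


namespace LV
noncomputable section
open scoped RealInnerProductSpace
set_option linter.all false
set_option linter.unusedSectionVars false

variable {E : Type*} [NormedAddCommGroup E] [InnerProductSpace ℝ E] [FiniteDimensional ℝ E]
variable {ι : Type*} [Fintype ι] [DecidableEq ι] {p : ι → E}

/-- monotonicity of the form -/
lemma Qf_mono {K : ι → ι → ℝ} (hK : ∀ i j, K i j = K j i) {q : ι → E}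
    (hoff : ∀ i j, i ≠ j → 0 ≤ K i j) (hrow : ∀ i, 0 ≤ ∑ j, K i j)
    (h1 : ∀ i j, i ≠ j → K i j ≠ 0 → ‖q i - q j‖ ≤ ‖p i - p j‖) (h2 : ∀ i, ‖p i‖ ≤ ‖q i‖) :
    (∀ i, 0 ≤ (∑ j, K i j) * (‖q i‖ ^ 2 - ‖p i‖^2)) ∧
    (∀ i j, 0 ≤ K i j * (‖p i - p j‖ ^ 2 - ‖q i - q j‖^2)) ∧ Qf K p ≤ Qf K q := by
  have a1 : ∀ i, 0 ≤ (∑ j, K i j) * (‖q i‖ ^ 2 - ‖p i‖^2) := by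
    intro i
    apply mul_nonneg (hrow i)
    have := h2 i
    have := norm_nonneg (p i)
    nlinarith
  have a2 : ∀ i j, 0 ≤ K i j * (‖p i - p j‖ ^ 2 - ‖q i - q j‖^2) := by
    intro i j
    by_cases hij : i = j
    · subst hij; simp
    by_cases h0 : K i j = 0
    · rw [h0, zero_mul]
    apply mul_nonneg (hoff i j hij)
    have := h1 i j hij h0
    have := norm_nonneg (q i - q j)
    nlinarith
  refine ⟨a1, a2, ?_⟩
  have h := Qf_diff hK p q
  have b1 := Finset.sum_nonneg (fun i (_ : i ∈ Finset.univ) => a1 i)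
  have b2 := Finset.sum_nonneg (fun i (_ : i ∈ Finset.univ) => Finset.sum_nonneg (fun j (_ : j ∈ Finset.univ) => a2 i j))
  linarith

lemma Qf_bound {K : ι → ι → ℝ} {c : ℝ} (h : ∀ i j, |K i j| ≤ c) (s : ι → E) :
    Qf K s ≤ c * ‖s‖ ^ 2 * (Fintype.card ι) ^ 2 := by
  have : ∀ i j, K i j * ⟪s i, s j⟫ ≤ c * ‖s‖ ^ 2 := by
    intro i j
    have hc : 0 ≤ c := (abs_nonneg _).trans (h i j)
    calc K i j * ⟪s i, s j⟫ ≤ |K i j * ⟪s i, s j⟫| := le_abs_self _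
      _ = |K i j| * |⟪s i, s j⟫| := abs_mul _ _
      _ ≤ c * (‖s‖ * ‖s‖) := by
        gcongr
        · exact h i j
        · exact (abs_real_inner_le_norm _ _).trans (by gcongr <;> exact norm_le_pi_norm s _)
      _ = _ := by ring
  unfold Qf
  calc _ ≤ ∑ i : ι, ∑ j : ι, c * ‖s‖ ^ 2 := Finset.sum_le_sum (fun i _ => Finset.sum_le_sum (fun j _ => this i j))
    _ = _ := by simp; ring

lemma exists_lower (f : ι → ι → ℝ) : ∃ δ > 0, ∀ i j, 0 < f i j → δ ≤ f i j := by
  have : ∀ s : Finset (ι × ι), ∃ δ > 0, ∀ x ∈ s, 0 < f x.1 x.2 → δ ≤ f x.1 x.2 := by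
    intro s
    induction s using Finset.induction_on with
    | empty => exact ⟨1, one_pos, by simp⟩
    | insert a s ha ih =>
      obtain ⟨δ, hδ, h⟩ := ih
      by_cases hp : 0 < f a.1 a.2
      · refine ⟨min δ (f a.1 a.2), lt_min hδ hp, ?_⟩
        intro x hx hpos
        rcases Finset.mem_insert.1 hx with rfl | hx
        · exact min_le_right _ _
        · exact (min_le_left _ _).trans (h x hx hpos)
      · refine ⟨δ, hδ, ?_⟩
        intro x hx hpos
        rcases Finset.mem_insert.1 hx with rfl | hx
        · exact absurd hpos hp
        · exact h x hx hpos
  obtain ⟨δ, hδ, h⟩ := this Finset.univ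
  exact ⟨δ, hδ, fun i j => h (i, j) (Finset.mem_univ _)⟩

section
variable {M : ι → ι → ℝ} {N : E → ι → ι → ℝ} {C : ℝ} (D : Data p M N C)
include D

lemma Data.sum_alpha : ∑ i, (∑ j, M i j) • p i = 0 := by
  simp only [Finset.sum_smul]
  rw [Finset.sum_comm]
  refine Finset.sum_eq_zero (fun j _ => ?_)
  rw [← D.ker j]
  exact Finset.sum_congr rfl (fun i _ => by rw [D.symm])

lemma Data.Qf_lin {K : ι → ι → ℝ} {x : E} (hK : ∀ i, ∑ j, K i j • p j = (∑ j, M i j) • x) (B : E →ₗ[ℝ] E) :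
    Qf K (fun i => B (p i)) = 0 := by
  have : ∀ i, ∑ j, K i j * ⟪B (p i), B (p j)⟫ = ⟪B ((∑ j, M i j) • p i), B x⟫ := by
    intro i
    rw [map_smul, real_inner_smul_left, ← inner_smul_right, ← map_smul, ← hK, map_sum, inner_sum]
    simp only [map_smul, inner_smul_right]
  unfold Qf
  simp only [this]
  rw [← sum_inner, ← map_sum, D.sum_alpha, map_zero, inner_zero_left]

lemma Data.rigid_lin (hb : Bdd p) (B : E →ₗ[ℝ] E)
    (h1 : ∀ i j, i ≠ j → M i j ≠ 0 → ‖B (p i) - B (p j)‖ ≤ ‖p i - p j‖)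
    (h2 : ∀ i, ‖p i‖ ≤ ‖B (p i)‖) : ∀ v, ‖B v‖ = ‖v‖ := by
  have hz : ∀ u : E, (∀ i, ⟪p i, u⟫ = 0) → u = 0 := by
    intro u hu
    by_contra hne
    obtain ⟨i, hi⟩ := hb u hne
    rw [hu i] at hi; exact lt_irrefl _ hi
  obtain ⟨a1, a2, -⟩ := Qf_mono (p := p) D.symm (q := fun i => B (p i)) D.nonneg (fun i => (D.row i).le) h1 h2
  have hk : ∀ i, ∑ j, M i j • p j = (∑ j, M i j) • (0:E) := fun i => by rw [D.ker, smul_zero]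
  have e1 := D.Qf_lin hk B
  have e2 := D.Qf_lin hk LinearMap.id
  have h := Qf_diff D.symm p (fun i => B (p i))
  rw [e1, show Qf M p = 0 from e2, sub_zero] at h
  have b1 := Finset.sum_nonneg (fun i (_ : i ∈ Finset.univ) => a1 i)
  have b2 := Finset.sum_nonneg (fun i (_ : i ∈ Finset.univ) => Finset.sum_nonneg (fun j (_ : j ∈ Finset.univ) => a2 i j))
  have c1 : ∑ i, (∑ j, M i j) * (‖B (p i)‖ ^ 2 - ‖p i‖^2) = 0 := by linarith
  have c2 : ∑ i, ∑ j, M i j * (‖p i - p j‖ ^ 2 - ‖B (p i) - B (p j)‖^2) = 0 := by linarith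
  rw [Finset.sum_eq_zero_iff_of_nonneg (fun i _ => a1 i)] at c1
  have d1 : ∀ i, ‖B (p i)‖ ^ 2 = ‖p i‖ ^ 2 := by
    intro i
    have := (mul_eq_zero.1 (c1 i (Finset.mem_univ _))).resolve_left (D.row i).ne'
    linarith
  rw [Finset.sum_eq_zero_iff_of_nonneg (fun i _ => Finset.sum_nonneg (fun j _ => a2 i j))] at c2
  have d2 : ∀ i j, M i j ≠ 0 → ⟪B (p i), B (p j)⟫ = ⟪p i, p j⟫ := by
    intro i j hM
    have := c2 i (Finset.mem_univ _)
    rw [Finset.sum_eq_zero_iff_of_nonneg (fun j _ => a2 i j)] at this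
    have := (mul_eq_zero.1 (this j (Finset.mem_univ _))).resolve_left hM
    rw [norm_sub_sq_real, norm_sub_sq_real] at this
    linarith [d1 i, d1 j]
  have d3 : ∀ i v, ⟪B (p i), B v⟫ = ⟪p i, v⟫ := by
    intro i
    have : LinearMap.adjoint B (B (p i)) - p i = 0 := by
      apply D.span i
      · rw [inner_sub_right, LinearMap.adjoint_inner_right, real_inner_self_eq_norm_sq, real_inner_self_eq_norm_sq, d1, sub_self]
      · intro j hji hM
        rw [inner_sub_right, LinearMap.adjoint_inner_right, real_inner_comm, d2 i j hM, real_inner_comm, sub_self]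
    intro v
    rw [← LinearMap.adjoint_inner_left, sub_eq_zero.1 this]
  intro v
  have : LinearMap.adjoint B (B v) - v = 0 := by
    apply hz
    intro i
    rw [inner_sub_right, LinearMap.adjoint_inner_right, d3, sub_self]
  have h3 : ⟪B v, B v⟫ = ⟪v, v⟫ := by
    rw [← LinearMap.adjoint_inner_left, sub_eq_zero.1 this]
  rw [real_inner_self_eq_norm_sq, real_inner_self_eq_norm_sq] at h3
  exact (sq_eq_sq₀ (norm_nonneg _) (norm_nonneg _)).1 h3

set_option maxHeartbeats 1000000 in
theorem Data.main (hb : Bdd p) : ∃ ε > 0, ∀ q : ι → E, (∀ i, ‖q i - p i‖ < ε) →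
    (∀ i j, i ≠ j → M i j ≠ 0 → ‖q i - q j‖ ≤ ‖p i - p j‖) → (∀ i, ‖p i‖ ≤ ‖q i‖) →
    ∃ T : E ≃ₗᵢ[ℝ] E, ∀ i, T (p i) = q i := by
  rcases isEmpty_or_nonempty ι with he | hne
  · exact ⟨1, one_pos, fun q _ _ _ => ⟨LinearIsometryEquiv.refl ℝ E, fun i => (he.false i).elim⟩⟩
  have hA : 0 < ∑ i, ∑ j, M i j := Finset.sum_pos (fun i _ => D.row i) Finset.univ_nonempty
  set A := ∑ i, ∑ j, M i j with hAd
  obtain ⟨κ, hκ, hG⟩ := D.G_bound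
  obtain ⟨β, hβ, hfit⟩ := fit hb
  obtain ⟨δ1, hδ1, hd1⟩ := exists_lower M
  obtain ⟨δ2, hδ2, hd2⟩ := exists_lower (fun i (_ : ι) => ∑ j, M i j)
  set n : ℝ := ((Fintype.card ι : ℕ) : ℝ) with hn
  have hn0 : 0 ≤ n := by positivity
  set C' := |C| with hC'
  have hC0 : 0 ≤ C' := abs_nonneg _
  have hNb : ∀ x i j, |N x i j| ≤ C' * ‖x‖ := fun x i j =>
    (D.Nbd x i j).trans (by gcongr; exact le_abs_self C)
  set L := 1 + β * ‖p‖ with hL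
  have hL0 : 0 < L := by positivity
  set Tt := 2 * A * β + C' * L * n ^ 2 + C' * L * (n + 1) + 1 with hT
  have hT0 : 0 < Tt := by positivity
  set μ := min κ (min δ1 δ2) with hμ
  have hμ0 : 0 < μ := lt_min hκ (lt_min hδ1 hδ2)
  refine ⟨μ / (2 * Tt), by positivity, fun q hq h1 h2 => ?_⟩
  set ε := μ / (2 * Tt) with hε
  have hε0 : 0 < ε := by positivity
  have hεT : ε * Tt < μ := by rw [hε]; field_simp; linarith
  obtain ⟨B, hB, hBv⟩ := hfit q ε hε0.le (fun i => (hq i).le)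
  set s : ι → E := fun i => q i - B (p i) with hs
  have hsn : ‖s‖ ≤ ε * L := by
    rw [pi_norm_le_iff_of_nonneg (by positivity)]
    intro i
    have e : s i = (q i - p i) - (B (p i) - p i) := by simp [hs]
    have e1 := hBv (p i)
    have e2 := norm_le_pi_norm p i
    calc ‖s i‖ ≤ ‖q i - p i‖ + ‖B (p i) - p i‖ := by rw [e]; exact norm_sub_le _ _
      _ ≤ ε + β * ε * ‖p‖ := add_le_add (hq i).le (e1.trans (by gcongr))
      _ = ε * L := by rw [hL]; ring
  set c := ∑ i, (∑ j, M i j) • s i with hc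
  have hcn : ‖c‖ ≤ A * ‖s‖ := by
    calc ‖c‖ ≤ ∑ i, ‖(∑ j, M i j) • s i‖ := norm_sum_le _ _
      _ ≤ ∑ i, (∑ j, M i j) * ‖s‖ := by
        refine Finset.sum_le_sum (fun i _ => ?_)
        rw [norm_smul, Real.norm_of_nonneg (D.row i).le]
        have := (D.row i).le
        gcongr; exact norm_le_pi_norm s i
      _ = _ := by rw [← Finset.sum_mul]
  set x : E := -(A⁻¹ • c) with hx
  have hxn : ‖x‖ ≤ ‖s‖ := by
    rw [hx, norm_neg, norm_smul, norm_inv, Real.norm_of_nonneg hA.le, inv_mul_eq_div, div_le_iff₀ hA]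
    linarith
  have hNs : ∀ i j, |N x i j| ≤ C' * ‖s‖ := fun i j => (hNb x i j).trans (by gcongr)
  have hCs : C' * ‖s‖ * (n + 1) ≤ μ := by
    have : C' * ‖s‖ * (n + 1) ≤ C' * (ε * L) * (n+1) := by gcongr
    have h3 : C' * (ε * L) * (n+1) = ε * (C' * L * (n+1)) := by ring
    have h4 : ε * (C' * L * (n+1)) ≤ ε * Tt := by
      gcongr; rw [hT]
      have : 0 ≤ 2 * A * β + C' * L * n ^ 2 := by positivity
      linarith
    linarith
  have hCs0 : 0 ≤ C' * ‖s‖ := by positivity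
  set K : ι → ι → ℝ := fun i j => M i j + N x i j with hK
  have hKs : ∀ i j, K i j = K j i := fun i j => by simp only [hK]; rw [D.symm, D.Nsymm]
  have hKz : ∀ i j, i ≠ j → K i j ≠ 0 → M i j ≠ 0 := by
    intro i j hij hk h0
    apply hk; simp only [hK]; rw [h0, D.Nzero x i j hij h0, add_zero]
  have hμ1 : μ ≤ δ1 := (min_le_right _ _).trans (min_le_left _ _)
  have hμ2 : μ ≤ δ2 := (min_le_right _ _).trans (min_le_right _ _)
  have hμ3 : μ ≤ κ := min_le_left _ _
  have hoff : ∀ i j, i ≠ j → 0 ≤ K i j := by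
    intro i j hij
    by_cases h0 : M i j = 0
    · simp only [hK]; rw [h0, D.Nzero x i j hij h0, add_zero]
    · have h3 := hd1 i j (lt_of_le_of_ne (D.nonneg i j hij) (Ne.symm h0))
      have h4 := neg_le_of_abs_le (hNs i j)
      have : C' * ‖s‖ ≤ C' * ‖s‖ * (n+1) := by nlinarith
      simp only [hK]; linarith
  have hrow : ∀ i, 0 ≤ ∑ j, K i j := by
    intro i
    simp only [hK, Finset.sum_add_distrib]
    have h3 := hd2 i i (D.row i)
    have h4 : ∑ j : ι, (-(C' * ‖s‖)) ≤ ∑ j, N x i j :=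
      Finset.sum_le_sum (fun j _ => neg_le_of_abs_le (hNs i j))
    simp only [Finset.sum_const, Finset.card_univ, nsmul_eq_mul] at h4
    rw [← hn] at h4
    have : C' * ‖s‖ * n ≤ C' * ‖s‖ * (n+1) := by nlinarith
    linarith
  have hKp : ∀ i, ∑ j, K i j • p j = (∑ j, M i j) • x := by
    intro i
    simp only [hK, add_smul, Finset.sum_add_distrib]
    rw [D.ker, D.Neq, zero_add]
  obtain ⟨-, -, hmono⟩ := Qf_mono (p := p) hKs hoff hrow (fun i j hij hk => h1 i j hij (hKz i j hij hk)) h2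
  rw [show Qf K p = 0 from D.Qf_lin hKp LinearMap.id] at hmono
  have hexp : Qf K q = 2 * ⟪c, B x⟫ + Qf M s + Qf (N x) s := by
    have e1 := Qf_affine hKs (fun i => B (p i)) s
    have e2 : (fun i => B (p i) + s i) = q := by funext i; simp [hs]
    rw [e2, D.Qf_lin hKp B] at e1
    have e3 : ∑ i, ⟪s i, ∑ j, K i j • B (p j)⟫ = ⟪c, B x⟫ := by
      rw [hc, sum_inner]
      refine Finset.sum_congr rfl (fun i _ => ?_)
      rw [real_inner_smul_left, ← inner_smul_right, ← map_smul, ← hKp, map_sum]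
      simp only [map_smul]
    have e4 : Qf K s = Qf M s + Qf (N x) s := by
      unfold Qf
      simp only [hK, add_mul, Finset.sum_add_distrib]
    rw [e1, e3, e4]; ring
  have hGs := hG s hB
  have hNq := Qf_bound hNs s
  have hcross : 2 * ⟪c, B x⟫ ≤ -(2 / A * ‖c‖ ^ 2) + 2 * A * β * ε * ‖s‖ ^ 2 := by
    have e1 : ⟪c, B x⟫ = ⟪c, x⟫ + ⟪c, B x - x⟫ := by rw [inner_sub_right]; ring
    have e2 : ⟪c, x⟫ = -(A⁻¹ * ‖c‖ ^ 2) := by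
      rw [hx, inner_neg_right, inner_smul_right, real_inner_self_eq_norm_sq]
    have e3 : ⟪c, B x - x⟫ ≤ (A * ‖s‖) * (β * ε * ‖s‖) := by
      refine (real_inner_le_norm _ _).trans ?_
      gcongr
      exact (hBv x).trans (by gcongr)
    have e4 : (A * ‖s‖) * (β * ε * ‖s‖) = A * β * ε * ‖s‖ ^ 2 := by ring
    rw [e4] at e3
    rw [e1, e2, div_eq_mul_inv]
    linarith
  have hfin : κ * ‖s‖ ^ 2 ≤ (ε * Tt) * ‖s‖ ^ 2 := by
    have g1 : κ * ‖s‖ ^ 2 ≤ 2 * A * β * ε * ‖s‖ ^ 2 + C' * ‖s‖ * ‖s‖ ^ 2 * n ^ 2 := by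
      rw [hexp] at hmono
      linarith
    have g2 : C' * ‖s‖ * ‖s‖ ^ 2 * n ^ 2 ≤ C' * (ε * L) * ‖s‖ ^ 2 * n ^ 2 := by gcongr
    have g3 : (ε * Tt) * ‖s‖ ^ 2 = 2 * A * β * ε * ‖s‖ ^ 2 + C' * (ε * L) * ‖s‖ ^ 2 * n ^ 2 +
        ε * (C' * L * (n+1) + 1) * ‖s‖ ^ 2 := by rw [hT]; ring
    have g4 : 0 ≤ ε * (C' * L * (n+1) + 1) * ‖s‖ ^ 2 := by positivity
    linarith
  have hs0 : s = 0 := by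
    by_contra hne
    have : 0 < ‖s‖ ^ 2 := by have := norm_pos_iff.2 hne; positivity
    have := le_of_mul_le_mul_right hfin this
    linarith
  have hqB : ∀ i, q i = B (p i) := fun i => sub_eq_zero.1 (congrFun hs0 i)
  have hiso := D.rigid_lin hb B (fun i j hij hM => by rw [← hqB, ← hqB]; exact h1 i j hij hM)
    (fun i => by rw [← hqB]; exact h2 i)
  let Li : E →ₗᵢ[ℝ] E := ⟨B, hiso⟩
  refine ⟨Li.toLinearIsometryEquiv rfl, fun i => ?_⟩
  rw [hqB]; rfl
end

end
end LV


namespace LV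
noncomputable section
open scoped RealInnerProductSpace
set_option linter.all false
set_option linter.unusedSectionVars false

variable {E : Type*} [NormedAddCommGroup E] [InnerProductSpace ℝ E] [FiniteDimensional ℝ E]
variable {ι : Type*} [Fintype ι] [DecidableEq ι] {p : ι → E}

lemma hull_le {z : E} {c : ℝ} (h : ∀ i, ⟪p i, z⟫ ≤ c) {y : E} (hy : y ∈ convexHull ℝ (Set.range p)) :
    ⟪y, z⟫ ≤ c := by
  have : convexHull ℝ (Set.range p) ⊆ {y | ⟪y, z⟫ ≤ c} := by
    apply convexHull_min
    · rintro _ ⟨i, rfl⟩; exact h i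
    · intro a ha b hb s t hs ht hst
      simp only [Set.mem_setOf_eq] at ha hb ⊢
      rw [inner_add_left, real_inner_smul_left, real_inner_smul_left]
      have : c = s * c + t * c := by rw [← add_mul, hst, one_mul]
      rw [this]; gcongr
  exact this hy

lemma bdd_of (h0 : (0:E) ∈ interior (convexHull ℝ (Set.range p))) : Bdd p := by
  intro w hw
  by_contra hc
  push Not at hc
  have hmem : ∀ᶠ t : ℝ in nhds 0, t • w ∈ convexHull ℝ (Set.range p) := by
    have hcont : Continuous (fun t : ℝ => t • w) := by fun_prop
    have := hcont.continuousAt (x := 0)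
    apply this
    simp only [zero_smul]
    exact mem_interior_iff_mem_nhds.1 h0
  obtain ⟨δ, hδ, hball⟩ := Metric.eventually_nhds_iff.1 hmem
  have h1 := hull_le hc (hball (y := δ / 2) (by rw [Real.dist_eq, sub_zero, abs_of_pos (by positivity)]; linarith))
  rw [real_inner_smul_left, real_inner_self_eq_norm_sq] at h1
  have : 0 < ‖w‖ := norm_pos_iff.2 hw
  have : 0 < δ / 2 * ‖w‖ ^ 2 := by positivity
  linarith

lemma hull_repr {y : E} (hy : y ∈ convexHull ℝ (Set.range p)) :
    ∃ w : ι → ℝ, (∀ i, 0 ≤ w i) ∧ ∑ i, w i = 1 ∧ ∑ i, w i • p i = y := by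
  have : convexHull ℝ (Set.range p) ⊆
      {y | ∃ w : ι → ℝ, (∀ i, 0 ≤ w i) ∧ ∑ i, w i = 1 ∧ ∑ i, w i • p i = y} := by
    apply convexHull_min
    · rintro _ ⟨i, rfl⟩
      refine ⟨Pi.single i 1, fun j => ?_, by simp, ?_⟩
      · by_cases h : j = i
        · subst h; simp
        · simp [h]
      · rw [Finset.sum_eq_single i]
        · simp
        · intro b _ hb; simp [hb]
        · simp
    · rintro a ⟨u, hu0, hu1, rfl⟩ b ⟨v, hv0, hv1, rfl⟩ s t hs ht hst
      refine ⟨fun i => s * u i + t * v i, fun i => by have := hu0 i; have := hv0 i; positivity, ?_, ?_⟩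
      · rw [Finset.sum_add_distrib, ← Finset.mul_sum, ← Finset.mul_sum, hu1, hv1, mul_one, mul_one, hst]
      · simp only [add_smul, Finset.sum_add_distrib, mul_smul, Finset.smul_sum]
  exact this hy

lemma edge_of {i j : ι} (hij : i ≠ j) {z : E} (hi : ⟪p i, z⟫ = 1) (hj : ⟪p j, z⟫ = 1)
    (hk : ∀ k, k ≠ i → k ≠ j → ⟪p k, z⟫ < 1) :
    IsExtreme ℝ (convexHull ℝ (Set.range p)) (segment ℝ (p i) (p j)) := by
  have hle : ∀ k, ⟪p k, z⟫ ≤ 1 := by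
    intro k
    by_cases h1 : k = i
    · rw [h1, hi]
    by_cases h2 : k = j
    · rw [h2, hj]
    exact (hk k h1 h2).le
  have key : ∀ y ∈ convexHull ℝ (Set.range p), ⟪y, z⟫ = 1 → y ∈ segment ℝ (p i) (p j) := by
    intro y hy h1
    obtain ⟨w, hw0, hw1, rfl⟩ := hull_repr hy
    have h2 : ∑ k, w k * (1 - ⟪p k, z⟫) = 0 := by
      simp only [mul_sub, Finset.sum_sub_distrib, mul_one]
      rw [hw1]
      simp only [sum_inner, real_inner_smul_left] at h1
      rw [h1, sub_self]
    rw [Finset.sum_eq_zero_iff_of_nonneg (fun k _ => mul_nonneg (hw0 k) (by linarith [hle k]))] at h2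
    have h3 : ∀ k, k ≠ i ∧ k ≠ j → w k = 0 := by
      intro k hkk
      refine (mul_eq_zero.1 (h2 k (Finset.mem_univ _))).resolve_right ?_
      have := hk k hkk.1 hkk.2
      linarith
    refine ⟨w i, w j, hw0 i, hw0 j, ?_, ?_⟩
    · rw [← hw1, Fintype.sum_eq_add i j hij h3]
    · rw [Fintype.sum_eq_add i j hij (fun k hkk => by rw [h3 k hkk, zero_smul])]
  refine ⟨?_, ?_⟩
  · exact (convex_convexHull ℝ _).segment_subset (subset_convexHull ℝ _ ⟨i, rfl⟩) (subset_convexHull ℝ _ ⟨j, rfl⟩)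
  · rintro x hx y hy u ⟨a, b, ha, hb, hab, hu⟩ ⟨s, t, hs, ht, hst, rfl⟩
    apply key x hx
    have h1 : ⟪s • x + t • y, z⟫ = 1 := by
      rw [← hu, inner_add_left, real_inner_smul_left, real_inner_smul_left, hi, hj]; linarith
    rw [inner_add_left, real_inner_smul_left, real_inner_smul_left] at h1
    have h2 := hull_le hle hx
    have h3 := hull_le hle hy
    nlinarith

lemma face_of (hinj : Function.Injective p) (hvert : ∀ i, p i ∈ Set.extremePoints ℝ (convexHull ℝ (Set.range p)))
    (hb : Bdd p) (hd : 2 ≤ Module.finrank ℝ E) (i : ι) : IsFace p {i} := by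
  have hoth : ∃ j, j ≠ i := by
    have hr : rk p {i} < Module.finrank ℝ E := by
      have : rk p {i} ≤ 1 := by
        unfold rk KK
        rw [Finset.coe_singleton, Set.image_singleton]
        exact (finrank_span_le_card (R := ℝ) ({p i} : Set E)).trans (by simp)
      omega
    obtain ⟨w, hw0, hw⟩ := exists_perp hr
    obtain ⟨k, hk⟩ := hb w hw0
    refine ⟨k, ?_⟩
    rintro rfl
    rw [hw k (by simp)] at hk; exact lt_irrefl _ hk
  have hsub : convexHull ℝ (p '' {j | j ≠ i}) ⊆ convexHull ℝ (Set.range p) \ {p i} := by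
    apply convexHull_min
    · rintro _ ⟨j, hj, rfl⟩
      exact ⟨subset_convexHull ℝ _ ⟨j, rfl⟩, fun h => hj (hinj h)⟩
    · exact ((convex_convexHull ℝ _).mem_extremePoints_iff_convex_sdiff.1 (hvert i)).2
  have hnot : p i ∉ convexHull ℝ (p '' {j | j ≠ i}) := fun h => (hsub h).2 rfl
  have hcl : IsClosed (convexHull ℝ (p '' {j | j ≠ i})) :=
    ((Set.toFinite _).isCompact_convexHull ℝ).isClosed
  obtain ⟨f, u, h1, h2⟩ := geometric_hahn_banach_closed_point (convex_convexHull ℝ _) hcl hnot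
  set z := (InnerProductSpace.toDual ℝ E).symm f with hz
  have hzf : ∀ y, ⟪y, z⟫ = f y := fun y => by
    rw [real_inner_comm, hz, InnerProductSpace.toDual_symm_apply]
  have hlt : ∀ j, j ≠ i → ⟪p j, z⟫ < ⟪p i, z⟫ := by
    intro j hj
    rw [hzf, hzf]
    exact (h1 _ (subset_convexHull ℝ _ ⟨j, hj, rfl⟩)).trans h2
  have hz0 : z ≠ 0 := by
    intro h
    obtain ⟨j, hj⟩ := hoth
    have := hlt j hj
    rw [h] at this; simp at this
  have hpos : 0 < ⟪p i, z⟫ := by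
    obtain ⟨k, hk⟩ := hb z hz0
    by_cases hki : k = i
    · rwa [← hki]
    · exact hk.trans (hlt k hki)
  refine ⟨(⟪p i, z⟫)⁻¹ • z, fun j => ?_⟩
  rw [inner_smul_right, inv_mul_eq_div]
  by_cases hj : j = i
  · subst hj
    rw [div_self hpos.ne']; simp
  · have : ⟪p j, z⟫ / ⟪p i, z⟫ < 1 := by rw [div_lt_one hpos]; exact hlt j hj
    exact ⟨this.le, by simp [hj, this.ne]⟩

theorem case_ge_two (hinj : Function.Injective p)
    (hvert : ∀ i, p i ∈ Set.extremePoints ℝ (convexHull ℝ (Set.range p)))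
    (h0 : (0:E) ∈ interior (convexHull ℝ (Set.range p))) (hd : 2 ≤ Module.finrank ℝ E) :
    ∃ ε > (0:ℝ), ∀ q : ι → E, (∀ i, ‖q i - p i‖ < ε) →
      (∀ i j, (i ≠ j ∧ IsExtreme ℝ (convexHull ℝ (Set.range p)) (segment ℝ (p i) (p j))) → ‖q i - q j‖ ≤ ‖p i - p j‖) →
      (∀ i, ‖p i‖ ≤ ‖q i‖) → ∃ T : E ≃ₗᵢ[ℝ] E, ∀ i, T (p i) = q i := by
  have hb := bdd_of h0
  obtain ⟨m, hm⟩ := Nat.exists_eq_add_of_le hd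
  obtain ⟨M, N, C, D⟩ := exists_data hb (face_of hinj hvert hb hd) (m := m) (by omega)
  obtain ⟨ε, hε, h⟩ := D.main hb
  refine ⟨ε, hε, fun q hq h1 h2 => h q hq (fun i j hij hM => h1 i j ⟨hij, ?_⟩) h2⟩
  obtain ⟨z, hi, hj, hk⟩ := D.edge i j hij hM
  exact edge_of hij hi hj hk

/-! ### dimension one -/

lemma e1_ext {u v : EuclideanSpace ℝ (Fin 1)} (h : u 0 = v 0) : u = v := by
  ext i; rw [Subsingleton.elim i 0]; exact h

lemma e1_norm (u : EuclideanSpace ℝ (Fin 1)) : ‖u‖ = |u 0| := by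
  rw [EuclideanSpace.norm_eq]; simp [Real.sqrt_sq_eq_abs]

lemma e1_open {u v x : EuclideanSpace ℝ (Fin 1)} (h1 : v 0 < x 0) (h2 : x 0 < u 0) : x ∈ openSegment ℝ u v := by
  have h : 0 < u 0 - v 0 := by linarith
  refine ⟨(x 0 - v 0) / (u 0 - v 0), (u 0 - x 0) / (u 0 - v 0), div_pos (by linarith) h, div_pos (by linarith) h, ?_, ?_⟩
  · field_simp; ring
  · apply e1_ext; simp; field_simp; ring

lemma e1_seg {u v x : EuclideanSpace ℝ (Fin 1)} (h : v 0 < u 0) (h1 : v 0 ≤ x 0) (h2 : x 0 ≤ u 0) : x ∈ segment ℝ u v := by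
  have h : 0 < u 0 - v 0 := by linarith
  refine ⟨(x 0 - v 0) / (u 0 - v 0), (u 0 - x 0) / (u 0 - v 0), div_nonneg (by linarith) h.le, div_nonneg (by linarith) h.le, ?_, ?_⟩
  · field_simp; ring
  · apply e1_ext; simp; field_simp; ring

theorem case_one {p : ι → EuclideanSpace ℝ (Fin 1)}
    (hvert : ∀ i, p i ∈ Set.extremePoints ℝ (convexHull ℝ (Set.range p)))
    (h0 : 0 ∈ interior (convexHull ℝ (Set.range p))) :
    ∃ ε > (0:ℝ), ∀ q : ι → EuclideanSpace ℝ (Fin 1), (∀ i, ‖q i - p i‖ < ε) →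
      (∀ i j, (i ≠ j ∧ IsExtreme ℝ (convexHull ℝ (Set.range p)) (segment ℝ (p i) (p j))) → ‖q i - q j‖ ≤ ‖p i - p j‖) →
      (∀ i, ‖p i‖ ≤ ‖q i‖) → ∀ i, p i = q i := by
  have hb := bdd_of h0
  have hmem : ∀ i, p i ∈ convexHull ℝ (Set.range p) := fun i => subset_convexHull ℝ _ ⟨i, rfl⟩
  have hno : ∀ i k l, p l 0 < p i 0 → p i 0 < p k 0 → False := by
    intro i k l h1 h2
    have := (hvert i).2 (hmem k) (hmem l) (e1_open h1 h2)
    rw [this] at h2; exact lt_irrefl _ h2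
  set e : EuclideanSpace ℝ (Fin 1) := EuclideanSpace.single 0 1 with he
  have hine : ∀ u : EuclideanSpace ℝ (Fin 1), ⟪u, e⟫ = u 0 := by
    intro u; rw [he, EuclideanSpace.inner_single_right]; simp
  have he0 : e ≠ 0 := by
    intro h; have := congrArg (fun v : EuclideanSpace ℝ (Fin 1) => v 0) h; simp [he] at this
  obtain ⟨k, hk⟩ := hb e he0
  obtain ⟨l, hl⟩ := hb (-e) (neg_ne_zero.2 he0)
  rw [hine] at hk
  rw [inner_neg_right, hine] at hl
  have hl : p l 0 < 0 := by linarith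
  obtain ⟨δ, hδ, hd⟩ := exists_lower (fun i (_ : ι) => |p i 0|)
  refine ⟨δ, hδ, fun q hq h1 h2 => ?_⟩
  have main : ∀ i j, 0 < p i 0 → p j 0 < 0 → p i = q i ∧ p j = q j := by
    intro i j hi hj
    have hij : i ≠ j := by rintro rfl; linarith
    have hsub : segment ℝ (p i) (p j) = convexHull ℝ (Set.range p) := by
      apply Set.Subset.antisymm
      · exact (convex_convexHull ℝ _).segment_subset (hmem i) (hmem j)
      · apply convexHull_min _ (convex_segment _ _)
        rintro _ ⟨r, rfl⟩
        apply e1_seg (by linarith)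
        · by_contra hc; exact hno j i r (not_le.1 hc) (by linarith)
        · by_contra hc; exact hno i r j (by linarith) (not_le.1 hc)
    have h3 := h1 i j ⟨hij, by rw [hsub]⟩
    have a1 := h2 i
    have a2 := h2 j
    have b1 := hq i
    have b2 := hq j
    have c1 := hd i i (abs_pos.2 hi.ne')
    have c2 := hd j j (abs_pos.2 hj.ne)
    simp only [e1_norm, PiLp.sub_apply] at h3 a1 a2 b1 b2
    rw [abs_of_pos hi] at c1 a1
    rw [abs_of_neg hj] at c2 a2
    rw [abs_lt] at b1 b2
    have q1 : 0 < q i 0 := by linarith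
    have q2 : q j 0 < 0 := by linarith
    rw [abs_of_pos q1] at a1
    rw [abs_of_neg q2] at a2
    rw [abs_of_pos (by linarith), abs_of_pos (by linarith)] at h3
    exact ⟨e1_ext (by linarith), e1_ext (by linarith)⟩
  intro i
  rcases lt_trichotomy (p i 0) 0 with h | h | h
  · exact (main k i hk h).2
  · exact (hno i k l (by linarith) (by linarith)).elim
  · exact (main i l h hl).1

end
end LV

theorem local_version {n d : ℕ}
    (p : Fin n → EuclideanSpace ℝ (Fin d)) (hinj : Function.Injective p)
    (hvert : ∀ i, p i ∈ Set.extremePoints ℝ (convexHull ℝ (Set.range p)))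
    (h0 : (0 : EuclideanSpace ℝ (Fin d)) ∈ interior (convexHull ℝ (Set.range p))) :
    ∃ ε > (0 : ℝ), ∀ q : Fin n → EuclideanSpace ℝ (Fin d),
      (∀ i, ‖q i - p i‖ < ε) →
      (∀ i j, IsEdge p i j → ‖q i - q j‖ ≤ ‖p i - p j‖) →
      (∀ i, ‖p i‖ ≤ ‖q i‖) →
      ∃ T : EuclideanSpace ℝ (Fin d) ≃ₗᵢ[ℝ] EuclideanSpace ℝ (Fin d),
        ∀ i, T (p i) = q i := by
  rcases Nat.lt_or_ge d 2 with hd | hd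
  · interval_cases d
    · refine ⟨1, one_pos, fun q _ _ _ => ⟨LinearIsometryEquiv.refl ℝ _, fun i => ?_⟩⟩
      exact Subsingleton.elim _ _
    · obtain ⟨ε, hε, h⟩ := LV.case_one hvert h0
      exact ⟨ε, hε, fun q a b c => ⟨LinearIsometryEquiv.refl ℝ _, fun i => h q a b c i⟩⟩
  · exact LV.case_ge_two hinj hvert h0 (by simpa using hd)
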